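/- arXiv:0802.0023 — 2 statements merged into one kernel-verified Lean document; each statement's English description precedes it below -/
import Mathlib

section
/- Let T : ℂ[x_1,…,x_d] → ℂ be a pseudo-positive definite functional. If each component functional T_{k,l} : ℂ[t] → ℂ is determined in the sense of Stieltjes (i.e. there is exactly one non-negative measure on [0,∞) whose moments are T_{k,l}(t^m), m ∈ ℕ₀), then there exists at most one pseudo-positive signed moment measure μ on ℝ^d with T(f) = ∫_{ℝ^d} f dμ for all polynomials f. -/
open MeasureTheory MvPolynomial Metric
open scoped ComplexOrder ENNReal

noncomputable section

/-- `d`-dimensional Euclidean space. -/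
abbrev E (d : ℕ) := EuclideanSpace ℝ (Fin d)

/-- The (surface) measure `dθ` on the unit sphere `S^{d-1}`. -/
noncomputable def sphMeas (d : ℕ) : Measure (sphere (0 : E d) 1) :=
  (volume : Measure (E d)).toSphere

/-- A bundled orthonormal basis `Y_{k,l}`, `l = 1,…,a_k`, of the spaces `H_k(ℝ^d)` of
real-valued harmonic polynomials homogeneous of degree `k`, orthonormal with respect to
`⟨f,g⟩ = ∫_{S^{d-1}} f g dθ`. -/
structure HarmonicBasis (d : ℕ) where
  a : ℕ → ℕ
  Y : (k : ℕ) → Fin (a k) → MvPolynomial (Fin d) ℝ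
  harmonic : ∀ k l, (∑ i, pderiv i (pderiv i (Y k l))) = 0
  homogeneous : ∀ k l, (Y k l).IsHomogeneous k
  orthonormal : ∀ (k k' : ℕ) (l : Fin (a k)) (l' : Fin (a k')),
    (∫ θ : sphere (0 : E d) 1,
        (eval (fun i => (θ : E d) i) (Y k l)) * (eval (fun i => (θ : E d) i) (Y k' l'))
      ∂(sphMeas d)) = if k = k' ∧ (l : ℕ) = (l' : ℕ) then 1 else 0
  complete : ∀ (k : ℕ) (P : MvPolynomial (Fin d) ℝ),
    (∑ i, pderiv i (pderiv i P)) = 0 → P.IsHomogeneous k →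
      P ∈ Submodule.span ℝ (Set.range (Y k))

/-- Evaluation of a complex polynomial in `d` variables at a point of `ℝ^d`. -/
def evalC {d : ℕ} (P : MvPolynomial (Fin d) ℂ) (x : E d) : ℂ :=
  eval (fun i => (x i : ℂ)) P

/-- The polynomial `|x|² = x₁² + … + x_d²`. -/
def normSqP (d : ℕ) : MvPolynomial (Fin d) ℂ := ∑ i, X i ^ 2

/-- Integral of a (complex- or real-valued) function with respect to a signed measure,
via the Jordan decomposition. -/
noncomputable def sInt {α : Type*} {G : Type*} [MeasurableSpace α] [NormedAddCommGroup G]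
    [NormedSpace ℝ G] (μ : SignedMeasure α) (f : α → G) : G :=
  (∫ x, f x ∂μ.toJordanDecomposition.posPart) - ∫ x, f x ∂μ.toJordanDecomposition.negPart

/-- A signed measure is a moment measure if every polynomial is integrable with respect to
its total variation. -/
def IsMomentMeasure {d : ℕ} (μ : SignedMeasure (E d)) : Prop :=
  ∀ P : MvPolynomial (Fin d) ℂ, Integrable (evalC P) μ.totalVariation

namespace HarmonicBasis

variable {d : ℕ} (B : HarmonicBasis d)

/-- `Y_{k,l}` as a function on `ℝ^d`. -/
def Yf (k : ℕ) (l : Fin (B.a k)) (x : E d) : ℝ := eval (fun i => x i) (B.Y k l)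

/-- `Y_{k,l}` as a complex polynomial. -/
def YC (k : ℕ) (l : Fin (B.a k)) : MvPolynomial (Fin d) ℂ :=
  (B.Y k l).map (algebraMap ℝ ℂ)

/-- The Laplace–Fourier coefficient `f_{k,l}(r) = ∫_{S^{d-1}} f(rθ) Y_{k,l}(θ) dθ`. -/
noncomputable def lfCoeff (f : E d → ℂ) (k : ℕ) (l : Fin (B.a k)) (r : ℝ) : ℂ :=
  ∫ θ : sphere (0 : E d) 1, f (r • (θ : E d)) * (B.Yf k l (θ : E d) : ℂ) ∂(sphMeas d)

/-- `GaussDecomp B f K p` : `p` is a Gauss (Laplace–Fourier) decomposition of the polynomial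
`f`, i.e. `f(x) = ∑_{k=0}^{K} ∑_{l=1}^{a_k} p_{k,l}(|x|²) Y_{k,l}(x)` with `p_{k,l} = 0` for
`k > K`. -/
def GaussDecomp (f : MvPolynomial (Fin d) ℂ) (K : ℕ)
    (p : (k : ℕ) → Fin (B.a k) → Polynomial ℂ) : Prop :=
  (∀ k, K < k → ∀ l, p k l = 0) ∧
    f = ∑ k ∈ Finset.range (K + 1), ∑ l,
      Polynomial.aeval (normSqP d) (p k l) * B.YC k l

/-- The component functional `T_{k,l}(p) = T(p(|x|²) Y_{k,l}(x))`. -/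
def component (T : MvPolynomial (Fin d) ℂ → ℂ) (k : ℕ) (l : Fin (B.a k))
    (p : Polynomial ℂ) : ℂ :=
  T (Polynomial.aeval (normSqP d) p * B.YC k l)

/-- A functional `T` on `ℂ[x₁,…,x_d]` is pseudo-positive definite (w.r.t. the basis `Y_{k,l}`)
if `T_{k,l}(p* p) ≥ 0` and `T_{k,l}(t · p*(t) p(t)) ≥ 0` for all univariate `p` and all `k, l`. -/
def PPD (T : MvPolynomial (Fin d) ℂ → ℂ) : Prop :=
  ∀ (k : ℕ) (l : Fin (B.a k)) (p : Polynomial ℂ),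
    0 ≤ B.component T k l (p.map (starRingEnd ℂ) * p) ∧
    0 ≤ B.component T k l (Polynomial.X * (p.map (starRingEnd ℂ) * p))

/-- A signed measure `μ` on `ℝ^d` is pseudo-positive (w.r.t. the basis `Y_{k,l}`) if
`∫ h(|x|) Y_{k,l}(x) dμ ≥ 0` for every non-negative continuous compactly supported `h`. -/
def PseudoPositive (μ : SignedMeasure (E d)) : Prop :=
  ∀ (k : ℕ) (l : Fin (B.a k)) (h : ℝ → ℝ), Continuous h → HasCompactSupport h →
    (∀ t, 0 ≤ h t) → 0 ≤ sInt μ (fun x => h ‖x‖ * B.Yf k l x)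

/-- `ν` is the family of component measures `μ_{k,l}` of the signed measure `μ`, i.e.
`∫_0^∞ h dμ_{k,l} = ∫_{ℝ^d} h(|x|) Y_{k,l}(x) dμ` for all continuous compactly supported `h`. -/
def IsComponentFamily (μ : SignedMeasure (E d))
    (ν : (k : ℕ) → Fin (B.a k) → Measure ℝ) : Prop :=
  ∀ k l, (ν k l) (Set.Iio 0) = 0 ∧
    ∀ h : ℝ → ℝ, Continuous h → HasCompactSupport h →
      ∫ t, h t ∂(ν k l) = sInt μ (fun x => h ‖x‖ * B.Yf k l x)

/-- The summability condition `C_N = ∑_{k,l} ∫_0^∞ r^N r^{-k} dσ_{k,l}(r) < ∞` for all `N`. -/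
def SummCond (σ : (k : ℕ) → Fin (B.a k) → Measure ℝ) : Prop :=
  ∀ N : ℕ, (∑' k : ℕ, ∑ l, ∫⁻ r, (ENNReal.ofReal r) ^ N * ((ENNReal.ofReal r) ^ k)⁻¹
    ∂(σ k l)) < ⊤

end HarmonicBasis

/-- The set `W_τ^{Sti}` of all non-negative moment measures on `[0,∞)` having the same
moments as `τ`. -/
def WSti (τ : Measure ℝ) : Set (Measure ℝ) :=
  {ρ | ρ (Set.Iio 0) = 0 ∧ (∀ m : ℕ, Integrable (fun t => t ^ m) ρ) ∧
    ∀ m : ℕ, ∫ t, t ^ m ∂ρ = ∫ t, t ^ m ∂τ}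

/-- A measure `ν` on `[0,∞)` is determined in the sense of Stieltjes if it is the only
non-negative measure on `[0,∞)` with its moments. -/
def StieltjesDeterminate (ν : Measure ℝ) : Prop :=
  ∀ τ : Measure ℝ, τ ∈ WSti ν → τ = ν

namespace PP

/-- The real polynomial `|x|²`. -/
def N (d : ℕ) : MvPolynomial (Fin d) ℝ := ∑ i, X i ^ 2

/-- The Laplacian. -/
def Lap (d : ℕ) : MvPolynomial (Fin d) ℝ →ₗ[ℝ] MvPolynomial (Fin d) ℝ :=
  ∑ i, (pderiv i).toLinearMap ∘ₗ (pderiv i).toLinearMap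

lemma Lap_apply {d : ℕ} (P : MvPolynomial (Fin d) ℝ) :
    Lap d P = ∑ i, pderiv i (pderiv i P) := by
  simp [Lap, LinearMap.sum_apply]

/-- weight `α!`. -/
def wt {d : ℕ} (m : Fin d →₀ ℕ) : ℝ := ∏ i, ((m i).factorial : ℝ)

lemma wt_pos {d : ℕ} (m : Fin d →₀ ℕ) : 0 < wt m :=
  Finset.prod_pos fun i _ => by exact_mod_cast Nat.factorial_pos _

lemma wt_succ {d : ℕ} (m : Fin d →₀ ℕ) (i : Fin d) :
    wt (Finsupp.single i 1 + m) = (m i + 1) * wt m := by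
  classical
  unfold wt
  rw [← Finset.mul_prod_erase _ _ (Finset.mem_univ i),
    ← Finset.mul_prod_erase (a := i) _ (fun j => ((m j).factorial : ℝ)) (Finset.mem_univ i),
    ← mul_assoc]
  congr 1
  · simp [add_comm 1, Nat.factorial_succ]
  · refine Finset.prod_congr rfl fun j hj => ?_
    have : i ≠ j := (Finset.ne_of_mem_erase hj).symm
    simp [this]

/-- The Fischer pairing. -/
def F {d : ℕ} (Q : MvPolynomial (Fin d) ℝ) : MvPolynomial (Fin d) ℝ →ₗ[ℝ] ℝ :=
  (basisMonomials (Fin d) ℝ).constr ℝ (fun m => coeff m Q * wt m)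

lemma F_monomial {d : ℕ} (Q : MvPolynomial (Fin d) ℝ) (m : Fin d →₀ ℕ) (c : ℝ) :
    F Q (monomial m c) = c * (coeff m Q * wt m) := by
  have h : F Q (monomial m 1) = coeff m Q * wt m := by
    have := (basisMonomials (Fin d) ℝ).constr_basis ℝ (fun m => coeff m Q * wt m) m
    simpa [F] using this
  have : monomial m c = c • monomial m (1 : ℝ) := by simp [smul_monomial]
  rw [this, map_smul, h, smul_eq_mul]

lemma F_X_mul {d : ℕ} (Q P : MvPolynomial (Fin d) ℝ) (i : Fin d) :
    F Q (X i * P) = F (pderiv i Q) P := by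
  induction P using MvPolynomial.induction_on' with
  | monomial m c =>
    rw [X, monomial_mul, F_monomial, F_monomial, coeff_pderiv, wt_succ, add_comm m]
    ring
  | add p q hp hq => rw [mul_add, map_add, map_add, hp, hq]

lemma F_sum {d : ℕ} (Q : Fin d → MvPolynomial (Fin d) ℝ) (P : MvPolynomial (Fin d) ℝ) :
    F (∑ i, Q i) P = ∑ i, F (Q i) P := by
  induction P using MvPolynomial.induction_on' with
  | monomial m c =>
    simp only [F_monomial, coeff_sum, Finset.sum_mul, Finset.mul_sum]
  | add p q hp hq => simp only [map_add, hp, hq, Finset.sum_add_distrib]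

lemma F_N_mul {d : ℕ} (Q P : MvPolynomial (Fin d) ℝ) :
    F Q (N d * P) = F (Lap d Q) P := by
  rw [Lap_apply, F_sum, N, Finset.sum_mul, map_sum]
  refine Finset.sum_congr rfl fun i _ => ?_
  rw [pow_two, mul_assoc, F_X_mul, F_X_mul]

lemma F_self {d : ℕ} (P : MvPolynomial (Fin d) ℝ) (h : F P P = 0) : P = 0 := by
  have h1 : F P P = ∑ m ∈ P.support, coeff m P * (coeff m P * wt m) := by
    conv_lhs => rw [P.as_sum, map_sum, ← P.as_sum]
    exact Finset.sum_congr rfl fun m _ => F_monomial _ _ _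
  rw [h1, Finset.sum_eq_zero_iff_of_nonneg] at h
  · ext m
    by_contra hm
    rw [coeff_zero] at hm
    have := h m (mem_support_iff.2 hm)
    simp [hm, (wt_pos m).ne'] at this
  · intro m _
    nlinarith [mul_nonneg (mul_self_nonneg (coeff m P)) (wt_pos m).le]

lemma N_ne_zero {d : ℕ} (hd : 1 ≤ d) : N d ≠ 0 := by
  intro h
  have := congrArg (eval (fun _ => (1 : ℝ))) h
  simp [N] at this
  omega

lemma N_hom (d : ℕ) : (N d).IsHomogeneous 2 :=
  IsHomogeneous.sum _ _ _ fun i _ => isHomogeneous_X_pow i 2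

lemma Lap_hom {d n : ℕ} {P : MvPolynomial (Fin d) ℝ} (h : P.IsHomogeneous n) :
    (Lap d P).IsHomogeneous (n - 2) := by
  rw [Lap_apply]
  exact IsHomogeneous.sum _ _ _ fun i _ => h.pderiv.pderiv

lemma fischer {d : ℕ} (hd : 1 ≤ d) (n : ℕ) (P : MvPolynomial (Fin d) ℝ)
    (h : P.IsHomogeneous (n + 2)) :
    ∃ R : MvPolynomial (Fin d) ℝ, R.IsHomogeneous n ∧ Lap d (P - N d * R) = 0 := by
  let H := homogeneousSubmodule (Fin d) ℝ n
  have : Module.Finite ℝ H := Module.Finite.iff_fg.2 (homogeneousSubmodule_fg _ _ n)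
  have hmap : ∀ R ∈ H, (Lap d ∘ₗ LinearMap.mulLeft ℝ (N d)) R ∈ H := by
    intro R hR
    rw [mem_homogeneousSubmodule] at hR ⊢
    have := Lap_hom ((N_hom d).mul hR)
    simpa using this
  let L : H →ₗ[ℝ] H := (Lap d ∘ₗ LinearMap.mulLeft ℝ (N d)).restrict hmap
  have hinj : Function.Injective L := by
    rw [injective_iff_map_eq_zero]
    rintro ⟨R, hR⟩ h0
    have h0' : Lap d (N d * R) = 0 := by
      simpa [L] using congrArg Subtype.val h0
    have : N d * R = 0 := by
      apply F_self
      rw [F_N_mul, h0', ]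
      have : F (0 : MvPolynomial (Fin d) ℝ) = 0 := by
        apply (basisMonomials (Fin d) ℝ).ext
        intro m
        simp [F_monomial]
      simp [this]
    rcases mul_eq_zero.1 this with h | h
    · exact absurd h (N_ne_zero hd)
    · simpa using h
  have hsurj := LinearMap.surjective_of_injective hinj
  obtain ⟨⟨R, hR⟩, hLR⟩ := hsurj ⟨Lap d P, by
    have := Lap_hom h
    simpa [H, mem_homogeneousSubmodule] using this⟩
  refine ⟨R, hR, ?_⟩
  have : Lap d (N d * R) = Lap d P := by simpa [L] using congrArg Subtype.val hLR
  rw [map_sub, this, sub_self]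

lemma Lap_low {d n : ℕ} (hn : n < 2) {P : MvPolynomial (Fin d) ℝ} (h : P.IsHomogeneous n) :
    Lap d P = 0 := by
  rw [Lap_apply]
  refine Finset.sum_eq_zero fun i _ => ?_
  have h1 : (pderiv i P).IsHomogeneous 0 := by
    have := h.pderiv (i := i)
    rwa [show n - 1 = 0 by omega] at this
  have h2 : (pderiv i P).totalDegree = 0 := Nat.le_zero.1 h1.totalDegree_le
  rw [totalDegree_eq_zero_iff_eq_C.1 h2, pderiv_C]

/-- span of all `|x|^{2j} Y_{k,l}` -/
def S {d : ℕ} (B : HarmonicBasis d) : Submodule ℝ (MvPolynomial (Fin d) ℝ) :=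
  Submodule.span ℝ {P | ∃ (j k : ℕ) (l : Fin (B.a k)), P = N d ^ j * B.Y k l}

lemma harm_mem_S {d : ℕ} (B : HarmonicBasis d) (n : ℕ) (P : MvPolynomial (Fin d) ℝ)
    (h : P.IsHomogeneous n) (h0 : Lap d P = 0) : P ∈ S B := by
  have := B.complete n P (by rwa [Lap_apply] at h0) h
  refine Submodule.span_mono ?_ this
  rintro _ ⟨l, rfl⟩
  exact ⟨0, n, l, by simp⟩

lemma N_mul_mem_S {d : ℕ} (B : HarmonicBasis d) (P : MvPolynomial (Fin d) ℝ)
    (h : P ∈ S B) : N d * P ∈ S B := by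
  induction h using Submodule.span_induction with
  | mem x hx =>
    obtain ⟨j, k, l, rfl⟩ := hx
    exact Submodule.subset_span ⟨j + 1, k, l, by ring⟩
  | zero => simp
  | add x y _ _ hx hy => rw [mul_add]; exact add_mem hx hy
  | smul a x _ hx => rw [mul_smul_comm]; exact Submodule.smul_mem _ _ hx

lemma hom_mem_S {d : ℕ} (hd : 1 ≤ d) (B : HarmonicBasis d) (n : ℕ) :
    ∀ P : MvPolynomial (Fin d) ℝ, P.IsHomogeneous n → P ∈ S B := by
  induction n using Nat.strong_induction_on with
  | _ n ih =>
    intro P hP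
    by_cases hn : n < 2
    · exact harm_mem_S B n P hP (Lap_low hn hP)
    · obtain ⟨m, rfl⟩ : ∃ m, n = m + 2 := ⟨n - 2, by omega⟩
      obtain ⟨R, hR, h0⟩ := fischer hd m P hP
      have h1 : (P - N d * R).IsHomogeneous (m + 2) := by
        have := (N_hom d).mul hR
        rw [add_comm] at this
        exact hP.sub this
      have := add_mem (harm_mem_S B _ _ h1 h0) (N_mul_mem_S B R (ih m (by omega) R hR))
      simpa using this

lemma mem_S {d : ℕ} (hd : 1 ≤ d) (B : HarmonicBasis d) (P : MvPolynomial (Fin d) ℝ) :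
    P ∈ S B := by
  rw [← sum_homogeneousComponent P]
  exact sum_mem fun n _ => hom_mem_S hd B n _ (homogeneousComponent_isHomogeneous n P)

lemma measure_le_aux {a b : Measure ℝ} [IsFiniteMeasure a] [IsFiniteMeasure b]
    (h : ∀ f : ℝ → ℝ, Continuous f → HasCompactSupport f → (∀ t, 0 ≤ f t) →
      ∫ x, f x ∂b ≤ ∫ x, f x ∂a) : b ≤ a := by
  have hK : ∀ K : Set ℝ, IsCompact K → b K ≤ a K := by
    intro K hK
    refine ENNReal.le_of_forall_pos_le_add fun ε hε hν ↦ ?_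
    obtain ⟨V, pV1, pV2, pV3⟩ : ∃ V ⊇ K, IsOpen V ∧ a V ≤ a K + ε :=
      K.exists_isOpen_le_add a (ne_of_gt (ENNReal.coe_lt_coe.mpr hε))
    obtain ⟨f, hf1, hf2, hf3, hf4⟩ := exists_continuousMap_one_of_isCompact_subset_isOpen hK pV2 pV1
    have hcs : HasCompactSupport f := hasCompactSupport_def.mpr hf2
    have hfV (x : ℝ) : f x ≤ V.indicator 1 x := by
      by_cases hx : x ∈ tsupport f
      · simp [(hf3 hx), (hf4 x).2]
      · simp [image_eq_zero_of_notMem_tsupport hx, Set.indicator_nonneg]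
    have hfK (x : ℝ) : K.indicator 1 x ≤ f x := by
      by_cases hx : x ∈ K
      · simp [hx, hf1 hx]
      · simp [hx, (hf4 x).1]
    have key : b.real K ≤ a.real V := calc
      b.real K = ∫ x, K.indicator 1 x ∂b := integral_indicator_one hK.measurableSet |>.symm
      _ ≤ ∫ x, f x ∂b := by
        refine integral_mono ?_ (f.continuous.integrable_of_hasCompactSupport hcs) hfK
        exact (continuousOn_const.integrableOn_compact hK).integrable_indicator hK.measurableSet
      _ ≤ ∫ x, f x ∂a := h f f.continuous hcs fun t => (hf4 t).1
      _ ≤ ∫ x, V.indicator 1 x ∂a := by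
        refine integral_mono (f.continuous.integrable_of_hasCompactSupport hcs) ?_ hfV
        exact IntegrableOn.integrable_indicator integrableOn_const pV2.measurableSet
      _ = a.real V := integral_indicator_one pV2.measurableSet
    refine le_trans ?_ pV3
    exact (ENNReal.toReal_le_toReal (by finiteness) (by finiteness)).1 key
  rw [Measure.le_iff]
  intro s hs
  rw [hs.measure_eq_iSup_isCompact_of_ne_top (by finiteness)]
  refine iSup₂_le fun K hKs => iSup_le fun hKc => ?_
  exact (hK K hKc).trans (measure_mono hKs)

/-- radial pushforward of `Y⁺ p + Y⁻ n`. -/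
def rad {d : ℕ} (p n : Measure (E d)) (Y : E d → ℝ) : Measure ℝ :=
  (p.withDensity (fun x => ENNReal.ofReal (Y x)) +
    n.withDensity (fun x => ENNReal.ofReal (-Y x))).map (fun x => ‖x‖)

lemma rad_int {d : ℕ} (p n : Measure (E d)) (Y : E d → ℝ) (hY : Continuous Y)
    (g : ℝ → ℝ) (hg : Measurable g)
    (hp : Integrable (fun x => g ‖x‖ * Y x) p) (hn : Integrable (fun x => g ‖x‖ * Y x) n) :
    Integrable g (rad p n Y) ∧
    ∫ t, g t ∂(rad p n Y) = (∫ x, g ‖x‖ * max (Y x) 0 ∂p) + ∫ x, g ‖x‖ * max (-Y x) 0 ∂n := by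
  have hm : Measurable (fun x : E d => ‖x‖) := measurable_norm
  have i1 : Integrable (fun x => g ‖x‖ * max (Y x) 0) p := by
    refine hp.mono (Measurable.aestronglyMeasurable (by fun_prop)) (Filter.Eventually.of_forall fun x => ?_)
    rw [norm_mul, norm_mul]
    refine mul_le_mul_of_nonneg_left ?_ (norm_nonneg _)
    rw [Real.norm_eq_abs, Real.norm_eq_abs, abs_of_nonneg (le_max_right _ _)]
    exact max_le (le_abs_self _) (abs_nonneg _)
  have i2 : Integrable (fun x => g ‖x‖ * max (-Y x) 0) n := by
    refine hn.mono (Measurable.aestronglyMeasurable (by fun_prop)) (Filter.Eventually.of_forall fun x => ?_)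
    rw [norm_mul, norm_mul]
    refine mul_le_mul_of_nonneg_left ?_ (norm_nonneg _)
    rw [Real.norm_eq_abs, Real.norm_eq_abs, abs_of_nonneg (le_max_right _ _)]
    exact max_le (neg_le_abs _) (abs_nonneg _)
  have m1 : Measurable (fun x => ENNReal.ofReal (Y x)) := by fun_prop
  have m2 : Measurable (fun x => ENNReal.ofReal (-Y x)) := by fun_prop
  have j1 : Integrable (fun x => g ‖x‖) (p.withDensity (fun x => ENNReal.ofReal (Y x))) := by
    rw [integrable_withDensity_iff_integrable_smul' m1 (by simp)]
    simpa [ENNReal.toReal_ofReal', mul_comm] using i1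
  have j2 : Integrable (fun x => g ‖x‖) (n.withDensity (fun x => ENNReal.ofReal (-Y x))) := by
    rw [integrable_withDensity_iff_integrable_smul' m2 (by simp)]
    simpa [ENNReal.toReal_ofReal', mul_comm] using i2
  constructor
  · rw [rad, integrable_map_measure hg.aestronglyMeasurable hm.aemeasurable]
    exact j1.add_measure j2
  · rw [rad, integral_map hm.aemeasurable hg.aestronglyMeasurable, integral_add_measure j1 j2,
      integral_withDensity_eq_integral_toReal_smul m1 (by simp),
      integral_withDensity_eq_integral_toReal_smul m2 (by simp)]
    simp [ENNReal.toReal_ofReal', mul_comm]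

lemma rad_fin {d : ℕ} (p n : Measure (E d)) (Y : E d → ℝ) (hY : Continuous Y)
    (hp : Integrable Y p) (hn : Integrable Y n) : IsFiniteMeasure (rad p n Y) := by
  have := (rad_int p n Y hY (fun _ => 1) measurable_const (by simpa using hp)
    (by simpa using hn)).1
  rw [integrable_const_iff] at this
  simpa using this

lemma rad_sub {d : ℕ} (p n : Measure (E d)) (Y : E d → ℝ) (hY : Continuous Y)
    (g : ℝ → ℝ) (hg : Measurable g)
    (hp : Integrable (fun x => g ‖x‖ * Y x) p) (hn : Integrable (fun x => g ‖x‖ * Y x) n) :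
    ∫ t, g t ∂(rad p n Y) - ∫ t, g t ∂(rad n p Y) =
      (∫ x, g ‖x‖ * Y x ∂p) - ∫ x, g ‖x‖ * Y x ∂n := by
  have key : ∀ q : Measure (E d), Integrable (fun x => g ‖x‖ * Y x) q →
      ∫ x, g ‖x‖ * Y x ∂q =
        (∫ x, g ‖x‖ * max (Y x) 0 ∂q) - ∫ x, g ‖x‖ * max (-Y x) 0 ∂q := by
    intro q hq
    have i1 : Integrable (fun x => g ‖x‖ * max (Y x) 0) q := by
      refine hq.mono (Measurable.aestronglyMeasurable (by fun_prop)) (Filter.Eventually.of_forall fun x => ?_)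
      rw [norm_mul, norm_mul]
      refine mul_le_mul_of_nonneg_left ?_ (norm_nonneg _)
      rw [Real.norm_eq_abs, Real.norm_eq_abs, abs_of_nonneg (le_max_right _ _)]
      exact max_le (le_abs_self _) (abs_nonneg _)
    have i2 : Integrable (fun x => g ‖x‖ * max (-Y x) 0) q := by
      refine hq.mono (Measurable.aestronglyMeasurable (by fun_prop)) (Filter.Eventually.of_forall fun x => ?_)
      rw [norm_mul, norm_mul]
      refine mul_le_mul_of_nonneg_left ?_ (norm_nonneg _)
      rw [Real.norm_eq_abs, Real.norm_eq_abs, abs_of_nonneg (le_max_right _ _)]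
      exact max_le (neg_le_abs _) (abs_nonneg _)
    rw [← integral_sub i1 i2]
    refine integral_congr_ae (Filter.Eventually.of_forall fun x => ?_)
    simp only [← mul_sub]
    congr 1
    rcases le_total (Y x) 0 with h | h
    · rw [max_eq_right h, max_eq_left (by linarith)]; ring
    · rw [max_eq_left h, max_eq_right (by linarith)]; ring
  rw [(rad_int p n Y hY g hg hp hn).2, (rad_int n p Y hY g hg hn hp).2, key p hp, key n hn]
  ring

lemma exists_sigma {d : ℕ} (p n : Measure (E d)) (Y : E d → ℝ) (hY : Continuous Y)
    (hp : Integrable Y p) (hn : Integrable Y n)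
    (hpos : ∀ h : ℝ → ℝ, Continuous h → HasCompactSupport h → (∀ t, 0 ≤ h t) →
      0 ≤ (∫ x, h ‖x‖ * Y x ∂p) - ∫ x, h ‖x‖ * Y x ∂n) :
    ∃ σ : Measure ℝ, σ (Set.Iio 0) = 0 ∧ ∀ g : ℝ → ℝ, Measurable g →
      Integrable (fun x => g (‖x‖ ^ 2) * Y x) p → Integrable (fun x => g (‖x‖ ^ 2) * Y x) n →
      Integrable g σ ∧
      ∫ t, g t ∂σ = (∫ x, g (‖x‖ ^ 2) * Y x ∂p) - ∫ x, g (‖x‖ ^ 2) * Y x ∂n := by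
  have := rad_fin p n Y hY hp hn
  have := rad_fin n p Y hY hn hp
  have hle : rad n p Y ≤ rad p n Y := by
    apply measure_le_aux
    intro f hf hfc hf0
    obtain ⟨C, hC⟩ := hfc.exists_bound_of_continuous hf
    have hb : ∀ q : Measure (E d), Integrable Y q → Integrable (fun x => f ‖x‖ * Y x) q := by
      intro q hq
      exact hq.bdd_mul (c := C) (by fun_prop) (Filter.Eventually.of_forall fun x => hC _)
    have := rad_sub p n Y hY f hf.measurable (hb p hp) (hb n hn)
    have h2 := hpos f hf hfc hf0
    linarith
  have hadd := Measure.sub_add_cancel_of_le hle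
  set τ := rad p n Y - rad n p Y with hτ
  have hsq : Measurable (fun r : ℝ => r ^ 2) := by fun_prop
  refine ⟨τ.map (fun r => r ^ 2), ?_, ?_⟩
  · rw [Measure.map_apply hsq measurableSet_Iio]
    have : (fun r : ℝ => r ^ 2) ⁻¹' Set.Iio 0 = ∅ := by
      ext r; simp [sq_nonneg r]
    simp [this]
  · intro g hg ip in'
    have hg2 : Measurable (fun r : ℝ => g (r ^ 2)) := hg.comp hsq
    have ia := (rad_int p n Y hY (fun r => g (r ^ 2)) hg2 ip in').1
    have ib := (rad_int n p Y hY (fun r => g (r ^ 2)) hg2 in' ip).1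
    have hs := rad_sub p n Y hY (fun r => g (r ^ 2)) hg2 ip in'
    have iτ : Integrable (fun r => g (r ^ 2)) τ := by
      refine ia.mono_measure ?_
      rw [← hadd]
      exact Measure.le_add_right le_rfl
    constructor
    · rw [integrable_map_measure hg.aestronglyMeasurable hsq.aemeasurable]
      exact iτ
    · rw [integral_map hsq.aemeasurable hg.aestronglyMeasurable, ← hs, ← hadd,
        integral_add_measure iτ ib]
      ring

/-- real evaluation -/
def ev {d : ℕ} (P : MvPolynomial (Fin d) ℝ) (x : E d) : ℝ := eval (fun i => x i) P

lemma ev_cont {d : ℕ} (P : MvPolynomial (Fin d) ℝ) : Continuous (ev P) := by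
  unfold ev
  have h1 := MvPolynomial.continuous_eval P
  exact h1.comp (by fun_prop)

lemma ev_N {d : ℕ} (x : E d) : ev (N d) x = ‖x‖ ^ 2 := by
  simp [ev, N, EuclideanSpace.real_norm_sq_eq]

lemma evalC_map {d : ℕ} (P : MvPolynomial (Fin d) ℝ) (x : E d) :
    evalC (P.map (algebraMap ℝ ℂ)) x = (ev P x : ℂ) := by
  unfold evalC ev
  induction P using MvPolynomial.induction_on with
  | C a => simp
  | add p q hp hq => simp only [map_add, hp, hq, Complex.ofReal_add]
  | mul_X p i hp => simp only [map_mul, hp, Complex.ofReal_mul, map_X, eval_X]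

lemma mom_int {d : ℕ} {μ : SignedMeasure (E d)} (h : IsMomentMeasure μ)
    (P : MvPolynomial (Fin d) ℝ) :
    Integrable (ev P) μ.toJordanDecomposition.posPart ∧
    Integrable (ev P) μ.toJordanDecomposition.negPart := by
  have h1 := (h (P.map (algebraMap ℝ ℂ))).re
  have h2 : (fun x => RCLike.re (evalC (P.map (algebraMap ℝ ℂ)) x)) = ev P := by
    ext x; rw [evalC_map]; simp
  rw [h2, SignedMeasure.totalVariation, integrable_add_measure] at h1
  exact h1

/-- the weight `(1+|x|²)⁻¹`. -/
def vv {d : ℕ} (x : E d) : ℝ := (1 + ‖x‖ ^ 2)⁻¹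

lemma vv_pos {d : ℕ} (x : E d) : 0 < vv x := by unfold vv; positivity

lemma vv_le {d : ℕ} (x : E d) : vv x ≤ 1 := by
  unfold vv; exact inv_le_one_of_one_le₀ (by nlinarith [sq_nonneg ‖x‖])

lemma vv_cont {d : ℕ} : Continuous (vv : E d → ℝ) := by
  unfold vv
  exact Continuous.inv₀ (by fun_prop) fun x => by positivity

lemma vv_int {d : ℕ} {q : Measure (E d)} {P : MvPolynomial (Fin d) ℝ} (h : Integrable (ev P) q)
    (m : ℕ) : Integrable (fun x => vv x ^ m * ev P x) q := by
  refine h.bdd_mul (c := 1) (vv_cont.pow m).aestronglyMeasurable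
    (Filter.Eventually.of_forall fun x => ?_)
  rw [norm_pow, Real.norm_eq_abs, abs_of_pos (vv_pos x)]
  exact pow_le_one₀ (vv_pos x).le (vv_le x)

lemma comp_eq {d : ℕ} (B : HarmonicBasis d) (T : MvPolynomial (Fin d) ℂ →ₗ[ℂ] ℂ)
    (μ : SignedMeasure (E d))
    (hT : ∀ f : MvPolynomial (Fin d) ℂ, T f = sInt μ (evalC f)) (k : ℕ) (l : Fin (B.a k))
    (m : ℕ) : B.component T k l (Polynomial.X ^ m) =
      ((sInt μ (fun x => (‖x‖ ^ 2) ^ m * B.Yf k l x) : ℝ) : ℂ) := by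
  have h1 : Polynomial.aeval (normSqP d) (Polynomial.X ^ m : Polynomial ℂ) * B.YC k l =
      (N d ^ m * B.Y k l).map (algebraMap ℝ ℂ) := by
    simp [normSqP, N, HarmonicBasis.YC]
  have h2 : evalC ((N d ^ m * B.Y k l).map (algebraMap ℝ ℂ)) =
      fun x => (((‖x‖ ^ 2) ^ m * B.Yf k l x : ℝ) : ℂ) := by
    ext x
    rw [evalC_map, ← ev_N]
    simp [ev, HarmonicBasis.Yf]
  rw [HarmonicBasis.component, hT, h1, h2, sInt, sInt, integral_complex_ofReal, integral_complex_ofReal,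
    ← Complex.ofReal_sub]

lemma NY_int {d : ℕ} (B : HarmonicBasis d) {q : Measure (E d)}
    (h : ∀ P : MvPolynomial (Fin d) ℝ, Integrable (ev P) q) (k : ℕ) (l : Fin (B.a k)) (m j : ℕ) :
    Integrable (fun x => (((1 + ‖x‖ ^ 2)⁻¹) ^ m * (‖x‖ ^ 2) ^ j) * B.Yf k l x) q := by
  have := vv_int (h (N d ^ j * B.Y k l)) m
  refine this.congr (Filter.Eventually.of_forall fun x => ?_)
  simp only [← ev_N, vv]
  simp [ev, HarmonicBasis.Yf, mul_assoc]

lemma key_eq {d : ℕ} (B : HarmonicBasis d)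
    (T : MvPolynomial (Fin d) ℂ →ₗ[ℂ] ℂ)
    (hdet : ∀ (k : ℕ) (l : Fin (B.a k)), ∃! τ : Measure ℝ,
      τ (Set.Iio 0) = 0 ∧ (∀ m : ℕ, Integrable (fun t => t ^ m) τ) ∧
      ∀ m : ℕ, (∫ t, (t : ℂ) ^ m ∂τ) = B.component T k l (Polynomial.X ^ m))
    (k : ℕ) (l : Fin (B.a k)) :
    ∃ τ : Measure ℝ, ∀ μ : SignedMeasure (E d),
      (B.PseudoPositive μ ∧ IsMomentMeasure μ ∧
        ∀ f : MvPolynomial (Fin d) ℂ, T f = sInt μ (evalC f)) → ∀ m j : ℕ,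
      ∫ t, ((1 + t)⁻¹) ^ m * t ^ j ∂τ =
        sInt μ (fun x => (((1 + ‖x‖ ^ 2)⁻¹) ^ m * (‖x‖ ^ 2) ^ j) * B.Yf k l x) := by
  obtain ⟨τ, -, hτu⟩ := hdet k l
  refine ⟨τ, ?_⟩
  rintro μ ⟨hpp, hmm, hTμ⟩ m j
  have hp := fun P => (mom_int hmm P).1
  have hn := fun P => (mom_int hmm P).2
  obtain ⟨σ, hσ0, hσ⟩ := exists_sigma μ.toJordanDecomposition.posPart
    μ.toJordanDecomposition.negPart (B.Yf k l) (ev_cont (B.Y k l)) (hp (B.Y k l)) (hn (B.Y k l))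
    (hpp k l)
  have hmom := fun r : ℕ => hσ (fun t => t ^ r) (by fun_prop)
    (by simpa using NY_int B hp k l 0 r) (by simpa using NY_int B hn k l 0 r)
  have : σ = τ := by
    apply hτu
    refine ⟨hσ0, fun r => (hmom r).1, fun r => ?_⟩
    rw [comp_eq B T μ hTμ, sInt, ← (hmom r).2, ← integral_complex_ofReal]
    simp
  rw [← this]
  exact (hσ (fun t => ((1 + t)⁻¹) ^ m * t ^ j) (by fun_prop) (NY_int B hp k l m j)
    (NY_int B hn k l m j)).2

/-- The algebra of bounded functions of the form `P(x) / (1+|x|²)^m`. -/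
def Alg (d : ℕ) : StarSubalgebra ℝ (BoundedContinuousFunction (E d) ℝ) where
  carrier := {g | ∃ (m : ℕ) (P : MvPolynomial (Fin d) ℝ), ∀ x, g x = vv x ^ m * ev P x}
  mul_mem' := by
    rintro f g ⟨m, P, h⟩ ⟨m', P', h'⟩
    refine ⟨m + m', P * P', fun x => ?_⟩
    simp only [BoundedContinuousFunction.coe_mul, Pi.mul_apply, h, h', ev, map_mul]
    ring
  add_mem' := by
    rintro f g ⟨m, P, h⟩ ⟨m', P', h'⟩
    refine ⟨m + m', (1 + N d) ^ m' * P + (1 + N d) ^ m * P', fun x => ?_⟩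
    have e1 : ∀ r : ℕ, vv x ^ r * (1 + ev (N d) x) ^ r = 1 := by
      intro r
      rw [← mul_pow, ev_N, vv, inv_mul_cancel₀ (by positivity), one_pow]
    have e2 : ev ((1 + N d) ^ m' * P + (1 + N d) ^ m * P') x =
      (1 + ev (N d) x) ^ m' * ev P x + (1 + ev (N d) x) ^ m * ev P' x := by
      simp [ev]
    rw [BoundedContinuousFunction.coe_add, Pi.add_apply, h, h', e2]
    linear_combination (- vv x ^ m * ev P x) * e1 m' - (vv x ^ m' * ev P' x) * e1 m
  algebraMap_mem' := by
    intro r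
    refine ⟨0, C r, fun x => ?_⟩
    simp [ev]
  star_mem' := by
    rintro f ⟨m, P, h⟩
    refine ⟨m, P, fun x => ?_⟩
    simp [h]

lemma Alg_sep (d : ℕ) :
    ((Alg d).map (BoundedContinuousFunction.toContinuousMapStarₐ ℝ)).SeparatesPoints := by
  intro x y hxy
  by_contra hcon
  push Not at hcon
  have hall : ∀ g ∈ Alg d, g x = g y := by
    intro g hg
    exact hcon _ ⟨_, ⟨g, hg, rfl⟩, rfl⟩
  let gv : BoundedContinuousFunction (E d) ℝ :=
    BoundedContinuousFunction.ofNormedAddCommGroup vv vv_cont 1 (fun x => by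
      rw [Real.norm_eq_abs, abs_of_pos (vv_pos x)]; exact vv_le x)
  have hv : vv x = vv y := hall gv ⟨1, 1, fun x => by simp [gv, ev]⟩
  apply hxy
  ext i
  let gu : BoundedContinuousFunction (E d) ℝ :=
    BoundedContinuousFunction.ofNormedAddCommGroup (fun x => vv x * x i)
      (vv_cont.mul (by fun_prop)) 1 (fun x => by
      have h1 : ‖x i‖ ≤ ‖x‖ := PiLp.norm_apply_le x i
      rw [norm_mul, Real.norm_eq_abs, abs_of_pos (vv_pos x), vv,
        inv_mul_le_iff₀ (by positivity)]
      nlinarith [sq_nonneg (‖x‖ - 1)])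
  have hu : vv x * x i = vv y * y i := hall gu ⟨1, X i, fun x => by simp [gu, ev]⟩
  rw [hv] at hu
  exact mul_left_cancel₀ (vv_pos y).ne' hu

end PP

theorem statement13 {d : ℕ} (hd : 1 ≤ d) (B : HarmonicBasis d)
    (T : MvPolynomial (Fin d) ℂ →ₗ[ℂ] ℂ) (hT : B.PPD T)
    (hdet : ∀ (k : ℕ) (l : Fin (B.a k)), ∃! τ : Measure ℝ,
      τ (Set.Iio 0) = 0 ∧ (∀ m : ℕ, Integrable (fun t => t ^ m) τ) ∧
      ∀ m : ℕ, (∫ t, (t : ℂ) ^ m ∂τ) = B.component T k l (Polynomial.X ^ m)) :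
    ∀ μ₁ μ₂ : SignedMeasure (E d),
      (B.PseudoPositive μ₁ ∧ IsMomentMeasure μ₁ ∧
        ∀ f : MvPolynomial (Fin d) ℂ, T f = sInt μ₁ (evalC f)) →
      (B.PseudoPositive μ₂ ∧ IsMomentMeasure μ₂ ∧
        ∀ f : MvPolynomial (Fin d) ℂ, T f = sInt μ₂ (evalC f)) →
      μ₁ = μ₂ := by
  intro μ₁ μ₂ h₁ h₂
  have hp1 := fun P => (PP.mom_int h₁.2.1 P).1
  have hn1 := fun P => (PP.mom_int h₁.2.1 P).2
  have hp2 := fun P => (PP.mom_int h₂.2.1 P).1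
  have hn2 := fun P => (PP.mom_int h₂.2.1 P).2
  have main : ∀ (m : ℕ) (P : MvPolynomial (Fin d) ℝ),
      sInt μ₁ (fun x => PP.vv x ^ m * PP.ev P x) = sInt μ₂ (fun x => PP.vv x ^ m * PP.ev P x) := by
    intro m P
    have hP := PP.mem_S hd B P
    unfold PP.S at hP
    induction hP using Submodule.span_induction with
    | mem P hP =>
      obtain ⟨j, k, l, rfl⟩ := hP
      obtain ⟨τ, hτ⟩ := PP.key_eq B T hdet k l
      have e : (fun x : E d => PP.vv x ^ m * PP.ev (PP.N d ^ j * B.Y k l) x) =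
          (fun x => (((1 + ‖x‖ ^ 2)⁻¹) ^ m * (‖x‖ ^ 2) ^ j) * B.Yf k l x) := by
        ext x
        simp only [← PP.ev_N, PP.vv]
        simp [PP.ev, HarmonicBasis.Yf, mul_assoc]
      rw [e, ← hτ μ₁ h₁, ← hτ μ₂ h₂]
    | zero => simp [sInt, PP.ev]
    | add P Q _ _ hP hQ =>
      have e : (fun x : E d => PP.vv x ^ m * PP.ev (P + Q) x) =
          fun x => PP.vv x ^ m * PP.ev P x + PP.vv x ^ m * PP.ev Q x := by
        ext x; simp [PP.ev, mul_add]
      simp only [sInt] at hP hQ ⊢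
      rw [e, integral_add (PP.vv_int (hp1 P) m) (PP.vv_int (hp1 Q) m),
        integral_add (PP.vv_int (hn1 P) m) (PP.vv_int (hn1 Q) m),
        integral_add (PP.vv_int (hp2 P) m) (PP.vv_int (hp2 Q) m),
        integral_add (PP.vv_int (hn2 P) m) (PP.vv_int (hn2 Q) m)]
      linarith
    | smul c P _ hP =>
      have e : (fun x : E d => PP.vv x ^ m * PP.ev (c • P) x) =
          fun x => c * (PP.vv x ^ m * PP.ev P x) := by
        ext x; simp [PP.ev]; ring
      simp only [sInt] at hP ⊢
      rw [e]
      simp only [integral_const_mul, ← mul_sub, hP]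
  have hm : μ₁.toJordanDecomposition.posPart + μ₂.toJordanDecomposition.negPart =
      μ₂.toJordanDecomposition.posPart + μ₁.toJordanDecomposition.negPart := by
    refine ext_of_forall_mem_subalgebra_integral_eq_of_pseudoEMetric_complete_countable
      (𝕜 := ℝ) (PP.Alg_sep d) ?_
    rintro g ⟨m, P, hg⟩
    have e : (fun x => g x) = fun x => PP.vv x ^ m * PP.ev P x := funext hg
    rw [e, integral_add_measure (PP.vv_int (hp1 P) m) (PP.vv_int (hn2 P) m),
      integral_add_measure (PP.vv_int (hp2 P) m) (PP.vv_int (hn1 P) m)]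
    have := main m P
    simp only [sInt] at this
    linarith
  rw [← SignedMeasure.toSignedMeasure_toJordanDecomposition μ₁,
    ← SignedMeasure.toSignedMeasure_toJordanDecomposition μ₂,
    JordanDecomposition.toSignedMeasure, JordanDecomposition.toSignedMeasure,
    sub_eq_sub_iff_add_eq_add, ← Measure.toSignedMeasure_add, ← Measure.toSignedMeasure_add]
  simp only [hm]
end
end

section
/- Let μ be a pseudo-positive signed moment measure on ℝ^d whose component measures μ_{k,l} satisfy the summability condition Σ_{k=0}^∞ Σ_{l=1}^{a_k} ∫_0^∞ r^N r^{-k} dμ_{k,l}(r) < ∞ for every N ∈ ℕ₀. Then V_μ = {μ} (i.e. μ is determined within the class of pseudo-positive measures) if and only if for every k ∈ ℕ₀ and l = 1,…,a_k the image measure μ_{k,l}^ψ of μ_{k,l} under ψ(t) = t² is determined in the sense of Stieltjes. -/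
section PartA

open Polynomial

/-- orthonormal polynomials -/
theorem exists_orthonormal_polys (L : ℝ[X] →ₗ[ℝ] ℝ) (hpos : ∀ p, 0 ≤ L (p * p))
    (hdef : ∀ p, L (p * p) = 0 → p = 0) :
    ∃ e : ℕ → ℝ[X], (∀ i j, L (e i * e j) = if i = j then 1 else 0) ∧
      ∀ n, Submodule.span ℝ (e '' Set.Iio n) = degreeLT ℝ n := by
  let core : InnerProductSpace.Core ℝ ℝ[X] :=
    { inner := fun p q => L (p * q)
      conj_inner_symm := fun p q => by simp [mul_comm]
      re_inner_nonneg := fun p => by simpa using hpos p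
      add_left := fun p q r => by simp [add_mul]
      smul_left := fun p q r => by simp
      definite := fun p h => hdef p h }
  let : NormedAddCommGroup ℝ[X] := core.toNormedAddCommGroup
  let : InnerProductSpace ℝ ℝ[X] := InnerProductSpace.ofCore core.toCore
  have hli : LinearIndependent ℝ (fun n : ℕ => (X : ℝ[X]) ^ n) := by
    have := (Polynomial.basisMonomials ℝ).linearIndependent
    convert this using 2 with n
    simp [Polynomial.X_pow_eq_monomial]
  refine ⟨InnerProductSpace.gramSchmidtNormed ℝ (fun n : ℕ => (X : ℝ[X]) ^ n), ?_, ?_⟩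
  · intro i j
    exact orthonormal_iff_ite.1 (InnerProductSpace.gramSchmidtNormed_orthonormal hli) i j
  · intro n
    rw [InnerProductSpace.span_gramSchmidtNormed, InnerProductSpace.span_gramSchmidt_Iio,
      Polynomial.degreeLT_eq_span_X_pow]
    congr 1
    ext p
    simp

theorem gronwall_aux (u v w : ℕ → ℝ) (t T Cv Cw : ℝ) (ht : |t| ≤ T)
    (hv : ∀ n, ∑ k ∈ Finset.range n, v k ^ 2 ≤ Cv) (hw : ∀ n, ∑ k ∈ Finset.range n, w k ^ 2 ≤ Cw)
    (hu : ∀ n, u n = v n + t * ∑ k ∈ Finset.range n, (w n * v k - v n * w k) * u k) (n : ℕ) :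
    ∑ k ∈ Finset.range n, u k ^ 2 ≤ Real.exp (2 * Cv + 4 * T ^ 2 * (Cw * Cv + Cv * Cw)) := by
  have hCv : 0 ≤ Cv := by simpa using hv 0
  have hCw : 0 ≤ Cw := by simpa using hw 0
  have hT : t ^ 2 ≤ T ^ 2 := sq_le_sq' (by linarith [neg_abs_le t]) (by linarith [le_abs_self t])
  let b : ℕ → ℝ := fun n => 2 * v n ^ 2 + 4 * T ^ 2 * (w n ^ 2 * Cv + v n ^ 2 * Cw)
  have hb : ∀ n, 0 ≤ b n := fun n => by positivity
  have hstep : ∀ n, u n ^ 2 ≤ b n * (1 + ∑ k ∈ Finset.range n, u k ^ 2) := by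
    intro n
    set S := ∑ k ∈ Finset.range n, u k ^ 2 with hS
    have hS0 : 0 ≤ S := Finset.sum_nonneg fun _ _ => sq_nonneg _
    set c := ∑ k ∈ Finset.range n, (w n * v k - v n * w k) * u k with hc
    have h1 : c ^ 2 ≤ (∑ k ∈ Finset.range n, (w n * v k - v n * w k) ^ 2) * S :=
      Finset.sum_mul_sq_le_sq_mul_sq _ _ _
    have h2 : ∑ k ∈ Finset.range n, (w n * v k - v n * w k) ^ 2
        ≤ 2 * (w n ^ 2 * Cv + v n ^ 2 * Cw) := by
      calc _ ≤ ∑ k ∈ Finset.range n, (2 * w n ^ 2 * v k ^ 2 + 2 * v n ^ 2 * w k ^ 2) := by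
            apply Finset.sum_le_sum; intro k _
            nlinarith [sq_nonneg (w n * v k + v n * w k)]
        _ = 2 * w n ^ 2 * ∑ k ∈ Finset.range n, v k ^ 2
            + 2 * v n ^ 2 * ∑ k ∈ Finset.range n, w k ^ 2 := by
            rw [Finset.sum_add_distrib, Finset.mul_sum, Finset.mul_sum]
        _ ≤ 2 * w n ^ 2 * Cv + 2 * v n ^ 2 * Cw := by
            gcongr
            · exact hv n
            · exact hw n
        _ = _ := by ring
    have h3 : c ^ 2 ≤ 2 * (w n ^ 2 * Cv + v n ^ 2 * Cw) * S :=
      h1.trans (mul_le_mul_of_nonneg_right h2 hS0)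
    have h4 : t ^ 2 * c ^ 2 ≤ T ^ 2 * (2 * (w n ^ 2 * Cv + v n ^ 2 * Cw) * S) :=
      mul_le_mul hT h3 (sq_nonneg _) (sq_nonneg _)
    rw [hu n]
    have h5 : (v n + t * c) ^ 2 ≤ 2 * v n ^ 2 + 2 * (t ^ 2 * c ^ 2) := by
      nlinarith [sq_nonneg (v n - t * c)]
    have h6 : 0 ≤ 2 * v n ^ 2 * S := by positivity
    have h7 : 0 ≤ 4 * T ^ 2 * (w n ^ 2 * Cv + v n ^ 2 * Cw) := by positivity
    simp only [b]
    nlinarith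
  have hmain : ∀ n, 1 + ∑ k ∈ Finset.range n, u k ^ 2 ≤ Real.exp (∑ k ∈ Finset.range n, b k) := by
    intro n
    induction n with
    | zero => simp
    | succ n ih =>
      rw [Finset.sum_range_succ, Finset.sum_range_succ, Real.exp_add]
      have h1 := hstep n
      have h2 : 1 + b n ≤ Real.exp (b n) := by linarith [Real.add_one_le_exp (b n)]
      have h0 : 0 ≤ 1 + ∑ k ∈ Finset.range n, u k ^ 2 := by positivity
      calc _ ≤ (1 + ∑ k ∈ Finset.range n, u k ^ 2) * (1 + b n) := by linarith
        _ ≤ _ := mul_le_mul ih h2 (by linarith [hb n]) (Real.exp_pos _).le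
  have h8 : ∑ k ∈ Finset.range n, b k ≤ 2 * Cv + 4 * T ^ 2 * (Cw * Cv + Cv * Cw) := by
    have : ∑ k ∈ Finset.range n, b k = 2 * ∑ k ∈ Finset.range n, v k ^ 2
        + 4 * T ^ 2 * ((∑ k ∈ Finset.range n, w k ^ 2) * Cv
          + (∑ k ∈ Finset.range n, v k ^ 2) * Cw) := by
      simp only [b, Finset.sum_add_distrib, Finset.mul_sum, Finset.sum_mul, mul_add]
    rw [this]
    gcongr
    · exact hv n
    · exact hw n
    · exact hv n
  have := hmain n
  have := Real.exp_le_exp.2 h8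
  linarith

theorem cs_functional (L : ℝ[X] →ₗ[ℝ] ℝ) (hpos : ∀ p, 0 ≤ L (p * p)) (p q : ℝ[X]) :
    L (p * q) ^ 2 ≤ L (p * p) * L (q * q) := by
  have h : ∀ t : ℝ, 0 ≤ L (p * p) * (t * t) + (2 * L (p * q)) * t + L (q * q) := by
    intro t
    have := hpos (t • p + q)
    have e : (t • p + q) * (t • p + q) = (t * t) • (p * p) + (2 * t) • (p * q) + q * q := by
      simp only [Polynomial.smul_eq_C_mul, map_mul, map_ofNat]; ring
    rw [e] at this
    simp only [map_add, map_smul, smul_eq_mul] at this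
    linarith
  have := discrim_le_zero h
  unfold discrim at this
  linarith

theorem bessel_functional (L φ : ℝ[X] →ₗ[ℝ] ℝ) (C : ℝ) (hφ : ∀ p, φ p ^ 2 ≤ C * L (p * p))
    (e : ℕ → ℝ[X]) (he : ∀ i j, L (e i * e j) = if i = j then 1 else 0) (n : ℕ) :
    ∑ k ∈ Finset.range n, φ (e k) ^ 2 ≤ C := by
  set S := ∑ k ∈ Finset.range n, φ (e k) ^ 2 with hS
  have hS0 : 0 ≤ S := Finset.sum_nonneg fun _ _ => sq_nonneg _
  have h := hφ (∑ k ∈ Finset.range n, φ (e k) • e k)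
  have h1 : φ (∑ k ∈ Finset.range n, φ (e k) • e k) = S := by
    simp [hS, pow_two]
  have h2 : L ((∑ k ∈ Finset.range n, φ (e k) • e k) * (∑ k ∈ Finset.range n, φ (e k) • e k))
      = S := by
    rw [Finset.sum_mul_sum]
    simp only [map_sum, smul_mul_smul_comm, map_smul, he, smul_eq_mul, hS]
    apply Finset.sum_congr rfl
    intro i hi
    simp [pow_two]
    intro h; exact absurd (Finset.mem_range.1 hi) (by omega)
  rw [h1, h2] at h
  have hC : 0 ≤ C := by
    have := hφ (e 0)
    rw [he] at this; simp at this; nlinarith [sq_nonneg (φ (e 0))]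
  by_contra hlt
  push Not at hlt
  nlinarith

theorem mem_span_expand (L : ℝ[X] →ₗ[ℝ] ℝ)
    (e : ℕ → ℝ[X]) (he : ∀ i j, L (e i * e j) = if i = j then 1 else 0) (n : ℕ) (p : ℝ[X])
    (hp : p ∈ Submodule.span ℝ (e '' Set.Iio n)) :
    p = ∑ k ∈ Finset.range n, L (p * e k) • e k := by
  induction hp using Submodule.span_induction with
  | mem x hx =>
    obtain ⟨i, hi, rfl⟩ := hx
    simp only [he, ite_smul, one_smul, zero_smul]
    rw [Finset.sum_ite_eq, if_pos (Finset.mem_range.2 hi)]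
  | zero => simp
  | add x y _ _ hx hy =>
    simp only [add_mul, map_add, add_smul, Finset.sum_add_distrib]
    rw [← hx, ← hy]
  | smul a x _ hx =>
    simp only [smul_mul_assoc, map_smul, smul_eq_mul, mul_smul]
    rw [← Finset.smul_sum, ← hx]

theorem functional_bound (L φ : ℝ[X] →ₗ[ℝ] ℝ) (C : ℝ)
    (e : ℕ → ℝ[X]) (he : ∀ i j, L (e i * e j) = if i = j then 1 else 0)
    (hspan : ∀ n, Submodule.span ℝ (e '' Set.Iio n) = degreeLT ℝ n)
    (hC : ∀ n, ∑ k ∈ Finset.range n, φ (e k) ^ 2 ≤ C) (p : ℝ[X]) :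
    φ p ^ 2 ≤ C * L (p * p) := by
  obtain ⟨n, hp⟩ : ∃ n, p ∈ Submodule.span ℝ (e '' Set.Iio n) := by
    refine ⟨p.natDegree + 1, ?_⟩
    rw [hspan, mem_degreeLT]
    exact degree_le_natDegree.trans_lt (by exact_mod_cast Nat.lt_succ_self _)
  have hx := mem_span_expand L e he _ p hp
  have h1 : φ p = ∑ k ∈ Finset.range n, φ (e k) * L (p * e k) := by
    have h3 : φ (∑ k ∈ Finset.range n, L (p * e k) • e k)
        = ∑ k ∈ Finset.range n, φ (e k) * L (p * e k) := by
      rw [map_sum]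
      refine Finset.sum_congr rfl fun k _ => ?_
      rw [map_smul, smul_eq_mul, mul_comm]
    rw [← hx] at h3
    exact h3
  have h2 : L (p * p) = ∑ k ∈ Finset.range n, L (p * e k) ^ 2 := by
    have h3 : L (p * ∑ k ∈ Finset.range n, L (p * e k) • e k)
        = ∑ k ∈ Finset.range n, L (p * e k) ^ 2 := by
      rw [Finset.mul_sum, map_sum]
      refine Finset.sum_congr rfl fun k _ => ?_
      rw [mul_smul_comm, map_smul, smul_eq_mul, pow_two]
    rw [← hx] at h3
    exact h3
  rw [h1, h2]
  refine (Finset.sum_mul_sq_le_sq_mul_sq _ _ _).trans ?_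
  exact mul_le_mul_of_nonneg_right (hC n) (Finset.sum_nonneg fun _ _ => sq_nonneg _)

theorem invariability (L : ℝ[X] →ₗ[ℝ] ℝ) (hpos : ∀ p, 0 ≤ L (p * p)) (z₀ C₀ C₁ : ℝ)
    (hC₁ : 0 ≤ C₁)
    (h0 : ∀ p : ℝ[X], p.eval z₀ ^ 2 ≤ C₀ * L (p * p))
    (h1 : ∀ q : ℝ[X], L (q * q) ≤ C₁ * L (((X - C z₀) * q) * ((X - C z₀) * q))) (T : ℝ) :
    ∃ K : ℝ, 0 < K ∧ ∀ z, |z - z₀| ≤ T → ∀ p : ℝ[X], p.eval z ^ 2 ≤ K * L (p * p) := by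
  have hdiv : ∀ p : ℝ[X], p = C (p.eval z₀) + (X - C z₀) * (p /ₘ (X - C z₀)) := by
    intro p
    have := modByMonic_add_div p (X - C z₀)
    rw [modByMonic_X_sub_C_eq_C_eval] at this
    exact this.symm
  have hdef : ∀ p, L (p * p) = 0 → p = 0 := by
    intro p
    induction hn : p.natDegree using Nat.strong_induction_on generalizing p with
    | _ n ih =>
    intro hp
    have hz : p.eval z₀ = 0 := by
      have := h0 p
      rw [hp, mul_zero] at this
      exact pow_eq_zero_iff (two_ne_zero) |>.1 (le_antisymm this (sq_nonneg _))
    have hd := hdiv p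
    rw [hz, C_0, zero_add] at hd
    set q := p /ₘ (X - C z₀)
    have hq : L (q * q) = 0 := by
      have := h1 q
      rw [← hd, hp, mul_zero] at this
      exact le_antisymm this (hpos q)
    by_cases hq0 : q = 0
    · rw [hd, hq0, mul_zero]
    · have : q.natDegree < n := by
        rw [← hn, hd, natDegree_mul (X_sub_C_ne_zero z₀) hq0]; simp
      exact absurd (ih _ this q rfl hq) hq0
  obtain ⟨e, he, hspan⟩ := exists_orthonormal_polys L hpos hdef
  let R : ℝ[X] →ₗ[ℝ] ℝ[X] :=
    { toFun := fun p => p /ₘ (X - C z₀)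
      map_add' := fun p q => by
        apply mul_left_cancel₀ (X_sub_C_ne_zero z₀)
        have a1 := hdiv p
        have a2 := hdiv q
        have a3 := hdiv (p + q)
        rw [eval_add, C_add] at a3
        linear_combination a1 + a2 - a3
      map_smul' := fun a p => by
        apply mul_left_cancel₀ (X_sub_C_ne_zero z₀)
        have a1 := hdiv p
        have a3 := hdiv (a • p)
        rw [eval_smul, smul_eq_mul, C_mul] at a3
        simp only [Polynomial.smul_eq_C_mul, RingHom.id_apply] at a3 ⊢
        linear_combination C a * a1 - a3 }
  have hR : ∀ p : ℝ[X], p = C (p.eval z₀) + (X - C z₀) * R p := hdiv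
  have hC0 : 0 ≤ C₀ := by
    have := h0 (e 0); rw [he] at this; simp at this; nlinarith [sq_nonneg ((e 0).eval z₀)]
  let Q : ℝ[X] →ₗ[ℝ] ℝ := L.comp R
  have hL1 : 0 ≤ L (1 * 1) := hpos 1
  have hRb : ∀ p, L (R p * R p) ≤ C₁ * (2 + 2 * C₀ * L (1 * 1)) * L (p * p) := by
    intro p
    have ha := h1 (R p)
    have hb : (X - C z₀) * R p = p - C (p.eval z₀) := by
      conv_rhs => rw [hR p]
      simp
    rw [hb] at ha
    have hc : L ((p - C (p.eval z₀)) * (p - C (p.eval z₀)))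
        ≤ 2 * L (p * p) + 2 * (p.eval z₀ ^ 2 * L (1 * 1)) := by
      have := hpos (p + C (p.eval z₀))
      have e1 : (p + C (p.eval z₀)) * (p + C (p.eval z₀)) + (p - C (p.eval z₀)) * (p - C (p.eval z₀))
        = (2:ℝ) • (p * p) + (2 * p.eval z₀ ^ 2 : ℝ) • (1 * 1) := by
        simp only [Polynomial.smul_eq_C_mul, map_mul, map_ofNat, map_pow]; ring
      have := congrArg L e1
      simp only [map_add, map_smul, smul_eq_mul] at this
      linarith
    have hd := h0 p
    have h9 : p.eval z₀ ^ 2 * L (1 * 1) ≤ C₀ * L (p * p) * L (1 * 1) :=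
      mul_le_mul_of_nonneg_right hd hL1
    calc L (R p * R p) ≤ C₁ * (2 * L (p * p) + 2 * (p.eval z₀ ^ 2 * L (1 * 1))) :=
          ha.trans (mul_le_mul_of_nonneg_left hc hC₁)
      _ ≤ C₁ * (2 * L (p * p) + 2 * (C₀ * L (p * p) * L (1 * 1))) := by gcongr
      _ = _ := by ring
  set C₂ := L (1 * 1) * (C₁ * (2 + 2 * C₀ * L (1 * 1)))
  have hQb : ∀ p, Q p ^ 2 ≤ C₂ * L (p * p) := by
    intro p
    have := cs_functional L hpos 1 (R p)
    rw [one_mul] at this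
    calc Q p ^ 2 ≤ _ := this
      _ ≤ L (1 * 1) * (C₁ * (2 + 2 * C₀ * L (1 * 1)) * L (p * p)) :=
        mul_le_mul_of_nonneg_left (hRb p) hL1
      _ = _ := by simp only [C₂]; ring
  have hv := bessel_functional L (Polynomial.leval z₀) C₀ (by simpa using h0) e he
  have hw := bessel_functional L Q C₂ hQb e he
  simp only [Polynomial.leval_apply] at hv
  refine ⟨Real.exp (2 * C₀ + 4 * T ^ 2 * (C₂ * C₀ + C₀ * C₂)), Real.exp_pos _, fun z hz p => ?_⟩
  have hdeg : ∀ n, e n ∈ degreeLT ℝ (n + 1) := fun n => by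
    rw [← hspan]; exact Submodule.subset_span ⟨n, by simp, rfl⟩
  have horth : ∀ n, ∀ q ∈ degreeLT ℝ n, L (e n * q) = 0 := by
    intro n q hq
    rw [← hspan] at hq
    rw [mem_span_expand L e he n q hq, Finset.mul_sum, map_sum]
    apply Finset.sum_eq_zero
    intro k hk
    rw [mul_smul_comm, map_smul, he, if_neg (by have := Finset.mem_range.1 hk; omega), smul_zero]
  have hRdeg : ∀ n, ∀ q ∈ degreeLT ℝ (n + 1), R q ∈ degreeLT ℝ n := by
    intro n q hq
    rw [mem_degreeLT] at hq ⊢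
    by_cases hq0 : q = 0
    · rw [hq0, map_zero, degree_zero]; exact WithBot.bot_lt_coe n
    have := Polynomial.natDegree_divByMonic q (monic_X_sub_C z₀)
    rw [natDegree_X_sub_C] at this
    have h3 : q.natDegree < n + 1 := (natDegree_lt_iff_degree_lt hq0).2 hq
    by_cases hR0 : R q = 0
    · rw [hR0, degree_zero]; exact WithBot.bot_lt_coe n
    rw [← natDegree_lt_iff_degree_lt hR0]
    change (q /ₘ (X - C z₀)).natDegree < n
    by_cases h4 : q.natDegree = 0
    · exfalso; apply hR0
      change q /ₘ (X - C z₀) = 0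
      rw [divByMonic_eq_zero_iff (monic_X_sub_C z₀), degree_X_sub_C, degree_eq_natDegree hq0, h4]
      norm_num
    · omega
  have hrec : ∀ n, (e n).eval z = (e n).eval z₀ + (z - z₀) *
      ∑ k ∈ Finset.range n, (Q (e n) * (e k).eval z₀ - (e n).eval z₀ * Q (e k)) * (e k).eval z := by
    intro n
    have hmem : R (e n) ∈ Submodule.span ℝ (e '' Set.Iio n) := by
      rw [hspan]; exact hRdeg n _ (hdeg n)
    have hx := mem_span_expand L e he n _ hmem
    have hcoef : ∀ k ∈ Finset.range n, L (R (e n) * e k) =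
        Q (e n) * (e k).eval z₀ - (e n).eval z₀ * Q (e k) := by
      intro k hk
      have hk := Finset.mem_range.1 hk
      have e1 : R (e n) * e k + (e n).eval z₀ • R (e k)
          = (e k).eval z₀ • R (e n) + e n * R (e k) := by
        have a1 := hR (e n)
        have a2 := hR (e k)
        set vn := (e n).eval z₀
        set vk := (e k).eval z₀
        set rn := R (e n)
        set rk := R (e k)
        rw [a1, a2]
        simp only [Polynomial.smul_eq_C_mul]; ring
      have e2 := congrArg L e1
      have e3 : L (e n * R (e k)) = 0 := by
        apply horth
        have := hRdeg k _ (hdeg k)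
        exact degreeLT_mono hk.le this
      simp only [map_add, map_smul, smul_eq_mul, e3] at e2
      change _ = L (R (e n)) * _ - _ * L (R (e k))
      linarith
    conv_lhs => rw [hR (e n), hx]
    rw [Finset.sum_congr rfl fun k hk => by rw [hcoef k hk]]
    simp [eval_finsetSum]
  have hfin := gronwall_aux (fun n => (e n).eval z) (fun n => (e n).eval z₀) (fun n => Q (e n))
    (z - z₀) T C₀ C₂ hz hv hw hrec
  have := functional_bound L (Polynomial.leval z) _ e he hspan (by simpa using hfin) p
  simpa using this

end PartA

section PartB

open Polynomial MeasureTheory Filter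
open scoped NNReal CompactlySupported Topology

theorem poly_nonneg_of_punctured (q : ℝ[X]) (r : ℝ) (h : ∀ x, 0 ≤ x → x ≠ r → 0 ≤ q.eval x)
    (hr : 0 ≤ r) : 0 ≤ q.eval r := by
  have h1 : Tendsto (fun x => q.eval x) (𝓝[>] r) (𝓝 (q.eval r)) :=
    (q.continuous.tendsto r).mono_left nhdsWithin_le_nhds
  refine ge_of_tendsto h1 ?_
  filter_upwards [self_mem_nhdsWithin] with x hx
  have hx : r < x := hx
  exact h x (hr.trans hx.le) hx.ne'

theorem stieltjes_cert (p : ℝ[X]) (hp : ∀ x, 0 ≤ x → 0 ≤ p.eval x) :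
    ∃ A B : ℝ[X], IsSumSq A ∧ IsSumSq B ∧ p = A + X * B := by
  have hmul : ∀ p q : ℝ[X], (∃ A B : ℝ[X], IsSumSq A ∧ IsSumSq B ∧ p = A + X * B) →
      (∃ A B : ℝ[X], IsSumSq A ∧ IsSumSq B ∧ q = A + X * B) →
      (∃ A B : ℝ[X], IsSumSq A ∧ IsSumSq B ∧ p * q = A + X * B) := by
    rintro p q ⟨A, B, hA, hB, rfl⟩ ⟨A', B', hA', hB', rfl⟩
    refine ⟨A * A' + (X * X) * (B * B'), A * B' + B * A', ?_, ?_, by ring⟩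
    · exact (hA.mul hA').add ((IsSumSq.mul_self _).mul (hB.mul hB'))
    · exact (hA.mul hB').add (hB.mul hA')
  have hsq : ∀ c : ℝ, 0 ≤ c → IsSumSq (C c : ℝ[X]) := fun c hc => by
    have : (C c : ℝ[X]) = C (Real.sqrt c) * C (Real.sqrt c) := by
      rw [← C_mul, Real.mul_self_sqrt hc]
    rw [this]; exact IsSumSq.mul_self _
  induction hn : p.natDegree using Nat.strong_induction_on generalizing p with
  | _ n ih =>
  by_cases hp0 : p = 0
  · exact ⟨0, 0, IsSumSq.zero, IsSumSq.zero, by simp [hp0]⟩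
  by_cases hd : p.natDegree = 0
  · rw [natDegree_eq_zero] at hd
    obtain ⟨c, rfl⟩ := hd
    have := hp 0 le_rfl
    rw [eval_C] at this
    exact ⟨C c, 0, hsq c this, IsSumSq.zero, by simp⟩
  have hdeg : p.degree ≠ 0 := by
    intro h; exact hd (natDegree_eq_of_degree_eq_some h)
  obtain ⟨z, hz⟩ := IsAlgClosed.exists_aeval_eq_zero ℂ p hdeg
  by_cases him : z.im = 0
  · have hroot : p.eval z.re = 0 := by
      have hz' : z = ((z.re : ℝ) : ℂ) := by apply Complex.ext <;> simp [him]
      rw [hz'] at hz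
      have h2 : aeval ((z.re : ℝ) : ℂ) p = ((p.eval z.re : ℝ) : ℂ) := by
        have := Polynomial.aeval_algebraMap_apply ℂ z.re p
        simpa using this
      rw [h2] at hz
      exact_mod_cast hz
    set r := z.re with hr
    obtain ⟨q, rfl⟩ := dvd_iff_isRoot.2 hroot
    have hq0 : q ≠ 0 := by rintro rfl; simp at hp0
    have hqd : q.natDegree < n := by
      rw [← hn, natDegree_mul (X_sub_C_ne_zero r) hq0]; simp
    by_cases hr0 : r ≤ 0
    · refine hmul _ _ ⟨C (-r), 1, hsq _ (by linarith), IsSumSq.one, by simp; ring⟩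
        (ih _ hqd q ?_ rfl)
      have h1 : ∀ x, 0 ≤ x → x ≠ 0 → 0 ≤ q.eval x := by
        intro x hx hx0
        have := hp x hx
        rw [eval_mul] at this
        simp only [eval_sub, eval_X, eval_C] at this
        have hpos : 0 < x - r := by
          have : 0 < x := lt_of_le_of_ne hx hx0.symm
          linarith
        exact nonneg_of_mul_nonneg_right this hpos
      intro x hx
      by_cases hx0 : x = 0
      · rw [hx0]; exact poly_nonneg_of_punctured q 0 h1 le_rfl
      · exact h1 x hx hx0
    · push Not at hr0
      have hqr : q.eval r = 0 := by
        have h1 : 0 ≤ q.eval r := by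
          have h1 : Tendsto (fun x => q.eval x) (𝓝[>] r) (𝓝 (q.eval r)) :=
            (q.continuous.tendsto r).mono_left nhdsWithin_le_nhds
          refine ge_of_tendsto h1 ?_
          filter_upwards [self_mem_nhdsWithin] with x hx
          have hx : r < x := hx
          have := hp x (hr0.le.trans hx.le)
          simp only [eval_mul, eval_sub, eval_X, eval_C] at this
          exact nonneg_of_mul_nonneg_right this (by linarith)
        have h2 : q.eval r ≤ 0 := by
          have h1 : Tendsto (fun x => q.eval x) (𝓝[<] r) (𝓝 (q.eval r)) :=
            (q.continuous.tendsto r).mono_left nhdsWithin_le_nhds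
          refine le_of_tendsto h1 ?_
          filter_upwards [self_mem_nhdsWithin, mem_nhdsWithin_of_mem_nhds (lt_mem_nhds hr0)]
            with x hx hx0
          have hx : x < r := hx
          have := hp x (le_of_lt hx0)
          simp only [eval_mul, eval_sub, eval_X, eval_C] at this
          nlinarith
        exact le_antisymm h2 h1
      obtain ⟨s, rfl⟩ := dvd_iff_isRoot.2 hqr
      have hs0 : s ≠ 0 := by rintro rfl; simp at hq0
      have hsd : s.natDegree < n := by
        rw [natDegree_mul (X_sub_C_ne_zero r) hs0] at hqd; omega
      rw [← mul_assoc]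
      refine hmul _ _ ⟨(X - C r) * (X - C r), 0, IsSumSq.mul_self _, IsSumSq.zero, by simp⟩
        (ih _ hsd s ?_ rfl)
      have h1 : ∀ x, 0 ≤ x → x ≠ r → 0 ≤ s.eval x := by
        intro x hx hx0
        have := hp x hx
        rw [← mul_assoc] at this
        simp only [eval_mul, eval_sub, eval_X, eval_C] at this
        exact nonneg_of_mul_nonneg_right this (mul_self_pos.2 (sub_ne_zero.2 hx0))
      intro x hx
      by_cases hx0 : x = r
      · rw [hx0]; exact poly_nonneg_of_punctured s r h1 hr0.le
      · exact h1 x hx hx0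
  · obtain ⟨q, hq⟩ := p.quadratic_dvd_of_aeval_eq_zero_im_ne_zero hz him
    have hnorm : ‖z‖ ^ 2 = z.re * z.re + z.im * z.im := by
      rw [← Complex.normSq_eq_norm_sq, Complex.normSq_apply]
    have hquad : (X ^ 2 - C (2 * z.re) * X + C (‖z‖ ^ 2) : ℝ[X])
        = (X - C z.re) * (X - C z.re) + C z.im * C z.im := by
      rw [hnorm]; simp only [C_add, C_mul, map_ofNat]; ring
    rw [hquad] at hq
    have hqpos : ∀ x, 0 < (x - z.re) * (x - z.re) + z.im * z.im := fun x => by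
      have := mul_self_pos.2 him
      nlinarith [mul_self_nonneg (x - z.re)]
    have hq0 : q ≠ 0 := by rintro rfl; simp at hq; exact hp0 hq
    have hmonic : ((X - C z.re) * (X - C z.re) + C z.im * C z.im : ℝ[X]).natDegree = 2 := by
      rw [← C_mul]
      compute_degree!
    have hqd : q.natDegree < n := by
      rw [← hn, hq, natDegree_mul ?_ hq0, hmonic]
      · omega
      · intro h; rw [h] at hmonic; simp at hmonic
    rw [hq]
    refine hmul _ _ ⟨_, 0, (IsSumSq.mul_self (X - C z.re)).add (IsSumSq.mul_self (C z.im)),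
      IsSumSq.zero, by simp⟩ (ih _ hqd q ?_ rfl)
    intro x hx
    have := hp x hx
    rw [hq] at this
    simp only [eval_mul, eval_add, eval_sub, eval_X, eval_C] at this
    exact nonneg_of_mul_nonneg_right this (hqpos x)

theorem stieltjes_pos (L : ℝ[X] →ₗ[ℝ] ℝ) (h0 : ∀ q, 0 ≤ L (q * q)) (h1 : ∀ q, 0 ≤ L (X * (q * q)))
    (p : ℝ[X]) (hp : ∀ x, 0 ≤ x → 0 ≤ p.eval x) : 0 ≤ L p := by
  obtain ⟨A, B, hA, hB, rfl⟩ := stieltjes_cert p hp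
  rw [map_add]
  apply add_nonneg
  · clear hp
    induction hA with
    | zero => simp
    | sq_add a _ ih => rw [map_add]; exact add_nonneg (h0 a) ih
  · clear hp
    induction hB with
    | zero => simp
    | sq_add a _ ih => rw [mul_add, map_add]; exact add_nonneg (h1 a) ih

/-- functions of polynomial growth -/
def polyGrowth : Submodule ℝ (ℝ≥0 → ℝ) where
  carrier := {f | ∃ p : ℝ[X], ∀ x : ℝ≥0, |f x| ≤ p.eval (x : ℝ)}
  add_mem' := by
    rintro f g ⟨p, hp⟩ ⟨q, hq⟩
    refine ⟨p + q, fun x => ?_⟩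
    rw [eval_add]
    exact (abs_add_le _ _).trans (add_le_add (hp x) (hq x))
  zero_mem' := ⟨0, by simp⟩
  smul_mem' := by
    rintro c f ⟨p, hp⟩
    refine ⟨C |c| * p, fun x => ?_⟩
    simp only [Pi.smul_apply, smul_eq_mul, abs_mul, eval_mul, eval_C]
    exact mul_le_mul_of_nonneg_left (hp x) (abs_nonneg c)

/-- polynomials as functions of polynomial growth -/
def polyEv : ℝ[X] →ₗ[ℝ] polyGrowth where
  toFun p := ⟨fun x => p.eval (x : ℝ), ⟨p * p + 1, fun x => by
    simp only [eval_add, eval_mul, eval_one]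
    rw [abs_le]; constructor <;> nlinarith [sq_nonneg (p.eval (x:ℝ) + 1), sq_nonneg (p.eval (x:ℝ) - 1)]⟩⟩
  map_add' p q := by ext x; simp
  map_smul' c p := by ext x; simp

theorem polyEv_apply (p : ℝ[X]) (x : ℝ≥0) : (polyEv p : ℝ≥0 → ℝ) x = p.eval (x : ℝ) := rfl

theorem polyEv_injective : Function.Injective polyEv := by
  intro p q h
  apply Polynomial.eq_of_infinite_eval_eq
  apply Set.Infinite.mono _ (Set.Ici_infinite (0:ℝ))
  intro x hx
  have := congrArg (fun f : polyGrowth => (f : ℝ≥0 → ℝ) ⟨x, hx⟩) h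
  exact this

def posCone : PointedCone ℝ polyGrowth where
  carrier := {f | ∀ x, 0 ≤ (f : ℝ≥0 → ℝ) x}
  add_mem' := by
    intro f g hf hg x
    exact add_nonneg (hf x) (hg x)
  zero_mem' := fun x => le_rfl
  smul_mem' := by
    intro c f hf x
    exact mul_nonneg c.2 (hf x)

theorem exists_extension (L : ℝ[X] →ₗ[ℝ] ℝ) (hL : ∀ p : ℝ[X], (∀ x, 0 ≤ x → 0 ≤ p.eval x) → 0 ≤ L p) :
    ∃ g : polyGrowth →ₗ[ℝ] ℝ, (∀ p, g (polyEv p) = L p) ∧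
      ∀ f : polyGrowth, (∀ x, 0 ≤ (f : ℝ≥0 → ℝ) x) → 0 ≤ g f := by
  let e := LinearEquiv.ofInjective polyEv polyEv_injective
  let F : polyGrowth →ₗ.[ℝ] ℝ := ⟨LinearMap.range polyEv, L.comp e.symm.toLinearMap⟩
  have hF : ∀ p, F ⟨polyEv p, ⟨p, rfl⟩⟩ = L p := by
    intro p
    change L (e.symm ⟨polyEv p, ⟨p, rfl⟩⟩) = L p
    congr 1
    rw [LinearEquiv.symm_apply_eq]
    rfl
  have hn : ∀ x : F.domain, (x : polyGrowth) ∈ posCone → 0 ≤ F x := by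
    rintro ⟨_, ⟨p, rfl⟩⟩ hx
    rw [hF]
    apply hL
    intro x hx0
    exact hx ⟨x, hx0⟩
  have hdn : ∀ y, ∃ x : F.domain, (x : polyGrowth) + y ∈ posCone := by
    intro y
    obtain ⟨p, hp⟩ := y.2
    refine ⟨⟨polyEv p, ⟨p, rfl⟩⟩, fun x => ?_⟩
    change 0 ≤ p.eval (x : ℝ) + (y : ℝ≥0 → ℝ) x
    have := neg_le_of_abs_le (hp x)
    linarith
  obtain ⟨g, hg1, hg2⟩ := riesz_extension posCone F hn hdn
  refine ⟨g, fun p => ?_, fun f hf => hg2 f hf⟩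
  rw [← hF p, ← hg1]

theorem stieltjes_exists (L : ℝ[X] →ₗ[ℝ] ℝ) (h0 : ∀ q, 0 ≤ L (q * q))
    (h1 : ∀ q, 0 ≤ L (X * (q * q))) :
    ∃ ρ : Measure ℝ, ρ (Set.Iio 0) = 0 ∧ (∀ m : ℕ, Integrable (fun t => t ^ m) ρ) ∧
      ∀ p : ℝ[X], ∫ t, p.eval t ∂ρ = L p := by
  obtain ⟨g, hg1, hg2⟩ := exists_extension L (stieltjes_pos L h0 h1)
  have hmono : ∀ f f' : polyGrowth, (∀ x, (f : ℝ≥0 → ℝ) x ≤ (f' : ℝ≥0 → ℝ) x) → g f ≤ g f' := by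
    intro f f' h
    have := hg2 (f' - f) (fun x => by
      have := h x
      change 0 ≤ (f' : ℝ≥0 → ℝ) x - (f : ℝ≥0 → ℝ) x
      linarith)
    rw [map_sub] at this
    linarith
  let ι : C_c(ℝ≥0, ℝ) →ₗ[ℝ] polyGrowth :=
    { toFun := fun f => ⟨f, by
        obtain ⟨c, hc⟩ := f.hasCompactSupport.exists_bound_of_continuous f.continuous
        exact ⟨C c, fun x => by simpa using hc x⟩⟩
      map_add' := fun f f' => by ext x; rfl
      map_smul' := fun c f => by ext x; rfl }
  let Λ : C_c(ℝ≥0, ℝ) →ₚ[ℝ] ℝ := PositiveLinearMap.mk₀ (g.comp ι) (fun f hf => hg2 _ hf)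
  let ρ₀ := RealRMK.rieszMeasure Λ
  have hρ₀ : ∀ f : C_c(ℝ≥0, ℝ), ∫ x, f x ∂ρ₀ = g (ι f) := fun f => RealRMK.integral_rieszMeasure Λ f
  -- cutoffs
  let χ : ℕ → ℝ≥0 → ℝ := fun n x => max 0 (min 1 ((n : ℝ) + 1 - x))
  have hχc : ∀ n, Continuous (χ n) := fun n => by
    change Continuous fun x : ℝ≥0 => max (0:ℝ) (min 1 ((n : ℝ) + 1 - x))
    fun_prop
  have hχ0 : ∀ n x, 0 ≤ χ n x := fun n x => le_max_left _ _
  have hχ1 : ∀ n x, χ n x ≤ 1 := fun n x => max_le zero_le_one (min_le_left _ _)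
  have hχe : ∀ (n : ℕ) (x : ℝ≥0), (x : ℝ) ≤ n → χ n x = 1 := fun n x h => by
    simp only [χ]
    rw [min_eq_left (by linarith), max_eq_right zero_le_one]
  have hχs : ∀ n, HasCompactSupport (χ n) := fun n => by
    apply HasCompactSupport.of_support_subset_isCompact (isCompact_Icc (a := (0:ℝ≥0)) (b := n + 1))
    intro x hx
    refine ⟨zero_le, ?_⟩
    by_contra hlt
    push Not at hlt
    apply hx
    have : ((n : ℝ) + 1) < x := by exact_mod_cast hlt
    simp only [χ]
    rw [max_eq_left]
    exact (min_le_right _ _).trans (by linarith)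
  let φ : ℕ → ℕ → C_c(ℝ≥0, ℝ) := fun m n =>
    ⟨⟨fun x => (x : ℝ) ^ m * χ n x, by have := hχc n; fun_prop⟩, (hχs n).mul_left⟩
  have hφ : ∀ m n x, φ m n x = (x : ℝ) ^ m * χ n x := fun m n x => rfl
  have hgup : ∀ m n, g (ι (φ m n)) ≤ L (X ^ m) := by
    intro m n
    rw [← hg1]
    apply hmono
    intro x
    change (x : ℝ) ^ m * χ n x ≤ (X ^ m : ℝ[X]).eval (x : ℝ)
    rw [eval_pow, eval_X]
    exact mul_le_of_le_one_right (by positivity) (hχ1 n x)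
  have hglow : ∀ m (n : ℕ), (n : ℝ) * (L (X ^ m) - g (ι (φ m n))) ≤ L (X ^ (m + 1)) := by
    intro m n
    rw [← hg1, ← hg1, ← map_sub, ← smul_eq_mul, ← map_smul]
    apply hmono
    intro x
    change (n : ℝ) * ((X ^ m : ℝ[X]).eval (x : ℝ) - (x : ℝ) ^ m * χ n x)
      ≤ (X ^ (m + 1) : ℝ[X]).eval (x : ℝ)
    rw [eval_pow, eval_X, eval_pow, eval_X, pow_succ]
    have hb : (n : ℝ) * (1 - χ n x) ≤ x := by
      by_cases hx : (x : ℝ) ≤ n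
      · rw [hχe n x hx]; simp
      · push Not at hx
        have := hχ0 n x
        have hn : (0:ℝ) ≤ n := by positivity
        nlinarith
    have : (0:ℝ) ≤ (x : ℝ) ^ m := by positivity
    nlinarith
  have hL : ∀ m, Tendsto (fun n => g (ι (φ m n))) atTop (𝓝 (L (X ^ m))) := by
    intro m
    have h2 : Tendsto (fun n : ℕ => L (X ^ m) - L (X ^ (m + 1)) / n) atTop (𝓝 (L (X ^ m))) := by
      have := tendsto_const_div_atTop_nhds_zero_nat (L (X ^ (m + 1)))
      simpa using tendsto_const_nhds.sub this
    refine tendsto_of_tendsto_of_tendsto_of_le_of_le' h2 tendsto_const_nhds ?_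
      (Eventually.of_forall (hgup m))
    filter_upwards [eventually_gt_atTop 0] with n hn
    have hn : (0:ℝ) < n := by exact_mod_cast hn
    have := hglow m n
    rw [← le_div_iff₀' hn] at this
    linarith
  have hlim : ∀ m (x : ℝ≥0), Tendsto (fun n => φ m n x) atTop (𝓝 ((x : ℝ) ^ m)) := by
    intro m x
    apply tendsto_const_nhds.congr'
    obtain ⟨N, hN⟩ := exists_nat_ge (x : ℝ)
    filter_upwards [eventually_ge_atTop N] with n hn
    rw [hφ, hχe n x (hN.trans (by exact_mod_cast hn)), mul_one]
  have hInt : ∀ m : ℕ, Integrable (fun x : ℝ≥0 => (x : ℝ) ^ m) ρ₀ := by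
    intro m
    refine ⟨by fun_prop, ?_⟩
    have hfat := lintegral_liminf_le (μ := ρ₀) (u := atTop) (f := fun n (x : ℝ≥0) => ENNReal.ofReal (φ m n x))
      (fun n => by
        have := (φ m n).continuous.measurable
        fun_prop)
    have hle : ∀ n, ∫⁻ x, ENNReal.ofReal (φ m n x) ∂ρ₀ ≤ ENNReal.ofReal (L (X ^ m)) := by
      intro n
      rw [← ofReal_integral_eq_lintegral_ofReal]
      · apply ENNReal.ofReal_le_ofReal
        rw [hρ₀]; exact hgup m n
      · exact (φ m n).continuous.integrable_of_hasCompactSupport (φ m n).hasCompactSupport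
      · exact Eventually.of_forall fun x => mul_nonneg (by positivity) (hχ0 n x)
    rw [hasFiniteIntegral_iff_enorm]
    have heq : ∀ x : ℝ≥0, ‖(x : ℝ) ^ m‖ₑ
        = liminf (fun n => ENNReal.ofReal (φ m n x)) atTop := by
      intro x
      rw [Real.enorm_of_nonneg (by positivity)]
      exact ((ENNReal.continuous_ofReal.tendsto _).comp (hlim m x)).liminf_eq.symm
    simp_rw [heq]
    refine hfat.trans_lt (lt_of_le_of_lt ?_ (ENNReal.ofReal_lt_top (r := L (X ^ m))))
    exact liminf_le_of_le (by isBoundedDefault) (fun b hb => by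
      obtain ⟨n, hn⟩ := hb.exists
      exact hn.trans (hle n))
  have hmom : ∀ m : ℕ, ∫ x : ℝ≥0, (x : ℝ) ^ m ∂ρ₀ = L (X ^ m) := by
    intro m
    have h2 : Tendsto (fun n => ∫ x, φ m n x ∂ρ₀) atTop (𝓝 (∫ x : ℝ≥0, (x : ℝ) ^ m ∂ρ₀)) := by
      refine tendsto_integral_of_dominated_convergence (fun x : ℝ≥0 => (x : ℝ) ^ m)
        (fun n => (φ m n).continuous.aestronglyMeasurable) (hInt m) ?_ ?_
      · intro n
        refine Eventually.of_forall fun x => ?_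
        rw [hφ, Real.norm_of_nonneg (mul_nonneg (by positivity) (hχ0 n x))]
        exact mul_le_of_le_one_right (by positivity) (hχ1 n x)
      · exact Eventually.of_forall (hlim m)
    simp_rw [hρ₀] at h2
    exact tendsto_nhds_unique h2 (hL m)
  have hme : Measurable ((↑) : ℝ≥0 → ℝ) := NNReal.continuous_coe.measurable
  have hInt' : ∀ m : ℕ, Integrable (fun t : ℝ => t ^ m) (Measure.map ((↑) : ℝ≥0 → ℝ) ρ₀) := by
    intro m
    rw [integrable_map_measure (by fun_prop) hme.aemeasurable]
    exact hInt m
  refine ⟨Measure.map ((↑) : ℝ≥0 → ℝ) ρ₀, ?_, hInt', ?_⟩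
  · rw [Measure.map_apply hme measurableSet_Iio]
    convert measure_empty (μ := ρ₀)
    ext x; simp
  · intro p
    have hm : ∀ m : ℕ, ∫ t : ℝ, t ^ m ∂(Measure.map ((↑) : ℝ≥0 → ℝ) ρ₀) = L (X ^ m) := by
      intro m
      rw [integral_map hme.aemeasurable (by fun_prop)]
      exact hmom m
    have hp : p = ∑ i ∈ Finset.range (p.natDegree + 1), p.coeff i • X ^ i := by
      conv_lhs => rw [p.as_sum_range_C_mul_X_pow]
      simp [smul_eq_C_mul]
    simp_rw [eval_eq_sum_range]
    rw [integral_finsetSum _ fun i _ => (hInt' i).const_mul _]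
    conv_rhs => rw [hp]
    rw [map_sum]
    refine Finset.sum_congr rfl fun i _ => ?_
    rw [integral_const_mul, hm, map_smul, smul_eq_mul]

end PartB

section PartC

open Polynomial MeasureTheory Filter
open scoped NNReal Topology BoundedContinuousFunction

/-- the auxiliary injective bounded function, equal to `1/(1+x)` for `x ≥ 0` -/
noncomputable def yf (x : ℝ) : ℝ := 1 - x / (1 + |x|)

theorem yf_cont : Continuous yf := by
  unfold yf
  have : ∀ x : ℝ, 1 + |x| ≠ 0 := fun x => by positivity
  fun_prop (disch := exact this _)

theorem yf_inj : Function.Injective yf := by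
  intro x y h
  unfold yf at h
  have hx : 0 < 1 + |x| := by positivity
  have hy : 0 < 1 + |y| := by positivity
  have h1 : x / (1 + |x|) = y / (1 + |y|) := by linarith
  rw [div_eq_div_iff hx.ne' hy.ne'] at h1
  rcases abs_cases x with ⟨ha, hb⟩ | ⟨ha, hb⟩ <;> rcases abs_cases y with ⟨hc, hd⟩ | ⟨hc, hd⟩ <;>
    rw [ha, hc] at h1 <;> nlinarith

theorem yf_bound (x : ℝ) : ‖yf x‖ ≤ 2 := by
  unfold yf
  have hx : 0 < 1 + |x| := by positivity
  have : |x / (1 + |x|)| ≤ 1 := by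
    rw [abs_div, abs_of_pos hx, div_le_one hx]; linarith
  rw [Real.norm_eq_abs]
  rw [abs_le] at *
  constructor <;> linarith

theorem yf_eq {x : ℝ} (hx : 0 ≤ x) : yf x = 1 / (1 + x) := by
  unfold yf
  rw [abs_of_nonneg hx]
  field_simp
  ring

theorem ae_nonneg_of {α : Measure ℝ} (h : α (Set.Iio 0) = 0) : ∀ᵐ x ∂α, 0 ≤ x := by
  rw [ae_iff]
  convert h using 2
  ext x; simp

theorem ext_of_yf {α β : Measure ℝ} [IsFiniteMeasure α] [IsFiniteMeasure β]
    (h : ∀ n : ℕ, ∫ x, yf x ^ n ∂α = ∫ x, yf x ^ n ∂β) : α = β := by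
  let Y : ℝ →ᵇ ℝ := BoundedContinuousFunction.ofNormedAddCommGroup yf yf_cont 2 yf_bound
  let A0 : Subalgebra ℝ (ℝ →ᵇ ℝ) := (Polynomial.aeval Y).range
  let A : StarSubalgebra ℝ (ℝ →ᵇ ℝ) := ⟨A0, by
    intro a ha
    rwa [show star a = a by ext x; simp]⟩
  refine ext_of_forall_mem_subalgebra_integral_eq_of_polish (𝕜 := ℝ) (A := A) ?_ ?_
  · intro x y hxy
    refine ⟨yf, ⟨(BoundedContinuousFunction.toContinuousMapStarₐ ℝ Y), ⟨Y, ⟨X, by simp⟩, rfl⟩, rfl⟩,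
      fun h => hxy (yf_inj h)⟩
  · rintro g ⟨p, rfl⟩
    have hInt : ∀ (γ : Measure ℝ) [IsFiniteMeasure γ] (n : ℕ), Integrable (fun x => yf x ^ n) γ := by
      intro γ _ n
      exact (BoundedContinuousFunction.integrable γ (Y ^ n))
    have hev : ∀ x, (Polynomial.aeval Y p) x = p.eval (yf x) := by
      intro x
      induction p using Polynomial.induction_on' with
      | add p q hp hq => simp [hp, hq]
      | monomial n a => simp [aeval_monomial]; left; rfl
    have key : ∀ (γ : Measure ℝ) [IsFiniteMeasure γ], ∫ x, (Polynomial.aeval Y p) x ∂γ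
        = ∑ i ∈ Finset.range (p.natDegree + 1), p.coeff i * ∫ x, yf x ^ i ∂γ := by
      intro γ _
      simp_rw [hev, eval_eq_sum_range]
      rw [integral_finsetSum _ (fun i _ => (hInt γ i).const_mul _)]
      simp_rw [integral_const_mul]
    change ∫ x, (Polynomial.aeval Y p) x ∂α = ∫ x, (Polynomial.aeval Y p) x ∂β
    rw [key α, key β]
    simp_rw [h]

theorem stieltjes_sep {α β : Measure ℝ} [IsFiniteMeasure α] [IsFiniteMeasure β]
    (hα : α (Set.Iio 0) = 0) (hβ : β (Set.Iio 0) = 0)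
    (h1 : ∫ _, (1:ℝ) ∂α = ∫ _, (1:ℝ) ∂β)
    (h : ∀ b : ℝ, 0 < b → ∫ x, 1 / (x + b) ∂α = ∫ x, 1 / (x + b) ∂β) : α = β := by
  have hmeas : Measurable yf := yf_cont.measurable
  have hy : ∀ {x : ℝ}, 0 ≤ x → 0 ≤ yf x ∧ yf x ≤ 1 := fun {x} hx => by
    rw [yf_eq hx]
    constructor
    · positivity
    · rw [div_le_one (by linarith)]; linarith
  have hInt : ∀ (γ : Measure ℝ) [IsFiniteMeasure γ] (n : ℕ), Integrable (fun x => yf x ^ n) γ := by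
    intro γ _ n
    refine Integrable.of_bound (by fun_prop) (2 ^ n) (Eventually.of_forall fun x => ?_)
    rw [norm_pow]; exact pow_le_pow_left₀ (norm_nonneg _) (yf_bound x) n
  have hb : ∀ (n : ℕ) (t x : ℝ), 0 < t → t < 1 / 2 → 0 ≤ x → ‖yf x ^ n / (1 - t * yf x)‖ ≤ 2 := by
    intro n t x ht ht1 hx
    obtain ⟨a, b⟩ := hy hx
    rw [norm_div, norm_pow, Real.norm_of_nonneg a,
      Real.norm_of_nonneg (by nlinarith), div_le_iff₀ (by nlinarith)]
    have : yf x ^ n ≤ 1 := pow_le_one₀ a b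
    nlinarith
  have hInt2 : ∀ (γ : Measure ℝ) [IsFiniteMeasure γ], γ (Set.Iio 0) = 0 → ∀ (n : ℕ) (t : ℝ),
      0 < t → t < 1 / 2 → Integrable (fun x => yf x ^ n / (1 - t * yf x)) γ := by
    intro γ _ hγ n t ht ht1
    refine Integrable.of_bound (Measurable.aestronglyMeasurable (by fun_prop)) 2 ?_
    filter_upwards [ae_nonneg_of hγ] with x hx
    exact hb n t x ht ht1 hx
  have hlim : ∀ (γ : Measure ℝ) [IsFiniteMeasure γ], γ (Set.Iio 0) = 0 → ∀ n : ℕ,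
      Tendsto (fun t : ℝ => ∫ x, yf x ^ n / (1 - t * yf x) ∂γ) (𝓝[>] 0) (𝓝 (∫ x, yf x ^ n ∂γ)) := by
    intro γ _ hγ n
    refine tendsto_integral_filter_of_dominated_convergence (fun _ => 2) ?_ ?_ (by simp) ?_
    · exact Eventually.of_forall fun t => Measurable.aestronglyMeasurable (by fun_prop)
    · filter_upwards [Ioo_mem_nhdsGT (show (0:ℝ) < 1/2 by norm_num)] with t ht
      filter_upwards [ae_nonneg_of hγ] with x hx
      exact hb n t x ht.1 ht.2 hx
    · refine Eventually.of_forall fun x => ?_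
      have : ContinuousAt (fun t : ℝ => yf x ^ n / (1 - t * yf x)) 0 := by
        apply ContinuousAt.div (by fun_prop) (by fun_prop); simp
      have h2 := this.tendsto
      simp only [zero_mul, sub_zero, div_one] at h2
      exact h2.mono_left nhdsWithin_le_nhds
  have hP : ∀ n : ℕ, ∀ t : ℝ, 0 < t → t < 1 / 2 →
      ∫ x, yf x ^ (n + 1) / (1 - t * yf x) ∂α = ∫ x, yf x ^ (n + 1) / (1 - t * yf x) ∂β := by
    have hlim2 : ∀ n : ℕ, (∀ t : ℝ, 0 < t → t < 1 / 2 →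
      ∫ x, yf x ^ (n + 1) / (1 - t * yf x) ∂α = ∫ x, yf x ^ (n + 1) / (1 - t * yf x) ∂β) →
      ∫ x, yf x ^ (n + 1) ∂α = ∫ x, yf x ^ (n + 1) ∂β := by
      intro n hn
      refine tendsto_nhds_unique (hlim α hα (n + 1)) ((hlim β hβ (n + 1)).congr' ?_)
      filter_upwards [Ioo_mem_nhdsGT (show (0:ℝ) < 1/2 by norm_num)] with t ht
      exact (hn t ht.1 ht.2).symm
    intro n
    induction n with
    | zero =>
      intro t ht ht1
      have key : ∀ (γ : Measure ℝ), γ (Set.Iio 0) = 0 →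
          ∫ x, yf x ^ (0 + 1) / (1 - t * yf x) ∂γ = ∫ x, 1 / (x + (1 - t)) ∂γ := by
        intro γ hγ
        apply integral_congr_ae
        filter_upwards [ae_nonneg_of hγ] with x hx
        rw [yf_eq hx]
        have h1 : 1 + x ≠ 0 := by linarith
        have h2 : x + (1 - t) ≠ 0 := by linarith
        have h3 : 1 - t * (1 / (1 + x)) ≠ 0 := by
          rw [show 1 - t * (1 / (1 + x)) = (x + (1 - t)) / (1 + x) by field_simp; ring]
          exact div_ne_zero h2 h1
        rw [zero_add, pow_one, div_eq_div_iff h3 h2]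
        field_simp
        ring
      rw [key α hα, key β hβ]
      exact h _ (by linarith)
    | succ n ih =>
      intro t ht ht1
      have key : ∀ (γ : Measure ℝ) [IsFiniteMeasure γ], γ (Set.Iio 0) = 0 →
          ∫ x, yf x ^ (n + 1 + 1) / (1 - t * yf x) ∂γ =
          (1 / t) * (∫ x, yf x ^ (n + 1) / (1 - t * yf x) ∂γ - ∫ x, yf x ^ (n + 1) ∂γ) := by
        intro γ _ hγ
        rw [← integral_sub (hInt2 γ hγ _ t ht ht1) (hInt γ _), ← integral_const_mul]
        apply integral_congr_ae
        filter_upwards [ae_nonneg_of hγ] with x hx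
        obtain ⟨a, b⟩ := hy hx
        have h3 : 1 - t * yf x ≠ 0 := by nlinarith
        field_simp
        ring
      rw [key α hα, key β hβ, ih t ht ht1, hlim2 n ih]
  apply ext_of_yf
  intro n
  cases n with
  | zero => simpa using h1
  | succ n =>
    refine tendsto_nhds_unique (hlim α hα (n + 1)) ((hlim β hβ (n + 1)).congr' ?_)
    filter_upwards [Ioo_mem_nhdsGT (show (0:ℝ) < 1/2 by norm_num)] with t ht
    exact (hP n t ht.1 ht.2).symm

end PartC

section PartC2

open Polynomial MeasureTheory Filter
open scoped NNReal Topology BoundedContinuousFunction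

theorem integrable_poly {α : Measure ℝ} (h : ∀ m : ℕ, Integrable (fun t => t ^ m) α) (p : ℝ[X]) :
    Integrable (fun t => p.eval t) α := by
  simp_rw [eval_eq_sum_range]
  exact integrable_finsetSum _ (fun i _ => (h i).const_mul _)

theorem integral_poly_eq {α β : Measure ℝ} (h : ∀ m : ℕ, Integrable (fun t => t ^ m) α)
    (h' : ∀ m : ℕ, Integrable (fun t => t ^ m) β)
    (he : ∀ m : ℕ, ∫ t, t ^ m ∂α = ∫ t, t ^ m ∂β) (p : ℝ[X]) :
    ∫ t, p.eval t ∂α = ∫ t, p.eval t ∂β := by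
  simp_rw [eval_eq_sum_range]
  rw [integral_finsetSum _ (fun i _ => (h i).const_mul _),
    integral_finsetSum _ (fun i _ => (h' i).const_mul _)]
  simp_rw [integral_const_mul, he]

/-- integration against `W dα` as a functional -/
noncomputable def momL (α : Measure ℝ) (h : ∀ m : ℕ, Integrable (fun t => t ^ m) α) (W : ℝ[X]) :
    ℝ[X] →ₗ[ℝ] ℝ where
  toFun p := ∫ t, (W * p).eval t ∂α
  map_add' p q := by
    rw [← integral_add (integrable_poly h _) (integrable_poly h _)]
    simp [mul_add]
  map_smul' c p := by
    simp only [RingHom.id_apply, smul_eq_mul]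
    rw [← integral_const_mul]
    simp

theorem integrable_div {α : Measure ℝ} (h0 : α (Set.Iio 0) = 0)
    (h : ∀ m : ℕ, Integrable (fun t => t ^ m) α)
    {b : ℝ} (hb : 0 < b) (p : ℝ[X]) : Integrable (fun t => p.eval t / (t + b)) α := by
  refine ((integrable_poly h p).norm.const_mul (1 / b)).mono'
    (Measurable.aestronglyMeasurable (by have := p.continuous.measurable; fun_prop)) ?_
  filter_upwards [ae_nonneg_of h0] with x hx
  rw [norm_div, Real.norm_of_nonneg (show 0 ≤ x + b by linarith), one_div, ← div_eq_inv_mul]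
  exact div_le_div_of_nonneg_left (norm_nonneg _) hb (by linarith)

theorem div_cs {α : Measure ℝ} (h0 : α (Set.Iio 0) = 0)
    (h : ∀ m : ℕ, Integrable (fun t => t ^ m) α) (W : ℝ[X]) (hW : ∀ x, 0 ≤ x → 0 ≤ W.eval x)
    {b : ℝ} (hb : 0 < b) (p : ℝ[X]) :
    (∫ t, (W * p).eval t / (t + b) ∂α) ^ 2 ≤
      (∫ t, W.eval t ∂α) * (1 / b ^ 2 * momL α h W (p * p)) := by
  have hq : ∀ s : ℝ, 0 ≤ (∫ t, W.eval t ∂α) * (s * s)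
      + (-2 * ∫ t, (W * p).eval t / (t + b) ∂α) * s + 1 / b ^ 2 * momL α h W (p * p) := by
    intro s
    have e1 := (integrable_poly h W).const_mul (s * s)
    have e2 := (integrable_div h0 h hb (W * p)).const_mul (-2 * s)
    have e3 := (integrable_poly h (W * (p * p))).const_mul (1 / b ^ 2)
    have : (∫ t, W.eval t ∂α) * (s * s)
      + (-2 * ∫ t, (W * p).eval t / (t + b) ∂α) * s + 1 / b ^ 2 * momL α h W (p * p)
      = ∫ t, ((s * s) * W.eval t + (-2 * s) * ((W * p).eval t / (t + b))
          + 1 / b ^ 2 * (W * (p * p)).eval t) ∂α := by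
      have e12 : Integrable (fun t => (s * s) * W.eval t + (-2 * s) * ((W * p).eval t / (t + b))) α :=
        e1.add e2
      rw [integral_add e12 e3, integral_add e1 e2, integral_const_mul, integral_const_mul,
        integral_const_mul]
      change _ + _ + 1 / b ^ 2 * ∫ t, (W * (p * p)).eval t ∂α = _
      ring
    rw [this]
    apply integral_nonneg_of_ae
    filter_upwards [ae_nonneg_of h0] with x hx
    have hWx := hW x hx
    simp only [eval_mul, Pi.zero_apply]
    have h1 : (p.eval x / (x + b)) ^ 2 ≤ 1 / b ^ 2 * (p.eval x) ^ 2 := by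
      rw [div_pow, one_div, ← div_eq_inv_mul]
      apply div_le_div_of_nonneg_left (sq_nonneg _) (by positivity)
      exact pow_le_pow_left₀ hb.le (by linarith) 2
    have h2 : s * s * W.eval x + -2 * s * (W.eval x * p.eval x / (x + b))
        + 1 / b ^ 2 * (W.eval x * (p.eval x * p.eval x))
        = W.eval x * ((s - p.eval x / (x + b)) ^ 2
          + (1 / b ^ 2 * (p.eval x) ^ 2 - (p.eval x / (x + b)) ^ 2)) := by ring
    rw [h2]
    apply mul_nonneg hWx
    nlinarith [sq_nonneg (s - p.eval x / (x + b))]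
  have := discrim_le_zero hq
  unfold discrim at this
  nlinarith

theorem indet_bound {α β : Measure ℝ} (hα0 : α (Set.Iio 0) = 0) (hβ0 : β (Set.Iio 0) = 0)
    (hα : ∀ m : ℕ, Integrable (fun t => t ^ m) α)
    (hβ : ∀ m : ℕ, Integrable (fun t => t ^ m) β)
    (he : ∀ m : ℕ, ∫ t, t ^ m ∂α = ∫ t, t ^ m ∂β)
    (W : ℝ[X]) (hW : ∀ x, 0 ≤ x → 0 ≤ W.eval x)
    (b : ℝ) (hb : 0 < b)
    (hD : ∫ t, W.eval t / (t + b) ∂α ≠ ∫ t, W.eval t / (t + b) ∂β) (T : ℝ) :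
    ∃ K, 0 < K ∧ ∀ z, 0 ≤ z → z ≤ T → ∀ p : ℝ[X], p.eval z ^ 2 ≤ K * momL α hα W (p * p) := by
  set D := ∫ t, W.eval t / (t + b) ∂α - ∫ t, W.eval t / (t + b) ∂β with hDdef
  have hD0 : D ≠ 0 := sub_ne_zero.mpr hD
  have hpos : ∀ p, 0 ≤ momL α hα W (p * p) := by
    intro p
    apply integral_nonneg_of_ae
    filter_upwards [ae_nonneg_of hα0] with x hx
    simp only [eval_mul, Pi.zero_apply]
    exact mul_nonneg (hW x hx) (mul_self_nonneg _)
  have hLβ : ∀ p, momL β hβ W p = momL α hα W p := fun p => (integral_poly_eq hα hβ he _).symm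
  set m := ∫ t, W.eval t ∂α with hm
  have hmβ : ∫ t, W.eval t ∂β = m := (integral_poly_eq hα hβ he W).symm
  have h0 : ∀ p : ℝ[X], p.eval (-b) ^ 2 ≤ (4 * m / (b ^ 2 * D ^ 2)) * momL α hα W (p * p) := by
    intro p
    obtain ⟨q, hq⟩ := X_sub_C_dvd_sub_C_eval (a := -b) (p := p)
    have hdec : ∀ (γ : Measure ℝ), γ (Set.Iio 0) = 0 → (hγ : ∀ m : ℕ, Integrable (fun t => t ^ m) γ) →
        ∫ t, (W * p).eval t / (t + b) ∂γ = ∫ t, (W * q).eval t ∂γ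
          + p.eval (-b) * ∫ t, W.eval t / (t + b) ∂γ := by
      intro γ h0 hγ
      rw [← integral_const_mul, ← integral_add (integrable_poly hγ _)
        ((integrable_div h0 hγ hb W).const_mul _)]
      apply integral_congr_ae
      filter_upwards [ae_nonneg_of h0] with x hx
      have hx' : x + b ≠ 0 := by linarith
      have := congrArg (fun r => r.eval x) hq
      simp only [eval_sub, eval_C, eval_mul, eval_X, sub_neg_eq_add] at this
      simp only [eval_mul]
      field_simp
      linear_combination W.eval x * this
    have e1 := hdec α hα0 hα
    have e2 := hdec β hβ0 hβ
    rw [← integral_poly_eq hα hβ he (W * q)] at e2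
    have e3 : p.eval (-b) * D = ∫ t, (W * p).eval t / (t + b) ∂α
        - ∫ t, (W * p).eval t / (t + b) ∂β := by rw [e1, e2, hDdef]; ring
    have c1 := div_cs hα0 hα W hW hb p
    have c2 := div_cs hβ0 hβ W hW hb p
    rw [hLβ, hmβ] at c2
    rw [← hm] at c1
    have e4 : (p.eval (-b) * D) ^ 2 ≤ 4 * (m * (1 / b ^ 2 * momL α hα W (p * p))) := by
      rw [e3]
      nlinarith [sq_nonneg (∫ t, (W * p).eval t / (t + b) ∂α + ∫ t, (W * p).eval t / (t + b) ∂β)]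
    have hD2 : 0 < D ^ 2 := by positivity
    rw [mul_pow, ← le_div_iff₀ hD2] at e4
    refine e4.trans (le_of_eq ?_)
    field_simp
  have h1 : ∀ q : ℝ[X], momL α hα W (q * q) ≤ (1 / b ^ 2) *
      momL α hα W (((X - C (-b)) * q) * ((X - C (-b)) * q)) := by
    intro q
    change ∫ t, (W * (q * q)).eval t ∂α ≤ (1 / b ^ 2) *
      ∫ t, (W * (((X - C (-b)) * q) * ((X - C (-b)) * q))).eval t ∂α
    rw [← integral_const_mul]
    apply integral_mono_ae (integrable_poly hα _) ((integrable_poly hα _).const_mul _)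
    filter_upwards [ae_nonneg_of hα0] with x hx
    simp only [eval_mul, eval_sub, eval_X, eval_C, sub_neg_eq_add]
    rw [one_div, ← div_eq_inv_mul, le_div_iff₀ (by positivity)]
    have hWx := hW x hx
    have : 0 ≤ W.eval x * (q.eval x * q.eval x) := mul_nonneg hWx (mul_self_nonneg _)
    have h3 : b ^ 2 ≤ (x + b) ^ 2 := pow_le_pow_left₀ hb.le (by linarith) 2
    nlinarith
  obtain ⟨K, hK, hKb⟩ := invariability (momL α hα W) hpos (-b) _ _ (by positivity) h0 h1 (T + b)
  refine ⟨K, hK, fun z hz hzT p => hKb z ?_ p⟩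
  rw [abs_of_nonneg (by linarith)]
  linarith

end PartC2

section PartC3

open Polynomial MeasureTheory Filter
open scoped NNReal Topology BoundedContinuousFunction

theorem finite_of_moments {α : Measure ℝ} (h : ∀ m : ℕ, Integrable (fun t => t ^ m) α) :
    IsFiniteMeasure α := by
  have := h 0
  simp only [pow_zero] at this
  rwa [integrable_const_iff_isFiniteMeasure one_ne_zero] at this

theorem theoremM {α β : Measure ℝ} (hα0 : α (Set.Iio 0) = 0) (hβ0 : β (Set.Iio 0) = 0)
    (hα : ∀ m : ℕ, Integrable (fun t => t ^ m) α)
    (hβ : ∀ m : ℕ, Integrable (fun t => t ^ m) β)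
    (he : ∀ m : ℕ, ∫ t, t ^ m ∂β = ∫ t, t ^ m ∂α) (hne : β ≠ α) :
    ∃ a : ℝ, 0 < a ∧ ∃ ρ : Measure ℝ, ρ (Set.Iio a) = 0 ∧ (∀ m : ℕ, Integrable (fun t => t ^ m) ρ) ∧
      (∀ m : ℕ, ∫ t, t ^ m ∂ρ = ∫ t, t ^ m ∂α) ∧ ρ ≠ α := by
  have fα := finite_of_moments hα
  have fβ := finite_of_moments hβ
  obtain ⟨b, hb, hD⟩ : ∃ b : ℝ, 0 < b ∧ ∫ x, 1 / (x + b) ∂α ≠ ∫ x, 1 / (x + b) ∂β := by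
    by_contra hcon
    push Not at hcon
    apply hne
    symm
    refine stieltjes_sep hα0 hβ0 ?_ hcon
    simpa using (he 0).symm
  have hDX : ∫ x, (X : ℝ[X]).eval x / (x + b) ∂α ≠ ∫ x, (X : ℝ[X]).eval x / (x + b) ∂β := by
    have key : ∀ (γ : Measure ℝ), γ (Set.Iio 0) = 0 → (hγ : ∀ m : ℕ, Integrable (fun t => t ^ m) γ) →
        ∫ x, (X : ℝ[X]).eval x / (x + b) ∂γ = ∫ x, x ^ 0 ∂γ - b * ∫ x, 1 / (x + b) ∂γ := by
      intro γ h0 hγ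
      have := integrable_div h0 hγ hb 1
      simp only [eval_one] at this
      rw [← integral_const_mul, ← integral_sub (hγ 0) (this.const_mul _)]
      apply integral_congr_ae
      filter_upwards [ae_nonneg_of h0] with x hx
      have hx' : x + b ≠ 0 := by linarith
      simp only [eval_X]
      field_simp
      ring
    rw [key α hα0 hα, key β hβ0 hβ, he 0]
    intro h
    apply hD
    have : b * ∫ x, 1 / (x + b) ∂α = b * ∫ x, 1 / (x + b) ∂β := by linarith
    exact mul_left_cancel₀ hb.ne' this
  obtain ⟨K₁, hK₁, hb₁⟩ := indet_bound hα0 hβ0 hα hβ (fun m => (he m).symm) 1 (by simp) b hb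
    (by simpa using hD) 1
  obtain ⟨K₂, hK₂, hb₂⟩ := indet_bound hα0 hβ0 hα hβ (fun m => (he m).symm) X
    (fun x hx => by simpa using hx) b hb hDX 1
  set L := momL α hα 1 with hL
  have hLa : ∀ p, L p = ∫ t, p.eval t ∂α := fun p => by
    change ∫ t, (1 * p).eval t ∂α = _
    rw [one_mul]
  have hLX : ∀ p, momL α hα X p = L (X * p) := fun p => by
    rw [hLa]; rfl
  simp_rw [hLX] at hb₂
  set m := ∫ _, (1:ℝ) ∂α with hm
  have hm0 : 0 ≤ m := integral_nonneg fun _ => zero_le_one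
  have hsq : ∀ p : ℝ[X], L (p * p) ≤ (m * K₂ + 1) * L (X * (p * p)) := by
    intro p
    have e : (m * K₂ + 1) * L (X * (p * p)) = ∫ t, (K₂ * L (X * (p * p)) * 1 + (X * (p * p)).eval t) ∂α := by
      rw [integral_add ((integrable_const _)) (integrable_poly hα _), integral_const_mul, ← hm,
        ← hLa]
      ring
    rw [e, hLa]
    apply integral_mono_ae (integrable_poly hα _) ((integrable_const _).add (integrable_poly hα _))
    filter_upwards [ae_nonneg_of hα0] with x hx
    simp only [eval_mul, eval_X, Pi.add_apply]
    by_cases hx1 : x ≤ 1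
    · have := hb₂ x hx hx1 p
      have : 0 ≤ x * (p.eval x * p.eval x) := mul_nonneg hx (mul_self_nonneg _)
      nlinarith
    · push Not at hx1
      have h1 := hb₂ 1 zero_le_one le_rfl p
      have h2 : 0 ≤ p.eval x * p.eval x := mul_self_nonneg _
      nlinarith [sq_nonneg (p.eval 1)]
  have hLpos : ∀ p : ℝ[X], 0 ≤ L (p * p) := by
    intro p
    rw [hLa]
    apply integral_nonneg
    intro x
    simp only [eval_mul, Pi.zero_apply]
    exact mul_self_nonneg _
  set ε := 1 / (m * K₂ + 1) with hε
  have hε0 : 0 < ε := by positivity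
  have hLε : ∀ p : ℝ[X], ε * L (p * p) ≤ L (X * (p * p)) := by
    intro p
    rw [hε, one_div, ← div_eq_inv_mul, div_le_iff₀' (by positivity)]
    exact hsq p
  obtain ⟨a, ⟨ha0, ha1⟩, haα⟩ : ∃ a ∈ Set.Ioo 0 (min ε 1), α {a} = 0 := by
    by_contra hcon
    push Not at hcon
    have hc : Set.Countable {t : ℝ | 0 < α {t}} := by
      have := Measure.countable_meas_level_set_pos (μ := α) (g := fun x : ℝ => x) measurable_id
      simpa using this
    have : (Set.Ioo 0 (min ε 1)).Countable := hc.mono fun x hx => pos_iff_ne_zero.mpr (hcon x hx)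
    exact Cardinal.Real.Ioo_countable_iff.mp this |>.not_gt (by positivity)
  have haε : a < ε := lt_of_lt_of_le ha1 (min_le_left _ _)
  have ha1' : a ≤ 1 := ha1.le.trans (min_le_right _ _)
  set c := 1 / K₁ with hc
  have hc0 : 0 < c := by positivity
  let M : ℝ[X] →ₗ[ℝ] ℝ :=
    { toFun := fun p => L (p.comp (X - C a)) - c * p.eval 0
      map_add' := fun p q => by simp only [add_comp, map_add, eval_add]; ring
      map_smul' := fun r p => by
        simp only [smul_comp, map_smul, eval_smul, RingHom.id_apply, smul_eq_mul]; ring }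
  have hMa : ∀ p, M p = L (p.comp (X - C a)) - c * p.eval 0 := fun p => rfl
  obtain ⟨ρ₀, hρ0, hρm, hρi⟩ := stieltjes_exists M (by
    intro q
    rw [hMa, mul_comp, eval_mul]
    have := hb₁ a ha0.le ha1' (q.comp (X - C a))
    simp only [eval_comp, eval_sub, eval_X, eval_C, sub_self] at this
    rw [hc, one_div, ← div_eq_inv_mul, sub_nonneg, div_le_iff₀' hK₁]
    linarith) (by
    intro q
    rw [hMa]
    simp only [mul_comp, X_comp, eval_mul, eval_X, zero_mul, mul_zero, sub_zero]
    have h1 := hLε (q.comp (X - C a))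
    have h2 := hLpos (q.comp (X - C a))
    rw [sub_mul, map_sub, ← smul_eq_C_mul, map_smul, smul_eq_mul]
    nlinarith)
  let ρ₁ := ρ₀.map (fun t => t + a)
  have hmeas : Measurable (fun t : ℝ => t + a) := by fun_prop
  have hρ₁m : ∀ p : ℝ[X], Integrable (fun t => p.eval t) ρ₁ := by
    intro p
    rw [integrable_map_measure p.continuous.aestronglyMeasurable hmeas.aemeasurable]
    have := integrable_poly hρm (p.comp (X + C a))
    simpa [Function.comp_def] using this
  have hρ₁i : ∀ p : ℝ[X], ∫ t, p.eval t ∂ρ₁ = L p - c * p.eval a := by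
    intro p
    rw [integral_map hmeas.aemeasurable p.continuous.aestronglyMeasurable]
    have := hρi (p.comp (X + C a))
    rw [hMa, comp_assoc] at this
    simpa using this
  refine ⟨a, ha0, ρ₁ + (ENNReal.ofReal c) • Measure.dirac a, ?_, ?_, ?_, ?_⟩
  · rw [Measure.add_apply, Measure.smul_apply, Measure.dirac_apply' _ measurableSet_Iio,
      Measure.map_apply hmeas measurableSet_Iio]
    have : (fun t : ℝ => t + a) ⁻¹' Set.Iio a = Set.Iio 0 := by ext; simp
    rw [this, hρ0]
    simp
  · intro k
    refine Integrable.add_measure ?_ ?_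
    · simpa using hρ₁m (X ^ k)
    · exact (integrable_dirac (by simp)).smul_measure ENNReal.ofReal_ne_top
  · intro k
    have i1 := hρ₁m (X ^ k)
    have i2 := hρ₁i (X ^ k)
    rw [hLa] at i2
    simp only [eval_pow, eval_X] at i1 i2
    rw [integral_add_measure i1 ((integrable_dirac (by simp)).smul_measure ENNReal.ofReal_ne_top),
      integral_smul_measure, integral_dirac, i2, ENNReal.toReal_ofReal hc0.le, smul_eq_mul]
    ring
  · intro h
    rw [← h] at haα
    simp at haα
    have := haα.2
    linarith

end PartC3

section PartD

open MvPolynomial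

section Fischer
variable {d : ℕ}

/-- multi-index factorial -/
noncomputable def mfact (α : Fin d →₀ ℕ) : ℝ := ∏ i, ((α i).factorial : ℝ)

theorem mfact_pos (α : Fin d →₀ ℕ) : 0 < mfact α :=
  Finset.prod_pos fun i _ => by positivity

theorem mfact_add_single (α : Fin d →₀ ℕ) (i : Fin d) :
    mfact (α + Finsupp.single i 1) = (α i + 1) * mfact α := by
  unfold mfact
  rw [← Finset.mul_prod_erase _ _ (Finset.mem_univ i),
    ← Finset.mul_prod_erase _ (fun j => ((α j).factorial : ℝ)) (Finset.mem_univ i)]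
  rw [← mul_assoc]
  congr 1
  · simp [Nat.factorial_succ]
  · apply Finset.prod_congr rfl
    intro j hj
    have : i ≠ j := (Finset.ne_of_mem_erase hj).symm
    simp [this]

/-- The Fischer form -/
noncomputable def fisch : MvPolynomial (Fin d) ℝ →ₗ[ℝ] MvPolynomial (Fin d) ℝ →ₗ[ℝ] ℝ :=
  (basisMonomials (Fin d) ℝ).constr ℝ (fun α => mfact α • lcoeff ℝ α)

theorem fisch_monomial (α : Fin d →₀ ℕ) (c : ℝ) (Q : MvPolynomial (Fin d) ℝ) :
    fisch (monomial α c) Q = c * (mfact α * coeff α Q) := by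
  have : monomial α c = c • (basisMonomials (Fin d) ℝ α) := by
    rw [coe_basisMonomials, smul_monomial, smul_eq_mul, mul_one]
  rw [this, map_smul, fisch, Module.Basis.constr_basis]
  simp

theorem fisch_adj (i : Fin d) (P Q : MvPolynomial (Fin d) ℝ) :
    fisch (X i * P) Q = fisch P (pderiv i Q) := by
  induction P using MvPolynomial.induction_on' with
  | add p q hp hq => rw [mul_add, map_add, map_add, LinearMap.add_apply, LinearMap.add_apply, hp, hq]
  | monomial α c =>
    rw [X, monomial_mul, one_mul, fisch_monomial, fisch_monomial, add_comm, mfact_add_single]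
    congr 1
    rw [mul_comm ((α i : ℝ) + 1), mul_assoc]
    congr 1
    induction Q using MvPolynomial.induction_on' with
    | add p q hp hq => rw [map_add, coeff_add, coeff_add, mul_add, hp, hq]
    | monomial β b =>
      rw [pderiv_monomial, coeff_monomial, coeff_monomial]
      by_cases h : β = α + Finsupp.single i 1
      · subst h
        simp [mul_comm]
      · rw [if_neg h]
        by_cases hβ : β i = 0
        · simp [hβ]
        · rw [if_neg]
          · simp
          · intro h2
            apply h
            rw [← h2]
            ext j
            by_cases hj : i = j
            · subst hj; simp; omega
            · simp [hj]

theorem fisch_self (P : MvPolynomial (Fin d) ℝ) (h : fisch P P = 0) : P = 0 := by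
  have key : ∀ Q : MvPolynomial (Fin d) ℝ, fisch P Q
      = ∑ α ∈ P.support, coeff α P * (mfact α * coeff α Q) := by
    intro Q
    conv_lhs => rw [← support_sum_monomial_coeff P]
    rw [map_sum, LinearMap.sum_apply]
    simp_rw [fisch_monomial]
  rw [key] at h
  have hnn : ∀ α ∈ P.support, 0 ≤ coeff α P * (mfact α * coeff α P) := by
    intro α _
    have := mfact_pos α
    have := mul_nonneg this.le (mul_self_nonneg (coeff α P))
    linarith
  rw [Finset.sum_eq_zero_iff_of_nonneg hnn] at h
  ext α
  rw [coeff_zero]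
  by_contra hne
  have := h α (mem_support_iff.mpr hne)
  have h2 := mfact_pos α
  rcases mul_eq_zero.mp this with h3 | h3
  · exact hne h3
  · rcases mul_eq_zero.mp h3 with h4 | h4
    · exact h2.ne' h4
    · exact hne h4

/-- Laplacian -/
noncomputable def lap : MvPolynomial (Fin d) ℝ →ₗ[ℝ] MvPolynomial (Fin d) ℝ :=
  ∑ i, (pderiv i).toLinearMap ∘ₗ (pderiv i).toLinearMap

theorem lap_apply (P : MvPolynomial (Fin d) ℝ) : lap P = ∑ i, pderiv i (pderiv i P) := by
  simp [lap, LinearMap.sum_apply]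

/-- the real polynomial `|x|²` -/
noncomputable def nsq : MvPolynomial (Fin d) ℝ := ∑ i, X i ^ 2

theorem fisch_lap (P Q : MvPolynomial (Fin d) ℝ) : fisch (nsq * P) Q = fisch P (lap Q) := by
  rw [lap_apply, nsq, Finset.sum_mul, map_sum, LinearMap.sum_apply, map_sum]
  apply Finset.sum_congr rfl
  intro i _
  rw [pow_two, mul_assoc, fisch_adj, fisch_adj]

theorem lap_nsq_inj (hd : 1 ≤ d) (P : MvPolynomial (Fin d) ℝ) (h : lap (nsq * P) = 0) : P = 0 := by
  have h1 : fisch (nsq * P) (nsq * P) = 0 := by rw [fisch_lap, h, map_zero]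
  have h2 := fisch_self _ h1
  rcases mul_eq_zero.mp h2 with h3 | h3
  · exfalso
    have := congrArg (eval (fun _ => (1:ℝ))) h3
    simp [nsq] at this
    omega
  · exact h3

theorem nsq_homog : (nsq (d := d)).IsHomogeneous 2 :=
  IsHomogeneous.sum _ _ _ fun i _ => by simpa using (isHomogeneous_X ℝ i).pow 2

theorem lap_homog {n : ℕ} {P : MvPolynomial (Fin d) ℝ} (h : P.IsHomogeneous (n + 2)) :
    (lap P).IsHomogeneous n := by
  rw [lap_apply]
  exact IsHomogeneous.sum _ _ _ fun i _ => by simpa using (h.pderiv (i := i)).pderiv (i := i)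

instance homog_fin (n : ℕ) : Module.Finite ℝ (homogeneousSubmodule (Fin d) ℝ n) := by
  exact Module.Finite.iff_fg.mpr (homogeneousSubmodule_fg (Fin d) ℝ n)

theorem fischer_step (hd : 1 ≤ d) (n : ℕ) (P : MvPolynomial (Fin d) ℝ) (hP : P.IsHomogeneous (n + 2)) :
    ∃ Q : MvPolynomial (Fin d) ℝ, Q.IsHomogeneous n ∧ lap (P - nsq * Q) = 0 := by
  let T : homogeneousSubmodule (Fin d) ℝ n →ₗ[ℝ] homogeneousSubmodule (Fin d) ℝ n :=
    { toFun := fun Q => ⟨lap (nsq * (Q : MvPolynomial (Fin d) ℝ)), by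
        have := nsq_homog.mul Q.2
        rw [add_comm] at this
        exact lap_homog this⟩
      map_add' := fun Q R => by ext1; simp [mul_add]
      map_smul' := fun c Q => by ext1; simp }
  have hinj : Function.Injective T := by
    rw [← LinearMap.ker_eq_bot, LinearMap.ker_eq_bot']
    intro Q hQ
    ext1
    exact lap_nsq_inj hd _ (congrArg Subtype.val hQ)
  obtain ⟨Q, hQ⟩ := LinearMap.injective_iff_surjective.mp hinj ⟨lap P, lap_homog hP⟩
  refine ⟨Q, Q.2, ?_⟩
  rw [map_sub, sub_eq_zero]
  exact (congrArg Subtype.val hQ).symm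

theorem fischer_homog (hd : 1 ≤ d) (S : Submodule ℝ (MvPolynomial (Fin d) ℝ))
    (hS : ∀ (j k : ℕ) (H : MvPolynomial (Fin d) ℝ), lap H = 0 → H.IsHomogeneous k → nsq ^ j * H ∈ S)
    (n : ℕ) : ∀ (j : ℕ) (P : MvPolynomial (Fin d) ℝ), P.IsHomogeneous n → nsq ^ j * P ∈ S := by
  induction n using Nat.strong_induction_on with
  | _ n ih =>
    intro j P hP
    by_cases hn : n < 2
    · apply hS j n P _ hP
      rw [lap_apply]
      apply Finset.sum_eq_zero
      intro i _
      have h1 : (pderiv i P).IsHomogeneous 0 := by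
        have := hP.pderiv (i := i)
        rwa [show n - 1 = 0 by omega] at this
      rw [← totalDegree_zero_iff_isHomogeneous, totalDegree_eq_zero_iff_eq_C] at h1
      rw [h1, pderiv_C]
    · obtain ⟨m, rfl⟩ : ∃ m, n = m + 2 := ⟨n - 2, by omega⟩
      obtain ⟨Q, hQ, hl⟩ := fischer_step hd m P hP
      have h1 := hS j (m + 2) _ hl (hP.sub (by
        have := nsq_homog.mul hQ
        rwa [add_comm] at this))
      have h2 := ih m (by omega) (j + 1) Q hQ
      have := S.add_mem h1 h2
      convert this using 1
      ring

theorem fischer (hd : 1 ≤ d) (S : Submodule ℝ (MvPolynomial (Fin d) ℝ))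
    (hS : ∀ (j k : ℕ) (H : MvPolynomial (Fin d) ℝ), lap H = 0 → H.IsHomogeneous k → nsq ^ j * H ∈ S)
    (P : MvPolynomial (Fin d) ℝ) : P ∈ S := by
  rw [← sum_homogeneousComponent P]
  apply Submodule.sum_mem
  intro i _
  have := fischer_homog hd S hS i 0 _ (homogeneousComponent_isHomogeneous i P)
  simpa using this

end Fischer

end PartD


open MeasureTheory MvPolynomial Metric
open scoped ComplexOrder ENNReal

noncomputable section

section E1
open Filter
open scoped BoundedContinuousFunction CompactlySupported Topology

theorem eval_cont {d : ℕ} (P : MvPolynomial (Fin d) ℝ) :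
    Continuous (fun x : E d => eval (fun i => x i) P) :=
  (MvPolynomial.continuous_eval P).comp (by fun_prop)

theorem radial_cont {d : ℕ} (P : MvPolynomial (Fin d) ℝ) {h : ℝ → ℝ} (hc : Continuous h) :
    Continuous (fun x : E d => h ‖x‖ * eval (fun i => x i) P) := by
  have := eval_cont P
  fun_prop

theorem radial_supp {d : ℕ} (P : MvPolynomial (Fin d) ℝ) {h : ℝ → ℝ}
    (hs : HasCompactSupport h) :
    HasCompactSupport (fun x : E d => h ‖x‖ * eval (fun i => x i) P) := by
  obtain ⟨R, hR⟩ := hs.isCompact.isBounded.subset_closedBall 0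
  apply HasCompactSupport.of_support_subset_isCompact (isCompact_closedBall (0 : E d) R)
  intro x hx
  have h1 : h ‖x‖ ≠ 0 := fun h0 => hx (by simp [h0])
  have := hR (subset_tsupport _ h1)
  simpa using this

theorem radial_int {d : ℕ} (P : MvPolynomial (Fin d) ℝ) {h : ℝ → ℝ} (hc : Continuous h)
    (hs : HasCompactSupport h) (α : Measure (E d)) [IsFiniteMeasure α] :
    Integrable (fun x : E d => h ‖x‖ * eval (fun i => x i) P) α :=
  (radial_cont P hc).integrable_of_hasCompactSupport (radial_supp P hs)

/-- cutoffs -/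
def cut (n : ℕ) (t : ℝ) : ℝ := max 0 (min 1 ((n : ℝ) + 1 - |t|))

theorem cut_cont (n : ℕ) : Continuous (cut n) := by unfold cut; fun_prop

theorem cut_supp (n : ℕ) : HasCompactSupport (cut n) := by
  apply HasCompactSupport.of_support_subset_isCompact (isCompact_closedBall (0:ℝ) (n + 1))
  intro x hx
  rw [mem_closedBall_zero_iff, Real.norm_eq_abs]
  by_contra hlt
  push Not at hlt
  apply hx
  unfold cut
  rw [max_eq_left]
  exact (min_le_right _ _).trans (by linarith)

theorem cut_one {n : ℕ} {t : ℝ} (h : |t| ≤ n) : cut n t = 1 := by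
  unfold cut
  rw [min_eq_left (by linarith), max_eq_right zero_le_one]

theorem cut_bd (n : ℕ) (t : ℝ) : ‖cut n t‖ ≤ 1 := by
  unfold cut
  rw [Real.norm_of_nonneg (le_max_left _ _)]
  exact max_le zero_le_one (min_le_left _ _)

theorem ext_of_radial_poly {d : ℕ} {α β : Measure (E d)} [IsFiniteMeasure α] [IsFiniteMeasure β]
    (H : ∀ h : ℝ → ℝ, Continuous h → HasCompactSupport h → ∀ P : MvPolynomial (Fin d) ℝ,
      ∫ x, h ‖x‖ * eval (fun i => x i) P ∂α = ∫ x, h ‖x‖ * eval (fun i => x i) P ∂β) :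
    α = β := by
  let S : Set (E d →ᵇ ℝ) := {f | ∃ h : ℝ → ℝ, Continuous h ∧ HasCompactSupport h ∧
    ∃ P : MvPolynomial (Fin d) ℝ, ∀ x, f x = h ‖x‖ * eval (fun i => x i) P}
  have hmk : ∀ (h : ℝ → ℝ) (P : MvPolynomial (Fin d) ℝ), Continuous h → HasCompactSupport h →
      ∃ f ∈ S, ∀ x, f x = h ‖x‖ * eval (fun i => x i) P := by
    intro h P hc hs
    obtain ⟨c, hcb⟩ := (radial_supp P hs).exists_bound_of_continuous (radial_cont P hc)
    refine ⟨BoundedContinuousFunction.ofNormedAddCommGroup _ (radial_cont P hc) c hcb,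
      ⟨h, hc, hs, P, fun x => rfl⟩, fun x => rfl⟩
  let A : StarSubalgebra ℝ (E d →ᵇ ℝ) := ⟨Algebra.adjoin ℝ S, by
    intro a ha
    rwa [show star a = a by ext x; simp]⟩
  have h1 : ∫ _, (1:ℝ) ∂α = ∫ _, (1:ℝ) ∂β := by
    have key : ∀ (γ : Measure (E d)) [IsFiniteMeasure γ], Tendsto (fun n : ℕ =>
        ∫ x : E d, cut n ‖x‖ * eval (fun i => x i) (1 : MvPolynomial (Fin d) ℝ) ∂γ) atTop
        (𝓝 (∫ _, (1:ℝ) ∂γ)) := by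
      intro γ _
      refine tendsto_integral_of_dominated_convergence (fun _ => 1) ?_ (integrable_const _) ?_ ?_
      · intro n
        exact (radial_cont 1 (cut_cont n)).aestronglyMeasurable
      · intro n
        refine Eventually.of_forall fun x => ?_
        simpa using cut_bd n ‖x‖
      · refine Eventually.of_forall fun x => ?_
        apply tendsto_const_nhds.congr'
        obtain ⟨N, hN⟩ := exists_nat_ge ‖x‖
        filter_upwards [eventually_ge_atTop N] with n hn
        rw [cut_one]
        · simp
        · rw [abs_of_nonneg (norm_nonneg _)]
          exact hN.trans (by exact_mod_cast hn)
    refine tendsto_nhds_unique (key α) ((key β).congr fun n => ?_)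
    exact (H _ (cut_cont n) (cut_supp n) 1).symm
  refine ext_of_forall_mem_subalgebra_integral_eq_of_polish (𝕜 := ℝ) (A := A) ?_ ?_
  · intro x y hxy
    obtain ⟨i, hi⟩ : ∃ i, x i ≠ y i := by
      by_contra hcon
      push Not at hcon
      exact hxy (by ext i; exact hcon i)
    obtain ⟨N, hN⟩ := exists_nat_ge (max ‖x‖ ‖y‖)
    obtain ⟨f, hfS, hf⟩ := hmk (cut N) (X i) (cut_cont N) (cut_supp N)
    refine ⟨f, ⟨(BoundedContinuousFunction.toContinuousMapStarₐ ℝ f),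
      ⟨f, Algebra.subset_adjoin hfS, rfl⟩, rfl⟩, ?_⟩
    rw [hf, hf, cut_one, cut_one]
    · simpa using hi
    · rw [abs_of_nonneg (norm_nonneg _)]; exact (le_max_right _ _).trans hN
    · rw [abs_of_nonneg (norm_nonneg _)]; exact (le_max_left _ _).trans hN
  · intro g hg
    replace hg : g ∈ Algebra.adjoin ℝ S := hg
    rw [← Subalgebra.mem_toSubmodule, Algebra.adjoin_eq_span] at hg
    induction hg using Submodule.span_induction with
    | mem f hf =>
      have : f = 1 ∨ f ∈ S := by
        induction hf using Submonoid.closure_induction with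
        | mem f hf => exact Or.inr hf
        | one => exact Or.inl rfl
        | mul f f' _ _ h h' =>
          rcases h with rfl | ⟨h, hc, hs, P, hf⟩
          · simpa using h'
          · rcases h' with rfl | ⟨h', hc', hs', P', hf'⟩
            · right; exact ⟨h, hc, hs, P, by simpa using hf⟩
            · right
              refine ⟨fun t => h t * h' t, hc.mul hc', hs.mul_right, P * P', fun x => ?_⟩
              rw [BoundedContinuousFunction.mul_apply, hf, hf', eval_mul]
              ring
      rcases this with rfl | ⟨h, hc, hs, P, hf⟩
      · simpa using h1
      · simp_rw [hf]
        exact H h hc hs P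
    | zero => simp
    | add f f' _ _ h h' =>
      simp only [BoundedContinuousFunction.coe_add, Pi.add_apply]
      rw [integral_add (f.integrable _) (f'.integrable _), integral_add (f.integrable _) (f'.integrable _),
        h, h']
    | smul c f _ h =>
      simp only [BoundedContinuousFunction.coe_smul, smul_eq_mul]
      rw [integral_const_mul, integral_const_mul, h]

/-! Jordan decompositions -/

theorem jordan_add {Ω : Type*} [MeasurableSpace Ω] {σ : SignedMeasure Ω} {α β : Measure Ω}
    [IsFiniteMeasure α] [IsFiniteMeasure β]
    (h : σ = α.toSignedMeasure - β.toSignedMeasure) :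
    σ.toJordanDecomposition.posPart + β = σ.toJordanDecomposition.negPart + α := by
  have h1 := SignedMeasure.toSignedMeasure_toJordanDecomposition σ
  rw [JordanDecomposition.toSignedMeasure] at h1
  rw [← Measure.toSignedMeasure_eq_toSignedMeasure_iff, Measure.toSignedMeasure_add,
    Measure.toSignedMeasure_add]
  rw [← h1] at h
  have := sub_eq_sub_iff_add_eq_add.mp h
  rw [this, add_comm]

theorem jordan_pos_le {Ω : Type*} [MeasurableSpace Ω] {σ : SignedMeasure Ω} {α β : Measure Ω}
    [IsFiniteMeasure α] [IsFiniteMeasure β]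
    (h : σ = α.toSignedMeasure - β.toSignedMeasure) :
    σ.toJordanDecomposition.posPart ≤ α := by
  have h1 := jordan_add h
  obtain ⟨A, hA, hp, hn⟩ := σ.toJordanDecomposition.mutuallySingular
  rw [Measure.le_iff]
  intro s hs
  calc σ.toJordanDecomposition.posPart s
      ≤ σ.toJordanDecomposition.posPart (s ∩ A) + σ.toJordanDecomposition.posPart (s ∩ Aᶜ) :=
        measure_le_inter_add_sdiff _ _ _
    _ ≤ σ.toJordanDecomposition.posPart A + σ.toJordanDecomposition.posPart (s ∩ Aᶜ) := by
        gcongr; exact Set.inter_subset_right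
    _ = σ.toJordanDecomposition.posPart (s ∩ Aᶜ) := by rw [hp, zero_add]
    _ ≤ (σ.toJordanDecomposition.posPart + β) (s ∩ Aᶜ) := by
        rw [Measure.add_apply]; exact le_self_add
    _ = σ.toJordanDecomposition.negPart (s ∩ Aᶜ) + α (s ∩ Aᶜ) := by rw [h1, Measure.add_apply]
    _ ≤ σ.toJordanDecomposition.negPart Aᶜ + α s := by
        gcongr
        · exact Set.inter_subset_right
        · exact Set.inter_subset_left
    _ = α s := by rw [hn, zero_add]

theorem jordan_neg_le {Ω : Type*} [MeasurableSpace Ω] {σ : SignedMeasure Ω} {α β : Measure Ω}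
    [IsFiniteMeasure α] [IsFiniteMeasure β]
    (h : σ = α.toSignedMeasure - β.toSignedMeasure) :
    σ.toJordanDecomposition.negPart ≤ β := by
  have h' : -σ = β.toSignedMeasure - α.toSignedMeasure := by rw [h]; abel
  have := jordan_pos_le h'
  rwa [SignedMeasure.toJordanDecomposition_neg, JordanDecomposition.neg_posPart] at this

theorem sInt_eq {Ω G : Type*} [MeasurableSpace Ω] [NormedAddCommGroup G] [NormedSpace ℝ G]
    {σ : SignedMeasure Ω} {α β : Measure Ω}
    [IsFiniteMeasure α] [IsFiniteMeasure β]
    (h : σ = α.toSignedMeasure - β.toSignedMeasure) {f : Ω → G} (hα : Integrable f α)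
    (hβ : Integrable f β) : sInt σ f = ∫ x, f x ∂α - ∫ x, f x ∂β := by
  have h1 := congrArg (fun m => ∫ x, f x ∂m) (jordan_add h)
  rw [integral_add_measure (hα.mono_measure (jordan_pos_le h)) hβ,
    integral_add_measure (hβ.mono_measure (jordan_neg_le h)) hα] at h1
  unfold sInt
  rw [sub_eq_sub_iff_add_eq_add, h1, add_comm]

theorem signed_eq {Ω : Type*} [MeasurableSpace Ω] {σ μ : SignedMeasure Ω}
    (h : σ.toJordanDecomposition.posPart + μ.toJordanDecomposition.negPart
      = μ.toJordanDecomposition.posPart + σ.toJordanDecomposition.negPart) : σ = μ := by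
  rw [← SignedMeasure.toSignedMeasure_toJordanDecomposition σ,
    ← SignedMeasure.toSignedMeasure_toJordanDecomposition μ, JordanDecomposition.toSignedMeasure,
    JordanDecomposition.toSignedMeasure, sub_eq_sub_iff_add_eq_add,
    ← Measure.toSignedMeasure_add, ← Measure.toSignedMeasure_add,
    Measure.toSignedMeasure_eq_toSignedMeasure_iff, h]

theorem tv_pos {Ω : Type*} [MeasurableSpace Ω] {G : Type*} [NormedAddCommGroup G]
    {σ : SignedMeasure Ω} {f : Ω → G} :
    Integrable f σ.totalVariation ↔ Integrable f σ.toJordanDecomposition.posPart ∧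
      Integrable f σ.toJordanDecomposition.negPart := by
  rw [SignedMeasure.totalVariation, integrable_add_measure]

end E1


section E2
open Filter
open scoped BoundedContinuousFunction CompactlySupported Topology
variable {d : ℕ}

theorem evalC_map (P : MvPolynomial (Fin d) ℝ) (x : E d) :
    evalC (P.map (algebraMap ℝ ℂ)) x = ((eval (fun i => x i) P : ℝ) : ℂ) := by
  unfold evalC
  rw [eval_map]
  induction P using MvPolynomial.induction_on with
  | C a => simp
  | add p q hp hq => simp [hp, hq]
  | mul_X p i hp => simp [hp]

theorem mom_real {σ : SignedMeasure (E d)} (h : IsMomentMeasure σ) (P : MvPolynomial (Fin d) ℝ) :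
    Integrable (fun x : E d => eval (fun i => x i) P) σ.totalVariation := by
  have := (h (P.map (algebraMap ℝ ℂ))).re
  simpa [evalC_map] using this

theorem sInt_real (σ : SignedMeasure (E d)) (P : MvPolynomial (Fin d) ℝ) :
    sInt σ (evalC (P.map (algebraMap ℝ ℂ))) =
      ((sInt σ (fun x : E d => eval (fun i => x i) P) : ℝ) : ℂ) := by
  unfold sInt
  simp_rw [evalC_map]
  rw [integral_complex_ofReal, integral_complex_ofReal]
  push_cast
  rfl

/-- The main component measure lemma. -/
theorem comp_measure (σp σn : Measure (E d)) [IsFiniteMeasure σp] [IsFiniteMeasure σn]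
    (Y : E d → ℝ) (hY : Continuous Y) (hp : Integrable Y σp) (hn : Integrable Y σn)
    (hpos : ∀ h : ℝ → ℝ, Continuous h → HasCompactSupport h → (∀ t, 0 ≤ h t) →
      0 ≤ ∫ x, h ‖x‖ * Y x ∂σp - ∫ x, h ‖x‖ * Y x ∂σn) :
    ∃ ρ : Measure ℝ, IsFiniteMeasure ρ ∧ ρ (Set.Iio 0) = 0 ∧ ∀ g : ℝ → ℝ, Continuous g →
      Integrable (fun x => g ‖x‖ * Y x) σp → Integrable (fun x => g ‖x‖ * Y x) σn →
      Integrable g ρ ∧ ∫ t, g t ∂ρ = ∫ x, g ‖x‖ * Y x ∂σp - ∫ x, g ‖x‖ * Y x ∂σn := by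
  -- weighted pushforward
  let pw : Measure (E d) → (E d → ℝ) → Measure ℝ := fun γ Z =>
    (γ.withDensity (fun x => ENNReal.ofReal (Z x))).map (fun x => ‖x‖)
  have hnm : Measurable (fun x : E d => ‖x‖) := by fun_prop
  have pw_fin : ∀ (γ : Measure (E d)) (Z : E d → ℝ), Integrable Z γ → IsFiniteMeasure (pw γ Z) := by
    intro γ Z hZ
    have : IsFiniteMeasure (γ.withDensity (fun x => ENNReal.ofReal (Z x))) :=
      isFiniteMeasure_withDensity_ofReal hZ.2
    exact Measure.isFiniteMeasure_map _ _
  have pw_iio : ∀ (γ : Measure (E d)) (Z : E d → ℝ), pw γ Z (Set.Iio 0) = 0 := by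
    intro γ Z
    rw [Measure.map_apply hnm measurableSet_Iio]
    have : (fun x : E d => ‖x‖) ⁻¹' Set.Iio 0 = ∅ := by
      ext x; simp
    rw [this, measure_empty]
  have pw_int : ∀ (γ : Measure (E d)) (Z : E d → ℝ), Continuous Z → ∀ g : ℝ → ℝ, Continuous g →
      Integrable (fun x => g ‖x‖ * Z x) γ → Integrable g (pw γ Z) := by
    intro γ Z hZ g hg hi
    rw [integrable_map_measure hg.aestronglyMeasurable hnm.aemeasurable,
      integrable_withDensity_iff_integrable_smul' (by fun_prop) (by simp)]
    refine hi.mono (Continuous.aestronglyMeasurable ?_) (Eventually.of_forall fun x => ?_)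
    · simp only [ENNReal.toReal_ofReal', Function.comp]; fun_prop
    · simp only [ENNReal.toReal_ofReal', Function.comp, norm_smul, norm_mul]
      rw [mul_comm]
      gcongr
      rw [Real.norm_of_nonneg (le_max_right _ _), Real.norm_eq_abs]
      exact max_le (le_abs_self _) (abs_nonneg _)
  have pw_val : ∀ (γ : Measure (E d)) (Z : E d → ℝ), Continuous Z → ∀ g : ℝ → ℝ, Continuous g →
      ∫ t, g t ∂(pw γ Z) = ∫ x, max (Z x) 0 * g ‖x‖ ∂γ := by
    intro γ Z hZ g hg
    rw [integral_map hnm.aemeasurable hg.aestronglyMeasurable,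
      integral_withDensity_eq_integral_toReal_smul (by fun_prop) (by simp)]
    simp [ENNReal.toReal_ofReal']
  have pw_diff : ∀ (γ : Measure (E d)) (Z : E d → ℝ), Continuous Z → ∀ g : ℝ → ℝ, Continuous g →
      Integrable (fun x => g ‖x‖ * Z x) γ →
      ∫ t, g t ∂(pw γ Z) - ∫ t, g t ∂(pw γ (-Z)) = ∫ x, g ‖x‖ * Z x ∂γ := by
    intro γ Z hZ g hg hi
    rw [pw_val γ Z hZ g hg, pw_val γ (-Z) hZ.neg g hg, ← integral_sub]
    · congr 1
      ext x
      rw [← sub_mul, mul_comm]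
      congr 1
      simp only [Pi.neg_apply]
      rcases le_total 0 (Z x) with h | h
      · rw [max_eq_left h, max_eq_right (by linarith)]; ring
      · rw [max_eq_right h, max_eq_left (by linarith)]; ring
    · refine hi.mono (Continuous.aestronglyMeasurable (by fun_prop)) (Eventually.of_forall fun x => ?_)
      simp only [norm_mul]
      rw [mul_comm]
      gcongr
      rw [Real.norm_of_nonneg (le_max_right _ _), Real.norm_eq_abs]
      exact max_le (le_abs_self _) (abs_nonneg _)
    · refine hi.mono (Continuous.aestronglyMeasurable (by fun_prop)) (Eventually.of_forall fun x => ?_)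
      simp only [norm_mul]
      rw [mul_comm]
      gcongr
      rw [Real.norm_of_nonneg (le_max_right _ _), Real.norm_eq_abs]
      exact max_le (neg_le_abs _) (abs_nonneg _)
  have := pw_fin σp Y hp
  have := pw_fin σn Y hn
  have := pw_fin σp (-Y) hp.neg
  have := pw_fin σn (-Y) hn.neg
  let A := pw σp Y + pw σn (-Y)
  let Bm := pw σp (-Y) + pw σn Y
  have hneg : ∀ (γ : Measure (E d)) (g : ℝ → ℝ), Integrable (fun x => g ‖x‖ * Y x) γ →
      Integrable (fun x => g ‖x‖ * (-Y) x) γ := by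
    intro γ g hg
    simpa using hg.neg
  have hA : ∀ g : ℝ → ℝ, Continuous g →
      Integrable (fun x => g ‖x‖ * Y x) σp → Integrable (fun x => g ‖x‖ * Y x) σn →
      Integrable g A ∧ Integrable g Bm ∧
        ∫ t, g t ∂A - ∫ t, g t ∂Bm = ∫ x, g ‖x‖ * Y x ∂σp - ∫ x, g ‖x‖ * Y x ∂σn := by
    intro g hg h1 h2
    have i1 := pw_int σp Y hY g hg h1
    have i2 := pw_int σn Y hY g hg h2
    have i3 := pw_int σp (-Y) hY.neg g hg (hneg _ g h1)
    have i4 := pw_int σn (-Y) hY.neg g hg (hneg _ g h2)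
    refine ⟨i1.add_measure i4, i3.add_measure i2, ?_⟩
    rw [integral_add_measure i1 i4, integral_add_measure i3 i2, ← pw_diff σp Y hY g hg h1,
      ← pw_diff σn Y hY g hg h2]
    ring
  have hcc : ∀ g : ℝ → ℝ, Continuous g → HasCompactSupport g → ∀ (γ : Measure (E d)),
      Integrable Y γ → Integrable (fun x => g ‖x‖ * Y x) γ := by
    intro g hg hs γ hγ
    obtain ⟨c, hc⟩ := hs.exists_bound_of_continuous hg
    exact hγ.bdd_mul (by fun_prop) (Eventually.of_forall fun x => hc ‖x‖)
  let Λ0 : C_c(ℝ, ℝ) →ₗ[ℝ] ℝ :=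
    { toFun := fun f => ∫ t, f t ∂A - ∫ t, f t ∂Bm
      map_add' := fun f g => by
        simp only [CompactlySupportedContinuousMap.coe_add, Pi.add_apply]
        rw [integral_add f.integrable g.integrable, integral_add f.integrable g.integrable]
        ring
      map_smul' := fun c f => by
        simp only [CompactlySupportedContinuousMap.coe_smul, Pi.smul_apply, smul_eq_mul,
          integral_const_mul, RingHom.id_apply]
        ring }
  let Λ : C_c(ℝ, ℝ) →ₚ[ℝ] ℝ := PositiveLinearMap.mk₀ Λ0 (fun f hf => by
    change 0 ≤ ∫ t, f t ∂A - ∫ t, f t ∂Bm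
    rw [(hA f f.continuous (hcc f f.continuous f.hasCompactSupport _ hp)
      (hcc f f.continuous f.hasCompactSupport _ hn)).2.2]
    exact hpos f f.continuous f.hasCompactSupport hf)
  let ρ := RealRMK.rieszMeasure Λ
  have hρ : ∀ f : C_c(ℝ, ℝ), ∫ x, f x ∂ρ = ∫ t, f t ∂A - ∫ t, f t ∂Bm :=
    fun f => RealRMK.integral_rieszMeasure Λ f
  have : IsFiniteMeasure A := by dsimp only [A]; infer_instance
  have : IsFiniteMeasure Bm := by dsimp only [Bm]; infer_instance
  have : ρ.Regular := RealRMK.regular_rieszMeasure Λ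
  have hsum : ρ + Bm = A := by
    have : IsFiniteMeasureOnCompacts (ρ + Bm) := ⟨fun K hK => by
      rw [Measure.add_apply]
      exact ENNReal.add_lt_top.2 ⟨hK.measure_lt_top, hK.measure_lt_top⟩⟩
    have : IsLocallyFiniteMeasure (ρ + Bm) :=
      isLocallyFiniteMeasure_of_isFiniteMeasureOnCompacts
    have : (ρ + Bm).Regular := inferInstance
    apply Measure.ext_of_integral_eq_on_compactlySupported
    intro f
    rw [integral_add_measure f.integrable f.integrable, hρ]
    ring
  have hle : ρ ≤ A := by rw [← hsum]; exact Measure.le_add_right le_rfl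
  refine ⟨ρ, isFiniteMeasure_of_le A hle, ?_, ?_⟩
  · have := hle (Set.Iio 0)
    simpa [A, pw_iio] using this
  · intro g hg h1 h2
    obtain ⟨i1, i2, i3⟩ := hA g hg h1 h2
    have i4 : Integrable g ρ := i1.mono_measure hle
    refine ⟨i4, ?_⟩
    rw [← i3, ← hsum, integral_add_measure i4 i2]
    ring

end E2


section E3
open Filter
open scoped Topology
variable {d : ℕ}

theorem hom_eval {P : MvPolynomial (Fin d) ℝ} {n : ℕ} (hP : P.IsHomogeneous n) (r : ℝ)
    (x : Fin d → ℝ) : eval (fun i => r * x i) P = r ^ n * eval x P := by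
  rw [eval_eq, eval_eq, Finset.mul_sum]
  refine Finset.sum_congr rfl fun m hm => ?_
  have h1 : m.degree = n := by
    have := hP (mem_support_iff.1 hm)
    rwa [Finsupp.degree_eq_weight_one]
  simp only [mul_pow, Finset.prod_mul_distrib]
  rw [Finset.prod_pow_eq_pow_sum]
  have : ∑ i ∈ m.support, m i = n := h1
  rw [this]; ring

theorem kernel_lemma (B : HarmonicBasis d) (k : ℕ) (l : Fin (B.a k)) (κ : Measure ℝ)
    (h0 : κ (Set.Iio 0) = 0) (hm : ∀ m : ℕ, Integrable (fun t => t ^ m) κ) :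
    ∃ α β : Measure (E d), IsFiniteMeasure α ∧ IsFiniteMeasure β ∧
      (∀ P : MvPolynomial (Fin d) ℝ, Integrable (fun x : E d => eval (fun i => x i) P) α ∧
        Integrable (fun x : E d => eval (fun i => x i) P) β) ∧
      ∀ (k' : ℕ) (l' : Fin (B.a k')) (g : ℝ → ℝ), Continuous g →
        Integrable (fun x => g ‖x‖ * B.Yf k' l' x) α →
        Integrable (fun x => g ‖x‖ * B.Yf k' l' x) β →
        ∫ x, g ‖x‖ * B.Yf k' l' x ∂α - ∫ x, g ‖x‖ * B.Yf k' l' x ∂β =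
          if k = k' ∧ (l : ℕ) = (l' : ℕ) then ∫ r, g r * r ^ k ∂κ else 0 := by
  have hfκ : IsFiniteMeasure κ := by
    have := hm 0
    simp only [pow_zero] at this
    rcases (integrable_const_iff (c := (1 : ℝ))).1 this with h | h
    · norm_num at h
    · exact h
  have hfs : IsFiniteMeasure (sphMeas d) := by unfold sphMeas; infer_instance
  let πm := κ.prod (sphMeas d)
  let φ : ℝ × sphere (0 : E d) 1 → E d := fun p => p.1 • (p.2 : E d)
  have hφ : Continuous φ := by dsimp only [φ]; fun_prop
  let Y : sphere (0 : E d) 1 → ℝ := fun θ => B.Yf k l θ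
  have hY : Continuous Y := (eval_cont (B.Y k l)).comp continuous_subtype_val
  let M : (sphere (0 : E d) 1 → ℝ) → Measure (E d) := fun Z =>
    (πm.withDensity (fun p => ENNReal.ofReal (Z p.2))).map φ
  have contint : ∀ f : sphere (0 : E d) 1 → ℝ, Continuous f → Integrable f (sphMeas d) := by
    intro f hf
    exact hf.integrable_of_hasCompactSupport (HasCompactSupport.of_compactSpace f)
  have M_int : ∀ Z : sphere (0 : E d) 1 → ℝ, Continuous Z → ∀ f : E d → ℝ, Continuous f →
      (Integrable f (M Z) ↔ Integrable (fun p => max (Z p.2) 0 * f (φ p)) πm) := by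
    intro Z hZ f hf
    rw [integrable_map_measure hf.aestronglyMeasurable hφ.aemeasurable,
      integrable_withDensity_iff_integrable_smul' (by fun_prop) (by simp)]
    simp [ENNReal.toReal_ofReal']
  have M_val : ∀ Z : sphere (0 : E d) 1 → ℝ, Continuous Z → ∀ f : E d → ℝ, Continuous f →
      ∫ x, f x ∂(M Z) = ∫ p, max (Z p.2) 0 * f (φ p) ∂πm := by
    intro Z hZ f hf
    rw [integral_map hφ.aemeasurable hf.aestronglyMeasurable,
      integral_withDensity_eq_integral_toReal_smul (by fun_prop) (by simp)]
    simp [ENNReal.toReal_ofReal']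
  have M_fin : ∀ Z : sphere (0 : E d) 1 → ℝ, Continuous Z → IsFiniteMeasure (M Z) := by
    intro Z hZ
    have : Integrable (fun p : ℝ × sphere (0 : E d) 1 => Z p.2) πm := by
      have := (integrable_const (μ := κ) (1 : ℝ)).mul_prod (contint Z hZ)
      simpa using this
    have : IsFiniteMeasure (πm.withDensity (fun p => ENNReal.ofReal (Z p.2))) :=
      isFiniteMeasure_withDensity_ofReal this.2
    exact Measure.isFiniteMeasure_map _ _
  have hscal : ∀ (P : MvPolynomial (Fin d) ℝ) (n : ℕ), P.IsHomogeneous n →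
      ∀ p : ℝ × sphere (0 : E d) 1, eval (fun i => (φ p) i) P =
        p.1 ^ n * eval (fun i => (p.2 : E d) i) P := by
    intro P n hP p
    rw [← hom_eval hP]
    rfl
  have M_poly : ∀ Z : sphere (0 : E d) 1 → ℝ, Continuous Z → ∀ P : MvPolynomial (Fin d) ℝ,
      Integrable (fun x : E d => eval (fun i => x i) P) (M Z) := by
    intro Z hZ P
    have : (fun x : E d => eval (fun i => x i) P) = fun x : E d =>
        ∑ n ∈ Finset.range (P.totalDegree + 1), eval (fun i => x i) (homogeneousComponent n P) := by
      ext x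
      conv_lhs => rw [← sum_homogeneousComponent P]
      simp
    rw [this]
    refine integrable_finsetSum _ fun n _ => ?_
    rw [M_int Z hZ _ (eval_cont _)]
    have hc : Continuous (fun θ : sphere (0 : E d) 1 =>
        eval (fun i => (θ : E d) i) (homogeneousComponent n P)) :=
      (eval_cont (homogeneousComponent n P)).comp continuous_subtype_val
    have h1 : Integrable (fun p : ℝ × sphere (0 : E d) 1 => p.1 ^ n * (max (Z p.2) 0 *
        eval (fun i => (p.2 : E d) i) (homogeneousComponent n P))) πm :=
      (hm n).mul_prod (contint (fun θ => max (Z θ) 0 *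
        eval (fun i => (θ : E d) i) (homogeneousComponent n P)) (by fun_prop))
    have h2 : (fun p : ℝ × sphere (0 : E d) 1 => max (Z p.2) 0 *
        eval (fun i => (φ p) i) (homogeneousComponent n P)) = fun p => p.1 ^ n * (max (Z p.2) 0 *
        eval (fun i => (p.2 : E d) i) (homogeneousComponent n P)) := by
      funext p
      rw [hscal _ n (homogeneousComponent_isHomogeneous n P)]
      ring
    rw [h2]
    exact h1
  clear_value M
  have hYn : Continuous (fun θ => - Y θ) := hY.neg
  refine ⟨M Y, M (fun θ => - Y θ), M_fin _ hY, M_fin _ hYn,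
    fun P => ⟨M_poly _ hY P, M_poly _ hYn P⟩, ?_⟩
  intro k' l' g hg i1 i2
  have hY' : Continuous (B.Yf k' l') := eval_cont (B.Y k' l')
  have hgY : Continuous (fun x : E d => g ‖x‖ * B.Yf k' l' x) := by fun_prop
  rw [M_int _ hY _ hgY] at i1
  rw [M_int _ hYn _ hgY] at i2
  rw [M_val _ hY _ hgY, M_val _ hYn _ hgY, ← integral_sub i1 i2]
  have e1 : ∀ p : ℝ × sphere (0 : E d) 1,
      max (Y p.2) 0 * (g ‖φ p‖ * B.Yf k' l' (φ p)) -
        max (-Y p.2) 0 * (g ‖φ p‖ * B.Yf k' l' (φ p)) =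
      (g |p.1| * p.1 ^ k') * (B.Yf k l p.2 * B.Yf k' l' p.2) := by
    intro p
    have h1 : ‖φ p‖ = |p.1| := by
      dsimp only [φ]
      rw [norm_smul, Real.norm_eq_abs, norm_eq_of_mem_sphere, mul_one]
    have h2 : B.Yf k' l' (φ p) = p.1 ^ k' * B.Yf k' l' p.2 := hscal _ k' (B.homogeneous k' l') p
    have h3 : max (Y p.2) 0 - max (-Y p.2) 0 = B.Yf k l p.2 := by
      change _ = Y p.2
      rcases le_total 0 (Y p.2) with h | h
      · rw [max_eq_left h, max_eq_right (by linarith)]; ring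
      · rw [max_eq_right h, max_eq_left (by linarith)]; ring
    rw [h1, h2, ← sub_mul, h3]
    ring
  simp_rw [e1]
  dsimp only [πm]
  rw [integral_prod_mul (fun r : ℝ => g |r| * r ^ k')
    (fun θ : sphere (0 : E d) 1 => B.Yf k l θ * B.Yf k' l' θ)]
  have := B.orthonormal k k' l l'
  unfold HarmonicBasis.Yf
  rw [this]
  split_ifs with h
  · rw [mul_one, ← h.1]
    refine integral_congr_ae ?_
    have : ∀ᵐ r ∂κ, ¬ r < 0 := by
      rw [ae_iff]; simpa [Set.Iio] using h0
    filter_upwards [this] with r hr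
    rw [abs_of_nonneg (not_lt.1 hr)]
  · simp

/-- The weighted version. -/
theorem kernel_lemma' (B : HarmonicBasis d) (k : ℕ) (l : Fin (B.a k)) (η : Measure ℝ)
    (h0 : η (Set.Iio 0) = 0) (h00 : k ≠ 0 → η {0} = 0)
    (hm : ∀ N : ℕ, ∫⁻ r, (ENNReal.ofReal r) ^ N * ((ENNReal.ofReal r) ^ k)⁻¹ ∂η < ⊤) :
    ∃ α β : Measure (E d), IsFiniteMeasure α ∧ IsFiniteMeasure β ∧
      (∀ P : MvPolynomial (Fin d) ℝ, Integrable (fun x : E d => eval (fun i => x i) P) α ∧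
        Integrable (fun x : E d => eval (fun i => x i) P) β) ∧
      ∀ (k' : ℕ) (l' : Fin (B.a k')) (g : ℝ → ℝ), Continuous g →
        Integrable (fun x => g ‖x‖ * B.Yf k' l' x) α →
        Integrable (fun x => g ‖x‖ * B.Yf k' l' x) β →
        ∫ x, g ‖x‖ * B.Yf k' l' x ∂α - ∫ x, g ‖x‖ * B.Yf k' l' x ∂β =
          if k = k' ∧ (l : ℕ) = (l' : ℕ) then ∫ r, g r ∂η else 0 := by
  have hmeas : Measurable (fun r : ℝ => ((ENNReal.ofReal r) ^ k)⁻¹) := by fun_prop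
  have hpos : ∀ᵐ r ∂η, 0 ≤ r := by
    rw [ae_iff]; simpa [Set.Iio] using h0
  have hne : ∀ᵐ r ∂η, r ^ k ≠ 0 := by
    by_cases hk : k = 0
    · simp [hk]
    · have := h00 hk
      rw [ae_iff]
      simpa [hk] using this
  have hlt : ∀ᵐ r ∂η, ((ENNReal.ofReal r) ^ k)⁻¹ < ⊤ := by
    filter_upwards [hpos, hne] with r h1 h2
    rw [← ENNReal.ofReal_pow h1, ENNReal.inv_lt_top, ENNReal.ofReal_pos]
    exact lt_of_le_of_ne (by positivity) (Ne.symm h2)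
  obtain ⟨α, β, ha, hb, hP, hK⟩ := kernel_lemma B k l
    (η.withDensity (fun r => ((ENNReal.ofReal r) ^ k)⁻¹))
    (withDensity_absolutelyContinuous _ _ h0) (by
      intro m
      refine ⟨by fun_prop, ?_⟩
      rw [hasFiniteIntegral_iff_enorm, lintegral_withDensity_eq_lintegral_mul _ hmeas (by fun_prop)]
      refine lt_of_eq_of_lt (lintegral_congr_ae ?_) (hm m)
      filter_upwards [hpos] with r hr
      simp only [Pi.mul_apply]
      rw [mul_comm, enorm_pow, Real.enorm_of_nonneg hr])
  refine ⟨α, β, ha, hb, hP, fun k' l' g hg i1 i2 => ?_⟩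
  rw [hK k' l' g hg i1 i2]
  congr 1
  rw [integral_withDensity_eq_integral_toReal_smul₀ hmeas.aemeasurable hlt]
  refine integral_congr_ae ?_
  filter_upwards [hpos, hne] with r h1 h2
  rw [ENNReal.toReal_inv, ENNReal.toReal_pow, ENNReal.toReal_ofReal h1, smul_eq_mul]
  field_simp

end E3


section E4
open Filter
open scoped Topology CompactlySupported
variable {d : ℕ}

theorem eval_nsq (x : E d) : eval (fun i => x i) (nsq : MvPolynomial (Fin d) ℝ) = ‖x‖ ^ 2 := by
  simp [nsq, EuclideanSpace.norm_sq_eq]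

theorem eval_nsqY (B : HarmonicBasis d) (m k : ℕ) (l : Fin (B.a k)) (x : E d) :
    eval (fun i => x i) (nsq ^ m * B.Y k l) = ‖x‖ ^ (2 * m) * B.Yf k l x := by
  rw [map_mul, map_pow, eval_nsq, ← pow_mul]; rfl

theorem fischer_basis (hd : 1 ≤ d) (B : HarmonicBasis d)
    (S : Submodule ℝ (MvPolynomial (Fin d) ℝ))
    (hS : ∀ (j k : ℕ) (l : Fin (B.a k)), nsq ^ j * B.Y k l ∈ S) (P : MvPolynomial (Fin d) ℝ) :
    P ∈ S := by
  refine fischer hd S (fun j k H h1 h2 => ?_) P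
  rw [lap_apply] at h1
  have h3 := B.complete k H h1 h2
  have h4 : Submodule.span ℝ (Set.range (B.Y k)) ≤
      S.comap (LinearMap.mulLeft ℝ (nsq ^ j : MvPolynomial (Fin d) ℝ)) := by
    rw [Submodule.span_le]
    rintro _ ⟨l, rfl⟩
    exact hS j k l
  exact h4 h3

theorem summ_each {B : HarmonicBasis d} {ν : (k : ℕ) → Fin (B.a k) → Measure ℝ}
    (hs : B.SummCond ν) (k : ℕ) (l : Fin (B.a k)) (N : ℕ) :
    ∫⁻ r, (ENNReal.ofReal r) ^ N * ((ENNReal.ofReal r) ^ k)⁻¹ ∂(ν k l) < ⊤ := by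
  refine lt_of_le_of_lt ?_ (hs N)
  refine le_trans ?_ (ENNReal.le_tsum k)
  exact Finset.single_le_sum (f := fun l => ∫⁻ r, (ENNReal.ofReal r) ^ N *
    ((ENNReal.ofReal r) ^ k)⁻¹ ∂(ν k l)) (fun _ _ => zero_le) (Finset.mem_univ l)

theorem summ_zero {k : ℕ} {η : Measure ℝ} (h : ∀ N : ℕ,
    ∫⁻ r, (ENNReal.ofReal r) ^ N * ((ENNReal.ofReal r) ^ k)⁻¹ ∂η < ⊤) (hk : k ≠ 0) : η {0} = 0 := by
  have h1 := ae_lt_top (by fun_prop) (h 0).ne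
  rw [ae_iff] at h1
  refine measure_mono_null ?_ h1
  rintro _ rfl
  simp [hk]

theorem summ_fin {k : ℕ} {η : Measure ℝ} (h0 : η (Set.Iio 0) = 0) (h : ∀ N : ℕ,
    ∫⁻ r, (ENNReal.ofReal r) ^ N * ((ENNReal.ofReal r) ^ k)⁻¹ ∂η < ⊤) : IsFiniteMeasure η := by
  constructor
  have h1 : ∫⁻ r, 1 ∂η = ∫⁻ r, (ENNReal.ofReal r) ^ k * ((ENNReal.ofReal r) ^ k)⁻¹ ∂η := by
    apply lintegral_congr_ae
    have hpos : ∀ᵐ r ∂η, 0 ≤ r := by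
      rw [ae_iff]; simpa [Set.Iio] using h0
    have hne : ∀ᵐ r ∂η, r ^ k ≠ 0 := by
      by_cases hk : k = 0
      · simp [hk]
      · have := summ_zero h hk
        rw [ae_iff]
        simpa [hk] using this
    filter_upwards [hpos, hne] with r h1 h2
    rw [ENNReal.mul_inv_cancel]
    · rw [← ENNReal.ofReal_pow h1, ne_eq, ENNReal.ofReal_eq_zero, not_le]
      exact lt_of_le_of_ne (by positivity) (Ne.symm h2)
    · simp
  rw [lintegral_one] at h1
  rw [h1]
  exact h k

theorem comp_signed {B : HarmonicBasis d} {σ : SignedMeasure (E d)} (hpp : B.PseudoPositive σ)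
    (hm : IsMomentMeasure σ) (k : ℕ) (l : Fin (B.a k)) :
    ∃ ρ : Measure ℝ, IsFiniteMeasure ρ ∧ ρ (Set.Iio 0) = 0 ∧ ∀ g : ℝ → ℝ, Continuous g →
      Integrable (fun x => g ‖x‖ * B.Yf k l x) σ.totalVariation →
      Integrable g ρ ∧ ∫ t, g t ∂ρ = sInt σ (fun x => g ‖x‖ * B.Yf k l x) := by
  have hY := tv_pos.1 (mom_real hm (B.Y k l))
  obtain ⟨ρ, h1, h2, h3⟩ := comp_measure σ.toJordanDecomposition.posPart
    σ.toJordanDecomposition.negPart (B.Yf k l) (eval_cont (B.Y k l)) hY.1 hY.2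
    (fun h hc hs hp => hpp k l h hc hs hp)
  exact ⟨ρ, h1, h2, fun g hg hi => h3 g hg (tv_pos.1 hi).1 (tv_pos.1 hi).2⟩

theorem tv_fin (σ : SignedMeasure (E d)) : IsFiniteMeasure σ.totalVariation := by
  unfold SignedMeasure.totalVariation; infer_instance

theorem eq_of_cc {α β : Measure ℝ} [IsFiniteMeasure α] [IsFiniteMeasure β]
    (h : ∀ f : ℝ → ℝ, Continuous f → HasCompactSupport f → ∫ t, f t ∂α = ∫ t, f t ∂β) : α = β :=
  Measure.ext_of_integral_eq_on_compactlySupported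
    (fun f => h f f.continuous f.hasCompactSupport)

theorem comp_nu {B : HarmonicBasis d} {μ : SignedMeasure (E d)} (hpp : B.PseudoPositive μ)
    (hm : IsMomentMeasure μ) {ν : (k : ℕ) → Fin (B.a k) → Measure ℝ}
    (hν : B.IsComponentFamily μ ν) (hs : B.SummCond ν) (k : ℕ) (l : Fin (B.a k)) :
    IsFiniteMeasure (ν k l) ∧ ∀ g : ℝ → ℝ, Continuous g →
      Integrable (fun x => g ‖x‖ * B.Yf k l x) μ.totalVariation →
      Integrable g (ν k l) ∧ ∫ t, g t ∂(ν k l) = sInt μ (fun x => g ‖x‖ * B.Yf k l x) := by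
  obtain ⟨ρ, h1, h2, h3⟩ := comp_signed hpp hm k l
  have hf : IsFiniteMeasure (ν k l) := summ_fin (hν k l).1 (summ_each hs k l)
  have := tv_fin μ
  have : ρ = ν k l := eq_of_cc fun f hc hs => by
    rw [(h3 f hc (radial_int (B.Y k l) hc hs _)).2, (hν k l).2 f hc hs]
  rw [← this]
  exact ⟨h1, h3⟩

theorem map_sqrt_sq {ρ : Measure ℝ} (h : ρ (Set.Iio 0) = 0) :
    (ρ.map (fun t => t ^ 2)).map Real.sqrt = ρ := by
  rw [Measure.map_map (by fun_prop) (by fun_prop)]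
  conv_rhs => rw [← Measure.map_id (μ := ρ)]
  apply Measure.map_congr
  have hpos : ∀ᵐ r ∂ρ, 0 ≤ r := by
    rw [ae_iff]; simpa [Set.Iio] using h
  filter_upwards [hpos] with r hr
  simp [Real.sqrt_sq hr]

theorem map_sq_sqrt {ρ : Measure ℝ} (h : ρ (Set.Iio 0) = 0) :
    (ρ.map Real.sqrt).map (fun t => t ^ 2) = ρ := by
  rw [Measure.map_map (by fun_prop) (by fun_prop)]
  conv_rhs => rw [← Measure.map_id (μ := ρ)]
  apply Measure.map_congr
  have hpos : ∀ᵐ r ∂ρ, 0 ≤ r := by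
    rw [ae_iff]; simpa [Set.Iio] using h
  filter_upwards [hpos] with r hr
  simp [Real.sq_sqrt hr]

theorem map_sq_iio (ρ : Measure ℝ) : (ρ.map (fun t => t ^ 2)) (Set.Iio 0) = 0 := by
  rw [Measure.map_apply (by fun_prop) measurableSet_Iio]
  convert measure_empty (μ := ρ)
  ext x
  simp [sq_nonneg]

theorem map_sq_int {ρ : Measure ℝ} {m : ℕ} :
    Integrable (fun t => t ^ m) (ρ.map (fun t => t ^ 2)) ↔ Integrable (fun t => t ^ (2 * m)) ρ := by
  rw [integrable_map_measure (by fun_prop) (by fun_prop)]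
  simp [Function.comp_def, pow_mul]

theorem map_sq_val {ρ : Measure ℝ} {m : ℕ} :
    ∫ t, t ^ m ∂(ρ.map (fun t => t ^ 2)) = ∫ t, t ^ (2 * m) ∂ρ := by
  rw [integral_map (by fun_prop) (by fun_prop)]
  simp [pow_mul]

theorem int_nsqY {σ : SignedMeasure (E d)} {B : HarmonicBasis d}
    (hm : IsMomentMeasure σ) (k : ℕ) (l : Fin (B.a k)) (m : ℕ) :
    Integrable (fun x => ‖x‖ ^ (2 * m) * B.Yf k l x) σ.totalVariation := by
  have := mom_real hm (nsq ^ m * B.Y k l)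
  simpa only [eval_nsqY] using this

theorem sInt_add {Ω : Type*} [MeasurableSpace Ω] {σ : SignedMeasure Ω} {f g : Ω → ℝ}
    (hf : Integrable f σ.totalVariation) (hg : Integrable g σ.totalVariation) :
    sInt σ (fun x => f x + g x) = sInt σ f + sInt σ g := by
  unfold sInt
  rw [tv_pos] at hf hg
  rw [integral_add hf.1 hg.1, integral_add hf.2 hg.2]
  ring

theorem sInt_smul {Ω : Type*} [MeasurableSpace Ω] {σ : SignedMeasure Ω} {f : Ω → ℝ} (c : ℝ) :
    sInt σ (fun x => c * f x) = c * sInt σ f := by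
  unfold sInt
  rw [integral_const_mul, integral_const_mul]
  ring

theorem backward (hd : 1 ≤ d) (B : HarmonicBasis d)
    (μ : SignedMeasure (E d)) (hpp : B.PseudoPositive μ) (hmom : IsMomentMeasure μ)
    (ν : (k : ℕ) → Fin (B.a k) → Measure ℝ) (hν : B.IsComponentFamily μ ν)
    (hsum : B.SummCond ν)
    (hD : ∀ (k : ℕ) (l : Fin (B.a k)),
          StieltjesDeterminate (Measure.map (fun t : ℝ => t ^ 2) (ν k l)))
    (σ : SignedMeasure (E d)) (hσ : B.PseudoPositive σ) (hσm : IsMomentMeasure σ)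
    (he : ∀ P : MvPolynomial (Fin d) ℂ, sInt σ (evalC P) = sInt μ (evalC P)) : σ = μ := by
  have ftσ := tv_fin σ
  have ftμ := tv_fin μ
  have her : ∀ P : MvPolynomial (Fin d) ℝ, sInt σ (fun x : E d => eval (fun i => x i) P) =
      sInt μ (fun x : E d => eval (fun i => x i) P) := by
    intro P
    have := he (P.map (algebraMap ℝ ℂ))
    rw [sInt_real, sInt_real] at this
    exact_mod_cast this
  have key : ∀ (k : ℕ) (l : Fin (B.a k)) (h : ℝ → ℝ), Continuous h → HasCompactSupport h →
      sInt σ (fun x => h ‖x‖ * B.Yf k l x) = sInt μ (fun x => h ‖x‖ * B.Yf k l x) := by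
    intro k l h hc hs
    obtain ⟨ρ, h1, h2, h3⟩ := comp_signed hσ hσm k l
    obtain ⟨h4, h5⟩ := comp_nu hpp hmom hν hsum k l
    have hmemb : ρ.map (fun t => t ^ 2) ∈ WSti ((ν k l).map (fun t => t ^ 2)) := by
      refine ⟨map_sq_iio ρ, fun m => ?_, fun m => ?_⟩
      · rw [map_sq_int]
        exact (h3 (fun t => t ^ (2 * m)) (by fun_prop) (int_nsqY hσm k l m)).1
      · rw [map_sq_val, map_sq_val,
          (h3 (fun t => t ^ (2 * m)) (by fun_prop) (int_nsqY hσm k l m)).2,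
          (h5 (fun t => t ^ (2 * m)) (by fun_prop) (int_nsqY hmom k l m)).2]
        have := her (nsq ^ m * B.Y k l)
        simpa only [eval_nsqY] using this
    have e1 := congrArg (Measure.map Real.sqrt) (hD k l _ hmemb)
    rw [map_sqrt_sq h2, map_sqrt_sq (hν k l).1] at e1
    rw [← (h3 h hc (radial_int (B.Y k l) hc hs _)).2, ← (h5 h hc (radial_int (B.Y k l) hc hs _)).2,
      e1]
  let S : Submodule ℝ (MvPolynomial (Fin d) ℝ) :=
    { carrier := {P | ∀ h : ℝ → ℝ, Continuous h → HasCompactSupport h →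
        sInt σ (fun x : E d => h ‖x‖ * eval (fun i => x i) P) =
          sInt μ (fun x : E d => h ‖x‖ * eval (fun i => x i) P)}
      add_mem' := by
        intro P Q hP hQ h hc hs
        simp only [map_add, mul_add]
        rw [sInt_add (radial_int P hc hs _) (radial_int Q hc hs _),
          sInt_add (radial_int P hc hs _) (radial_int Q hc hs _), hP h hc hs, hQ h hc hs]
      zero_mem' := by
        intro h hc hs
        simp [sInt]
      smul_mem' := by
        intro c P hP h hc hs
        simp only [smul_eval, mul_left_comm _ c]
        rw [sInt_smul, sInt_smul, hP h hc hs] }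
  have hS := fischer_basis hd B S (by
    intro j k l h hc hs
    have := key k l (fun t => h t * t ^ (2 * j)) (by fun_prop) hs.mul_right
    simp only [eval_nsqY, ← mul_assoc]
    exact this)
  apply signed_eq
  apply ext_of_radial_poly
  intro h hc hs P
  rw [integral_add_measure (radial_int P hc hs _) (radial_int P hc hs _),
    integral_add_measure (radial_int P hc hs _) (radial_int P hc hs _)]
  have := hS P h hc hs
  unfold sInt at this
  linarith

end E4


section E5
open Filter
open scoped Topology
variable {d : ℕ}

theorem cpoly_split (P : MvPolynomial (Fin d) ℂ) : ∃ Q R : MvPolynomial (Fin d) ℝ,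
    ∀ x : E d, evalC P x = ((eval (fun i => x i) Q : ℝ) : ℂ) +
      ((eval (fun i => x i) R : ℝ) : ℂ) * Complex.I := by
  unfold evalC
  induction P using MvPolynomial.induction_on with
  | C a => exact ⟨C a.re, C a.im, fun x => by simp⟩
  | add p q hp hq =>
    obtain ⟨Q, R, h1⟩ := hp
    obtain ⟨Q', R', h2⟩ := hq
    refine ⟨Q + Q', R + R', fun x => ?_⟩
    rw [map_add, h1, h2, map_add, map_add]
    push_cast
    ring
  | mul_X p i hp =>
    obtain ⟨Q, R, h1⟩ := hp
    refine ⟨Q * X i, R * X i, fun x => ?_⟩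
    rw [map_mul, h1, map_mul, map_mul, eval_X, eval_X]
    push_cast
    ring

theorem integrable_evalC {α : Measure (E d)}
    (h : ∀ P : MvPolynomial (Fin d) ℝ, Integrable (fun x : E d => eval (fun i => x i) P) α)
    (P : MvPolynomial (Fin d) ℂ) : Integrable (evalC P) α := by
  obtain ⟨Q, R, h1⟩ := cpoly_split P
  have : evalC P = fun x : E d => ((eval (fun i => x i) Q : ℝ) : ℂ) +
      ((eval (fun i => x i) R : ℝ) : ℂ) * Complex.I := funext h1
  rw [this]
  exact (h Q).ofReal.add ((h R).ofReal.mul_const _)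

theorem sInt_split {σ : SignedMeasure (E d)} (hm : IsMomentMeasure σ) {P : MvPolynomial (Fin d) ℂ}
    {Q R : MvPolynomial (Fin d) ℝ}
    (h : ∀ x : E d, evalC P x = ((eval (fun i => x i) Q : ℝ) : ℂ) +
      ((eval (fun i => x i) R : ℝ) : ℂ) * Complex.I) :
    sInt σ (evalC P) = ((sInt σ (fun x : E d => eval (fun i => x i) Q) : ℝ) : ℂ) +
      ((sInt σ (fun x : E d => eval (fun i => x i) R) : ℝ) : ℂ) * Complex.I := by
  have hQ := tv_pos.1 (mom_real hm Q)
  have hR := tv_pos.1 (mom_real hm R)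
  have key : ∀ α : Measure (E d), Integrable (fun x : E d => eval (fun i => x i) Q) α →
      Integrable (fun x : E d => eval (fun i => x i) R) α →
      ∫ x, evalC P x ∂α = ((∫ x : E d, eval (fun i => x i) Q ∂α : ℝ) : ℂ) +
        ((∫ x : E d, eval (fun i => x i) R ∂α : ℝ) : ℂ) * Complex.I := by
    intro α h1 h2
    simp_rw [h]
    have e1 : Integrable (fun x : E d => ((eval (fun i => x i) Q : ℝ) : ℂ)) α := h1.ofReal
    have e2 : Integrable (fun x : E d => ((eval (fun i => x i) R : ℝ) : ℂ) * Complex.I) α :=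
      h2.ofReal.mul_const _
    rw [integral_add e1 e2, integral_mul_const, integral_complex_ofReal, integral_complex_ofReal]
  unfold sInt
  rw [key _ hQ.1 hR.1, key _ hQ.2 hR.2]
  push_cast
  ring

theorem sqrt_pow_le {t : ℝ} (ht : 0 ≤ t) (N : ℕ) : (Real.sqrt t) ^ N ≤ 1 + t ^ N := by
  rcases le_total t 1 with h | h
  · have : Real.sqrt t ^ N ≤ 1 := pow_le_one₀ (Real.sqrt_nonneg _) (Real.sqrt_le_one.2 h)
    have : 0 ≤ t ^ N := by positivity
    linarith
  · have : Real.sqrt t ≤ t := by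
      rw [Real.sqrt_le_left ht]; nlinarith
    have := pow_le_pow_left₀ (Real.sqrt_nonneg t) this N
    linarith

theorem sqrt_meas_cond {a : ℝ} (ha : 0 < a) {ρ' : Measure ℝ} (h : ρ' (Set.Iio a) = 0)
    (hm : ∀ m : ℕ, Integrable (fun t => t ^ m) ρ') (k N : ℕ) :
    ∫⁻ r, (ENNReal.ofReal r) ^ N * ((ENNReal.ofReal r) ^ k)⁻¹ ∂(ρ'.map Real.sqrt) < ⊤ := by
  rw [lintegral_map (by fun_prop) (by fun_prop)]
  have hpos : ∀ᵐ r ∂ρ', a ≤ r := by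
    rw [ae_iff]; simpa [Set.Iio] using h
  have h1 : ∀ᵐ t ∂ρ', (ENNReal.ofReal (Real.sqrt t)) ^ N * ((ENNReal.ofReal (Real.sqrt t)) ^ k)⁻¹ ≤
      ENNReal.ofReal (1 + t ^ N) * ((ENNReal.ofReal (Real.sqrt a)) ^ k)⁻¹ := by
    filter_upwards [hpos] with t ht
    gcongr
    rw [← ENNReal.ofReal_pow (Real.sqrt_nonneg _)]
    exact ENNReal.ofReal_le_ofReal (sqrt_pow_le (ha.le.trans ht) N)
  refine (lintegral_mono_ae h1).trans_lt ?_
  rw [lintegral_mul_const _ (by fun_prop)]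
  refine ENNReal.mul_lt_top ?_ ?_
  · have h0 := hm 0
    simp only [pow_zero] at h0
    have : Integrable (fun t : ℝ => 1 + t ^ N) ρ' := h0.add (hm N)
    exact (hasFiniteIntegral_iff_ofReal (by
      filter_upwards [hpos] with t ht
      have : 0 ≤ t := ha.le.trans ht
      simp only [Pi.zero_apply]
      positivity)).1 this.2
  · rw [ENNReal.inv_lt_top]
    exact ENNReal.pow_pos (by simpa using ha) _

theorem forward (hd : 1 ≤ d) (B : HarmonicBasis d)
    (μ : SignedMeasure (E d)) (hpp : B.PseudoPositive μ) (hmom : IsMomentMeasure μ)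
    (ν : (k : ℕ) → Fin (B.a k) → Measure ℝ) (hν : B.IsComponentFamily μ ν)
    (hsum : B.SummCond ν)
    (hU : ∀ σ : SignedMeasure (E d), B.PseudoPositive σ → IsMomentMeasure σ →
        (∀ P : MvPolynomial (Fin d) ℂ, sInt σ (evalC P) = sInt μ (evalC P)) → σ = μ)
    (k : ℕ) (l : Fin (B.a k)) :
    StieltjesDeterminate (Measure.map (fun t : ℝ => t ^ 2) (ν k l)) := by
  intro τ hτ
  by_contra hne
  obtain ⟨τ0, τm, τe⟩ := hτ
  obtain ⟨nfin, nint⟩ := comp_nu hpp hmom hν hsum k l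
  have nmom : ∀ m : ℕ, Integrable (fun t => t ^ (2 * m)) (ν k l) := fun m =>
    (nint (fun t => t ^ (2 * m)) (by fun_prop) (int_nsqY hmom k l m)).1
  obtain ⟨a, ha, ρ', r0, rm, re, rne⟩ := theoremM (map_sq_iio (ν k l)) τ0
    (fun m => map_sq_int.2 (nmom m)) τm τe hne
  have r00 : ρ' (Set.Iio 0) = 0 := measure_mono_null (Set.Iio_subset_Iio ha.le) r0
  obtain ⟨ρ, hρ⟩ : ∃ ρ, ρ = ρ'.map Real.sqrt := ⟨_, rfl⟩
  have hρsq : ρ.map (fun t => t ^ 2) = ρ' := by rw [hρ, map_sq_sqrt r00]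
  have hcond : ∀ N : ℕ, ∫⁻ r, (ENNReal.ofReal r) ^ N * ((ENNReal.ofReal r) ^ k)⁻¹ ∂ρ < ⊤ := by
    rw [hρ]; exact sqrt_meas_cond ha r0 rm k
  have hρ0 : ρ (Set.Iio 0) = 0 := by
    rw [hρ, Measure.map_apply (by fun_prop) measurableSet_Iio]
    convert measure_empty (μ := ρ')
    ext x
    simp [Real.sqrt_nonneg]
  have hρfin : IsFiniteMeasure ρ := summ_fin hρ0 hcond
  have hρmom : ∀ m : ℕ, ∫ t, t ^ (2 * m) ∂ρ = ∫ t, t ^ (2 * m) ∂(ν k l) := by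
    intro m
    rw [← map_sq_val, ← map_sq_val, hρsq, re m]
  have hνc := summ_each hsum k l
  obtain ⟨α, β, fα, fβ, iαβ, vαβ⟩ := kernel_lemma' B k l ρ hρ0 (summ_zero hcond) hcond
  obtain ⟨α', β', fα', fβ', iαβ', vαβ'⟩ := kernel_lemma' B k l (ν k l) (hν k l).1
    (summ_zero hνc) hνc
  let p := μ.toJordanDecomposition.posPart
  let n := μ.toJordanDecomposition.negPart
  obtain ⟨σ, hσ⟩ : ∃ σ : SignedMeasure (E d), σ =
    (p + α + β').toSignedMeasure - (n + β + α').toSignedMeasure := ⟨_, rfl⟩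
  have hσi : ∀ f : E d → ℝ, Integrable f μ.totalVariation → Integrable f α → Integrable f β →
      Integrable f α' → Integrable f β' → sInt σ f = sInt μ f + (∫ x, f x ∂α - ∫ x, f x ∂β) -
        (∫ x, f x ∂α' - ∫ x, f x ∂β') := by
    intro f i1 i2 i3 i4 i5
    rw [tv_pos] at i1
    rw [sInt_eq hσ ((i1.1.add_measure i2).add_measure i5) ((i1.2.add_measure i3).add_measure i4),
      integral_add_measure (i1.1.add_measure i2) i5, integral_add_measure i1.1 i2,
      integral_add_measure (i1.2.add_measure i3) i4, integral_add_measure i1.2 i3]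
    unfold sInt
    ring
  have hσm : IsMomentMeasure σ := by
    intro P
    have i1 := tv_pos.1 (hmom P)
    have i2 := integrable_evalC (fun P => (iαβ P).1) P
    have i3 := integrable_evalC (fun P => (iαβ P).2) P
    have i4 := integrable_evalC (fun P => (iαβ' P).1) P
    have i5 := integrable_evalC (fun P => (iαβ' P).2) P
    rw [tv_pos]
    exact ⟨((i1.1.add_measure i2).add_measure i5).mono_measure (jordan_pos_le hσ),
      ((i1.2.add_measure i3).add_measure i4).mono_measure (jordan_neg_le hσ)⟩
  have hσr : ∀ P : MvPolynomial (Fin d) ℝ, sInt σ (fun x : E d => eval (fun i => x i) P) =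
      sInt μ (fun x : E d => eval (fun i => x i) P) := by
    let S : Submodule ℝ (MvPolynomial (Fin d) ℝ) :=
      { carrier := {P | sInt σ (fun x : E d => eval (fun i => x i) P) =
          sInt μ (fun x : E d => eval (fun i => x i) P)}
        add_mem' := by
          intro P Q hP hQ
          simp only [Set.mem_ofPred_eq, map_add] at hP hQ ⊢
          rw [sInt_add (mom_real hσm P) (mom_real hσm Q),
            sInt_add (mom_real hmom P) (mom_real hmom Q), hP, hQ]
        zero_mem' := by simp [sInt]
        smul_mem' := by
          intro c P hP
          simp only [Set.mem_ofPred_eq, smul_eval] at hP ⊢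
          rw [sInt_smul, sInt_smul, hP] }
    refine fischer_basis hd B S (fun j k' l' => ?_)
    have i1 := mom_real hmom (nsq ^ j * B.Y k' l')
    obtain ⟨i2, i3⟩ := iαβ (nsq ^ j * B.Y k' l')
    obtain ⟨i4, i5⟩ := iαβ' (nsq ^ j * B.Y k' l')
    change sInt σ (fun x : E d => eval (fun i => x i) (nsq ^ j * B.Y k' l')) =
      sInt μ (fun x : E d => eval (fun i => x i) (nsq ^ j * B.Y k' l'))
    rw [hσi _ i1 i2 i3 i4 i5]
    simp only [eval_nsqY] at i2 i3 i4 i5 ⊢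
    rw [vαβ k' l' (fun t => t ^ (2 * j)) (by fun_prop) i2 i3,
      vαβ' k' l' (fun t => t ^ (2 * j)) (by fun_prop) i4 i5, hρmom]
    ring
  have ftμ := tv_fin μ
  have hσh : ∀ (k' : ℕ) (l' : Fin (B.a k')) (h : ℝ → ℝ), Continuous h → HasCompactSupport h →
      sInt σ (fun x => h ‖x‖ * B.Yf k' l' x) = sInt μ (fun x => h ‖x‖ * B.Yf k' l' x) +
        (if k = k' ∧ (l : ℕ) = (l' : ℕ) then ∫ r, h r ∂ρ else 0) -
        (if k = k' ∧ (l : ℕ) = (l' : ℕ) then ∫ r, h r ∂(ν k l) else 0) := by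
    intro k' l' h hc hs
    have i : ∀ γ : Measure (E d), IsFiniteMeasure γ →
        Integrable (fun x => h ‖x‖ * B.Yf k' l' x) γ := fun γ hγ => radial_int (B.Y k' l') hc hs γ
    rw [hσi _ (i _ ftμ) (i _ fα) (i _ fβ) (i _ fα') (i _ fβ'), vαβ k' l' h hc (i _ fα) (i _ fβ),
      vαβ' k' l' h hc (i _ fα') (i _ fβ')]
  have hσpp : B.PseudoPositive σ := by
    intro k' l' h hc hs hp
    rw [hσh k' l' h hc hs]
    by_cases hkl : k = k' ∧ (l : ℕ) = (l' : ℕ)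
    · rw [if_pos hkl, if_pos hkl]
      obtain ⟨hk, hl⟩ := hkl
      subst hk
      obtain rfl : l = l' := Fin.ext hl
      rw [(hν k l).2 h hc hs]
      have : 0 ≤ ∫ r, h r ∂ρ := integral_nonneg hp
      linarith
    · rw [if_neg hkl, if_neg hkl]
      have := hpp k' l' h hc hs hp
      linarith
  have heq : σ = μ := by
    refine hU σ hσpp hσm (fun P => ?_)
    obtain ⟨Q, R, hQR⟩ := cpoly_split P
    rw [sInt_split hσm hQR, sInt_split hmom hQR, hσr, hσr]
  have : ρ = ν k l := eq_of_cc fun h hc hs => by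
    have := hσh k l h hc hs
    rw [heq] at this
    simp only [and_self, if_true] at this
    linarith
  apply rne
  rw [← hρsq, this]

end E5

theorem statement14 {d : ℕ} (hd : 1 ≤ d) (B : HarmonicBasis d)
    (μ : SignedMeasure (E d)) (hpp : B.PseudoPositive μ) (hmom : IsMomentMeasure μ)
    (ν : (k : ℕ) → Fin (B.a k) → Measure ℝ) (hν : B.IsComponentFamily μ ν)
    (hsum : B.SummCond ν) :
    (∀ σ : SignedMeasure (E d), B.PseudoPositive σ → IsMomentMeasure σ →
        (∀ P : MvPolynomial (Fin d) ℂ, sInt σ (evalC P) = sInt μ (evalC P)) → σ = μ)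
      ↔ ∀ (k : ℕ) (l : Fin (B.a k)),
          StieltjesDeterminate (Measure.map (fun t : ℝ => t ^ 2) (ν k l)) := by
  exact ⟨fun h k l => forward hd B μ hpp hmom ν hν hsum h k l,
    fun h σ h1 h2 h3 => backward hd B μ hpp hmom ν hν hsum h σ h1 h2 h3⟩
end
end
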